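/- arXiv:math/0505186 — 2 statements merged into one kernel-verified Lean document; each statement's English description precedes it below -/
import Mathlib

section
/- Let ε > 0 and let X ⊂ P^n be a geometrically integral hypersurface of degree d. Then there exist linear subspaces M_1, …, M_J ⊆ X defined over ℚ, with J = O_{d,ε,n}(B^{n−1+ε}) and 0 ≤ dim M_j ≤ n−1 for each j, such that N_X(B) ≤ Σ_{j=1}^J N_{M_j}(B). Moreover, every M_j with dim M_j ≥ 1 satisfies H(M_j) = O_{d,ε,n}(B^{1+ε}). -/
noncomputable section

abbrev KK : Type := AlgebraicClosure ℚ

abbrev Pn (N : ℕ) := Projectivization KK (Fin (N + 1) → KK)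

/-- The common zero set in projective space of a family of polynomials
(membership tested on the chosen representative). -/
def projZeros {N : ℕ} (S : Set (MvPolynomial (Fin (N + 1)) KK)) : Set (Pn N) :=
  {x | ∀ f ∈ S, MvPolynomial.eval x.rep f = 0}

/-- Zariski-closed subsets of projective space: common zero sets of families of forms. -/
def ProjClosed {N : ℕ} (V : Set (Pn N)) : Prop :=
  ∃ S : Set (MvPolynomial (Fin (N + 1)) KK),
    (∀ f ∈ S, ∃ d, f.IsHomogeneous d) ∧ V = projZeros S

def ProjIrred {N : ℕ} (V : Set (Pn N)) : Prop :=
  V.Nonempty ∧ ∀ C₁ C₂ : Set (Pn N), ProjClosed C₁ → ProjClosed C₂ →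
    V ⊆ C₁ ∪ C₂ → V ⊆ C₁ ∨ V ⊆ C₂

/-- A (geometrically integral) projective variety: an irreducible Zariski-closed set. -/
def ProjVariety {N : ℕ} (V : Set (Pn N)) : Prop := ProjClosed V ∧ ProjIrred V

/-- Dimension of a subset of projective space: Krull dimension of the poset of
irreducible closed subsets contained in it. The empty set has dimension `⊥`. -/
def projDim {N : ℕ} (V : Set (Pn N)) : WithBot ENat :=
  Order.krullDim {W : Set (Pn N) // ProjVariety W ∧ W ⊆ V}

/-- The set of projective points lying on a linear subspace. -/
def planeSet {N : ℕ} (W : Submodule KK (Fin (N + 1) → KK)) : Set (Pn N) :=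
  {x | x.rep ∈ W}

/-- Degree of a subset of projective space: the largest (finite) number of points
in a linear section. -/
def projDeg {N : ℕ} (V : Set (Pn N)) : ℕ :=
  sSup {k : ℕ | ∃ W : Submodule KK (Fin (N + 1) → KK),
    (V ∩ planeSet W).Finite ∧ (V ∩ planeSet W).ncard = k}

/-- The hypersurface cut out by a form. -/
def hyp {n : ℕ} (F : MvPolynomial (Fin (n + 1)) KK) : Set (Pn n) :=
  {x | MvPolynomial.eval x.rep F = 0}

/-- A form over the algebraic closure is non-singular if its partial derivatives
have no common non-trivial zero. -/
def NonsingularK {n : ℕ} (F : MvPolynomial (Fin (n + 1)) KK) : Prop :=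
  ∀ z : Fin (n + 1) → KK,
    (∀ i, MvPolynomial.eval z (MvPolynomial.pderiv i F) = 0) → z = 0

/-- The Fano set of (projective) m-planes contained in X, as linear subspaces of
dimension m+1. -/
def Fano (m n : ℕ) (X : Set (Pn n)) : Set (Submodule KK (Fin (n + 1) → KK)) :=
  {W | Module.finrank KK W = m + 1 ∧ planeSet W ⊆ X}

/-- Closed subsets of the Grassmannian of m-planes in Pⁿ, described via Stiefel
coordinates: Z is closed iff the set of (m+1)-tuples of vectors which, when
linearly independent, span a member of Z, is Zariski-closed in affine space. -/
def GrClosed (m n : ℕ) (Z : Set (Submodule KK (Fin (n + 1) → KK))) : Prop :=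
  (∀ W ∈ Z, Module.finrank KK W = m + 1) ∧
  ∃ S : Set (MvPolynomial (Fin (m + 1) × Fin (n + 1)) KK),
    {v : Fin (m + 1) → Fin (n + 1) → KK |
      LinearIndependent KK v → Submodule.span KK (Set.range v) ∈ Z}
    = {v | ∀ f ∈ S, MvPolynomial.eval (fun p => v p.1 p.2) f = 0}

def GrIrred (m n : ℕ) (Z : Set (Submodule KK (Fin (n + 1) → KK))) : Prop :=
  Z.Nonempty ∧ ∀ C₁ C₂ : Set (Submodule KK (Fin (n + 1) → KK)),
    GrClosed m n C₁ → GrClosed m n C₂ → Z ⊆ C₁ ∪ C₂ → Z ⊆ C₁ ∨ Z ⊆ C₂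

/-- A (geometrically integral) subvariety of the Grassmannian. -/
def GrVariety (m n : ℕ) (Z : Set (Submodule KK (Fin (n + 1) → KK))) : Prop :=
  GrClosed m n Z ∧ GrIrred m n Z

/-- Dimension of a subset of the Grassmannian of m-planes in Pⁿ. -/
def grDim (m n : ℕ) (Z : Set (Submodule KK (Fin (n + 1) → KK))) : WithBot ENat :=
  Order.krullDim {W : Set (Submodule KK (Fin (n + 1) → KK)) // GrVariety m n W ∧ W ⊆ Z}

/-- D(Z): the union of the planes parametrised by Z. -/
def DSet {n : ℕ} (Z : Set (Submodule KK (Fin (n + 1) → KK))) : Set (Pn n) :=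
  {x | ∃ Λ ∈ Z, x.rep ∈ Λ}

/-- A primitive integer vector: the gcd of its coordinates is 1. -/
def IsPrimitiveVec {n : ℕ} (x : Fin n → ℤ) : Prop := Finset.univ.gcd x = 1

/-- Height of an integer vector: the maximum modulus of its coordinates. -/
def heightVec {n : ℕ} (x : Fin n → ℤ) : ℝ :=
  ((Finset.univ.sup fun i => (x i).natAbs : ℕ) : ℝ)

def coeK {n : ℕ} (x : Fin n → ℤ) : Fin n → KK := fun i => ((x i : ℤ) : KK)

def coeQ {n : ℕ} (x : Fin n → ℤ) : Fin n → ℚ := fun i => ((x i : ℤ) : ℚ)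

/-- The number of rational points of height at most B on a subset V of projective
space, counted via primitive integer vectors (each projective rational point
corresponds to exactly two primitive vectors). -/
def NV {n : ℕ} (V : Set (Pn n)) (B : ℝ) : ℕ :=
  Set.ncard {x : Fin (n + 1) → ℤ | IsPrimitiveVec x ∧ heightVec x ≤ B ∧
    ∃ h : coeK x ≠ 0, Projectivization.mk KK (coeK x) h ∈ V}

/-- An integer form is non-singular if its partial derivatives have no common
non-trivial zero over the algebraic closure of ℚ. -/
def NonsingularZ {n : ℕ} (F : MvPolynomial (Fin (n + 1)) ℤ) : Prop :=
  ∀ z : Fin (n + 1) → KK,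
    (∀ i, MvPolynomial.aeval z (MvPolynomial.pderiv i F) = 0) → z = 0

/-- Base change of an integer polynomial to the algebraic closure of ℚ. -/
def mapK {n : ℕ} (F : MvPolynomial (Fin (n + 1)) ℤ) : MvPolynomial (Fin (n + 1)) KK :=
  MvPolynomial.map (Int.castRingHom KK) F

/-- The Plücker height of the rational m-plane spanned by the integer vectors v:
the maximum modulus of the (m+1)×(m+1) minors, divided by their gcd. -/
def pluckerHeight {m n : ℕ} (v : Fin (m + 1) → Fin (n + 1) → ℤ) : ℕ :=
  (Finset.univ.sup fun s : Fin (m + 1) → Fin (n + 1) =>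
    (Matrix.det (Matrix.of fun i j => v i (s j))).natAbs) /
  (Finset.univ.gcd fun s : Fin (m + 1) → Fin (n + 1) =>
    (Matrix.det (Matrix.of fun i j => v i (s j))).natAbs)

def betaExp (k : ℕ) : ℝ := if k ≤ 3 then 0 else 1/4

def sigmaExp (n k : ℕ) : ℝ :=
  if (k : ℝ) ≤ ((n : ℝ) - 1) / 2 then (k : ℝ) + 1 else (k : ℝ) + betaExp k

def tauExp (n k : ℕ) : ℝ :=
  if (k : ℝ) < ((n : ℝ) - 1) / 2 then (k : ℝ) + 1 else (k : ℝ) + betaExp k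

/-- E: the union of the (n-1)/2-planes contained in X (for n odd; empty for n even). -/
def bigE {n : ℕ} (X : Set (Pn n)) : Set (Pn n) :=
  {x | n % 2 = 1 ∧ ∃ W : Submodule KK (Fin (n + 1) → KK),
    Module.finrank KK W = (n - 1) / 2 + 1 ∧ planeSet W ⊆ X ∧ x ∈ planeSet W}

/-- The cone of lines contained in X passing through x. -/
def coneOfLines {n : ℕ} (X : Set (Pn n)) (x : Pn n) : Set (Pn n) :=
  {y | ∃ L : Submodule KK (Fin (n + 1) → KK),
    Module.finrank KK L = 2 ∧ planeSet L ⊆ X ∧ x.rep ∈ L ∧ y.rep ∈ L}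

/-!
Let `X` be the set of primitive integral zeros of `F` in the box `|x_i| ≤ b`, and let `C ⊆ X` be a
class of points that are congruent, as points of projective space, modulo each prime of a set `T`.
If `F` does not vanish on the span of `C`, there are an integral form `G` of the degree of `F` that
vanishes on `X` and an integral point `z` of the span with `G z ≠ 0`, both with small coefficients.
Let `C'` be the set of points of `C` at which `G` vanishes to the same order `j` in the direction
`z` as at a given point `x`, so that the derivative `g` of order `j - 1` vanishes on `C'`. If `C'`
has the same span as `C`, let `v_0 = x, …, v_m` be a basis of it in `C'`. Modulo a prime `p` of `T`
that does not divide `∂_z g (x)`, one has `v_i = l_i x + p w_i`, and `g (v_i) = 0` puts the `w_i` in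
a hyperplane that does not contain `z`. Hence `p ^ (m + 1)`, and not just `p ^ m`, divides the
maximal minors of `(v_i)`. Their size shows that the product of these primes is `O(b)`. If it is
larger, passing from `C` to `C'` lowers the rank, and after boundedly many such steps `F` vanishes
on the span.

Only boundedly many of the primes in a pool of large primes divide the derivatives at `x`. They
depend on `C`, and so on `T`, but as the ranks decrease when `T` grows, averaging over all orderings
of the pool yields for each `x` some `T` with product about `b ^ (1 + ε)` almost none of whose
primes are bad. Since `F` has `O(p ^ (n - 1))` zeros in the projective space `P ^ n` over `𝔽_p`,
there are `O(b ^ (n - 1 + ε))` classes. The congruences modulo primes of product at least `b` also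
bound the height of the span of each class by a multiple of `b`.
-/

open Finset
open scoped Matrix

section RandomOrdering

variable {α : Type*} {P : Finset α}

lemma coe_injective_ordering (σ : Fin #P ≃ P) : Function.Injective fun i => (σ i : α) :=
  Subtype.val_injective.comp σ.injective

lemma swap_trans_swap_trans (σ : Fin #P ≃ P) (i j : Fin #P) :
    (Equiv.swap i j).trans ((Equiv.swap i j).trans σ) = σ := by
  ext
  simp

variable [DecidableEq α]

/-- The set of the first `l` elements of `P` in the ordering `σ`. -/
def initialSegment (σ : Fin #P ≃ P) (l : ℕ) : Finset α :=
  ({i : Fin #P | (i : ℕ) < l} : Finset (Fin #P)).image fun i => (σ i : α)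

lemma initialSegment_subset (σ : Fin #P ≃ P) (l : ℕ) : initialSegment σ l ⊆ P := by
  intro p hp
  obtain ⟨i, -, rfl⟩ := mem_image.1 hp
  exact (σ i).2

lemma card_initialSegment (σ : Fin #P ≃ P) {l : ℕ} (hl : l ≤ #P) :
    #(initialSegment σ l) = l := by
  rw [initialSegment, card_image_of_injective _ (coe_injective_ordering σ), Fin.card_filter_val_lt,
    min_eq_right hl]

lemma initialSegment_succ (σ : Fin #P ≃ P) (l : Fin #P) :
    initialSegment σ (l + 1) = insert (σ l : α) (initialSegment σ l) := by
  ext p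
  simp only [initialSegment, mem_image, mem_filter_univ, mem_insert, Nat.lt_succ_iff_lt_or_eq,
    Fin.val_inj]
  grind

lemma card_initialSegment_inter (σ : Fin #P ≃ P) (l : ℕ) (S : Finset α) :
    #(initialSegment σ l ∩ S) = #{i : Fin #P | (i : ℕ) < l ∧ (σ i : α) ∈ S} := by
  rw [initialSegment, ← filter_mem_eq_inter, filter_image,
    card_image_of_injective _ (coe_injective_ordering σ), filter_filter]

lemma initialSegment_swap (σ : Fin #P ≃ P) {i j : Fin #P} {l : ℕ}
    (h : (i : ℕ) < l ↔ (j : ℕ) < l) :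
    initialSegment ((Equiv.swap i j).trans σ) l = initialSegment σ l := by
  have key (τ : Fin #P ≃ P) :
      initialSegment ((Equiv.swap i j).trans τ) l ⊆ initialSegment τ l := by
    intro p hp
    obtain ⟨k, hk, rfl⟩ := mem_image.1 hp
    refine mem_image.2 ⟨Equiv.swap i j k, ?_, rfl⟩
    rw [mem_filter_univ] at hk ⊢
    rw [Equiv.swap_apply_def]
    split_ifs with h₁ h₂
    · exact h.1 (h₁ ▸ hk)
    · exact h.2 (h₂ ▸ hk)
    · exact hk
  refine (key σ).antisymm ?_
  simpa only [swap_trans_swap_trans] using key ((Equiv.swap i j).trans σ)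

lemma sum_card_filter_mem_initialSegment (g : Finset α → Finset α) (l : ℕ) (J : Finset (Fin #P))
    (j : Fin #P) (hJ : ∀ i ∈ J, ((i : ℕ) < l ↔ (j : ℕ) < l)) :
    ∑ σ : Fin #P ≃ P, #{i ∈ J | (σ i : α) ∈ g (initialSegment σ l)} =
      #J * #{σ : Fin #P ≃ P | (σ j : α) ∈ g (initialSegment σ l)} := by
  have exchange : ∀ i ∈ J, #{σ : Fin #P ≃ P | (σ i : α) ∈ g (initialSegment σ l)} =
      #{σ : Fin #P ≃ P | (σ j : α) ∈ g (initialSegment σ l)} := by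
    intro i hi
    refine card_bij' (fun σ _ => (Equiv.swap i j).trans σ) (fun σ _ => (Equiv.swap i j).trans σ)
      ?_ ?_ ?_ ?_
    all_goals simp [initialSegment_swap _ (hJ i hi), swap_trans_swap_trans]
  calc ∑ σ : Fin #P ≃ P, #{i ∈ J | (σ i : α) ∈ g (initialSegment σ l)}
      = ∑ i ∈ J, #{σ : Fin #P ≃ P | (σ i : α) ∈ g (initialSegment σ l)} := by
        simp only [card_filter]
        exact sum_comm
    _ = _ := by rw [sum_congr rfl exchange, sum_const, smul_eq_mul]

variable {Φ : Finset α → ℕ} {bad : Finset α → Finset α} {A R : ℕ}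

-- By exchangeability each element of the segment is as likely to be bad as the last one, which, as
-- long as `Φ` does not drop, was already bad before being added.
lemma sum_card_initialSegment_inter_add_le
    (hΦ_anti : Antitone Φ) (hbad : ∀ S, #(bad S) ≤ A)
    (hbad_eq : ∀ S T, S ⊆ T → Φ T = Φ S → bad T = bad S)
    (l : Fin #P) (hl : (l : ℕ) < R) (hP : R * (A + 2) ≤ #P) :
    ∑ σ : Fin #P ≃ P, #(initialSegment σ (l + 1) ∩ bad (initialSegment σ (l + 1))) +
        R * ∑ σ : Fin #P ≃ P, Φ (initialSegment σ (l + 1)) ≤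
      R * ∑ σ : Fin #P ≃ P, Φ (initialSegment σ l) + Fintype.card (Fin #P ≃ P) := by
  have count_succ : ∑ σ : Fin #P ≃ P,
      #(initialSegment σ (l + 1) ∩ bad (initialSegment σ (l + 1))) ≤
      R * #{σ : Fin #P ≃ P | (σ l : α) ∈ bad (initialSegment σ (l + 1))} := by
    simp only [card_initialSegment_inter, ← filter_filter]
    rw [sum_card_filter_mem_initialSegment bad _ _ l (by simp), Fin.card_filter_val_lt]
    gcongr
    omega
  have split : #{σ : Fin #P ≃ P | (σ l : α) ∈ bad (initialSegment σ (l + 1))} +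
      ∑ σ : Fin #P ≃ P, Φ (initialSegment σ (l + 1)) ≤ ∑ σ : Fin #P ≃ P, Φ (initialSegment σ l) +
        #{σ : Fin #P ≃ P | (σ l : α) ∈ bad (initialSegment σ l)} := by
    simp only [card_filter, ← sum_add_distrib]
    refine sum_le_sum fun σ _ => ?_
    rw [initialSegment_succ]
    have hsub := subset_insert (σ l : α) (initialSegment σ l)
    rcases (hΦ_anti hsub).lt_or_eq with h | h
    · split_ifs <;> omega
    · rw [hbad_eq _ _ hsub h, h, add_comm]
  have count : R * #{σ : Fin #P ≃ P | (σ l : α) ∈ bad (initialSegment σ l)} ≤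
      Fintype.card (Fin #P ≃ P) := by
    have hle : (#P - l) * #{σ : Fin #P ≃ P | (σ l : α) ∈ bad (initialSegment σ l)} ≤
        Fintype.card (Fin #P ≃ P) * A := by
      rw [← Fin.card_Ici, ← sum_card_filter_mem_initialSegment bad _ _ l (by simp), ← card_univ]
      refine sum_le_card_nsmul _ _ _ fun σ _ => (le_trans ?_ (hbad (initialSegment σ l)))
      exact card_le_card_of_injOn (fun i => (σ i : α)) (by simp [Set.MapsTo])
        (coe_injective_ordering σ).injOn
    have hKl : R * (A + 1) ≤ #P - l := by
      apply Nat.le_sub_of_add_le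
      linarith
    nlinarith [Nat.mul_le_mul_right
      #{σ : Fin #P ≃ P | (σ l : α) ∈ bad (initialSegment σ l)} hKl]
  nlinarith [Nat.mul_le_mul_left R split]

theorem exists_subset_card_inter_le {φ N L β : ℕ}
    (hΦ_anti : Antitone Φ) (hΦ : ∀ S, Φ S ≤ φ) (hbad : ∀ S, #(bad S) ≤ A)
    (hbad_eq : ∀ S T, S ⊆ T → Φ T = Φ S → bad T = bad S)
    (hP : (N + L) * (A + 2) ≤ #P) (hL : (N + L) * φ < L * β) :
    ∃ T ⊆ P, N ≤ #T ∧ #T ≤ N + L ∧ #(T ∩ bad T) ≤ β := by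
  by_contra! hcon
  set W : ℕ → ℕ := fun l => ∑ σ : Fin #P ≃ P, Φ (initialSegment σ l) with hW
  set M := Fintype.card (Fin #P ≃ P) with hM
  have hM_pos : 0 < M := Fintype.card_pos_iff.2 ⟨P.equivFin.symm⟩
  have step : ∀ k < L, β * M + (N + L) * W (N + k + 1) ≤ (N + L) * W (N + k) := by
    intro k hk
    have hlt : N + k + 1 ≤ #P := by nlinarith
    have hmany : M * (β + 1) ≤ ∑ σ : Fin #P ≃ P,
        #(initialSegment σ (N + k + 1) ∩ bad (initialSegment σ (N + k + 1))) := by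
      rw [hM, ← card_univ]
      refine card_nsmul_le_sum univ _ (β + 1) fun σ _ => ?_
      apply hcon _ (initialSegment_subset σ _) <;> rw [card_initialSegment σ hlt] <;> omega
    have := sum_card_initialSegment_inter_add_le hΦ_anti hbad hbad_eq ⟨N + k, hlt⟩ (by simpa) hP
    simp only [hW] at this ⊢
    linarith
  have telescope : ∀ k ≤ L, k * (β * M) + (N + L) * W (N + k) ≤ (N + L) * W N := by
    intro k
    induction k with
    | zero => simp
    | succ k ih =>
      intro hk
      rw [← add_assoc]
      linarith [ih (by omega), step k hk]
  have hWN : W N ≤ M * φ := sum_le_card_nsmul _ _ _ fun σ _ => hΦ (initialSegment σ N)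
  nlinarith [telescope L le_rfl, Nat.mul_le_mul_left (N + L) hWN,
    Nat.mul_lt_mul_of_pos_right hL hM_pos]

end RandomOrdering

section DirectionalDerivative

open MvPolynomial

variable {σ R : Type*} [CommRing R]

lemma eval_smul_of_isHomogeneous (l : R) (x : σ → R) {g : MvPolynomial σ R} {e : ℕ}
    (hg : g.IsHomogeneous e) : eval (l • x) g = l ^ e * eval x g := by
  rw [eval_eq, eval_eq, mul_sum]
  refine sum_congr rfl fun m hm => ?_
  simp only [Pi.smul_apply, smul_eq_mul, mul_pow, prod_mul_distrib, prod_pow_eq_pow_sum,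
    ← hg.degree_eq_sum_deg_support hm]
  ring

variable [Fintype σ]

/-- The derivative `∑ i, z i ∂/∂X i` in the direction `z`. -/
def dirDeriv (z : σ → R) : Derivation R (MvPolynomial σ R) (MvPolynomial σ R) :=
  ∑ i, z i • pderiv i

lemma dirDeriv_apply (z : σ → R) (g : MvPolynomial σ R) :
    dirDeriv z g = ∑ i, z i • pderiv i g := by
  rw [dirDeriv, ← Derivation.coeFnAddMonoidHom_apply, map_sum, Finset.sum_apply]
  rfl

lemma dirDeriv_X (z : σ → R) (i : σ) : dirDeriv z (X i) = C (z i) := by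
  classical
  simp only [dirDeriv_apply, pderiv_X, Pi.single_apply]
  simp [smul_eq_C_mul]

lemma eval_dirDeriv (x z : σ → R) (g : MvPolynomial σ R) :
    eval x (dirDeriv z g) = z ⬝ᵥ fun i => eval x (pderiv i g) := by
  simp only [dirDeriv_apply, map_sum, smul_eval, dotProduct]

lemma isHomogeneous_dirDeriv (z : σ → R) {g : MvPolynomial σ R} {e : ℕ} (hg : g.IsHomogeneous e) :
    (dirDeriv z g).IsHomogeneous (e - 1) := by
  rw [dirDeriv_apply]
  refine IsHomogeneous.sum _ _ _ fun i _ => ?_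
  rw [smul_eq_C_mul]
  exact hg.pderiv.C_mul _

lemma isHomogeneous_iterate_dirDeriv (z : σ → R) {g : MvPolynomial σ R} {e : ℕ}
    (hg : g.IsHomogeneous e) (j : ℕ) : ((dirDeriv z)^[j] g).IsHomogeneous (e - j) := by
  induction j with
  | zero => exact hg
  | succ j ih =>
    rw [Function.iterate_succ_apply', ← Nat.sub_sub]
    exact isHomogeneous_dirDeriv z ih

lemma eval_dirDeriv_self (x : σ → R) {g : MvPolynomial σ R} {e : ℕ} (hg : g.IsHomogeneous e) :
    eval x (dirDeriv x g) = e * eval x g := by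
  have euler := congrArg (eval x) hg.sum_X_mul_pderiv
  rw [eval_dirDeriv, dotProduct]
  simpa using euler

lemma eval_iterate_dirDeriv (x z : σ → R) {e : ℕ} {g : MvPolynomial σ R} (hg : g.IsHomogeneous e) :
    eval x ((dirDeriv z)^[e] g) = e.factorial * eval z g := by
  induction e generalizing g with
  | zero =>
    obtain ⟨c, rfl⟩ : ∃ c, g = C c :=
      ⟨_, totalDegree_eq_zero_iff_eq_C.1 (Nat.le_zero.1 hg.totalDegree_le)⟩
    simp
  | succ e ih =>
    rw [Function.iterate_succ_apply, ih (isHomogeneous_dirDeriv z hg), eval_dirDeriv_self z hg,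
      Nat.factorial_succ]
    push_cast
    ring

lemma exists_eval_add_smul (c : R) (a t : σ → R) (g : MvPolynomial σ R) :
    ∃ q, eval (a + c • t) g = eval a g + c * eval a (dirDeriv t g) + c ^ 2 * q := by
  induction g using MvPolynomial.induction_on with
  | C r => exact ⟨0, by simp⟩
  | add f g hf hg =>
    obtain ⟨q₁, h₁⟩ := hf
    obtain ⟨q₂, h₂⟩ := hg
    refine ⟨q₁ + q₂, ?_⟩
    simp only [map_add, h₁, h₂]
    ring
  | mul_X f i hf =>
    obtain ⟨q, h⟩ := hf
    refine ⟨q * a i + eval a (dirDeriv t f) * t i + c * q * t i, ?_⟩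
    simp only [map_mul, h, eval_X, Derivation.leibniz, dirDeriv_X, map_add, smul_eq_mul, eval_C,
      Pi.add_apply, Pi.smul_apply]
    ring

lemma dvd_eval_dirDeriv_of_eval_eq_zero [IsDomain R] {p l : R} (hp : Prime p) (hl : ¬ p ∣ l)
    (x t : σ → R) {g : MvPolynomial σ R} {e : ℕ} (hg : g.IsHomogeneous e) (hx : eval x g = 0)
    (hy : eval (l • x + p • t) g = 0) : p ∣ eval x (dirDeriv t g) := by
  obtain ⟨q, hq⟩ := exists_eval_add_smul p (l • x) t g
  rw [hy, eval_smul_of_isHomogeneous l x hg, hx,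
    eval_smul_of_isHomogeneous l x (isHomogeneous_dirDeriv t hg)] at hq
  have hdvd : l ^ (e - 1) * eval x (dirDeriv t g) = p * -q :=
    mul_left_cancel₀ hp.ne_zero (by linear_combination -hq)
  exact (hp.dvd_or_dvd ⟨_, hdvd⟩).resolve_left fun h => hl (hp.dvd_of_dvd_pow h)

end DirectionalDerivative

section CoefficientBounds

open MvPolynomial

variable {σ : Type*} [Fintype σ] {g : MvPolynomial σ ℤ} {e : ℕ} {H Z b : ℕ}

lemma card_support_le_of_isHomogeneous {R : Type*} [CommSemiring R] {g : MvPolynomial σ R}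
    (hg : g.IsHomogeneous e) : #g.support ≤ (e + 1) ^ Fintype.card σ := by
  classical
  calc #g.support ≤ #(Fintype.piFinset fun _ : σ => range (e + 1)) := by
        refine card_le_card_of_injOn (fun m => ⇑m) (fun m hm => ?_) DFunLike.coe_injective.injOn
        rw [mem_coe, Fintype.mem_piFinset]
        intro i
        rw [mem_range_succ_iff, hg.degree_eq_sum_deg_support hm]
        exact Finsupp.le_degree i m
    _ = (e + 1) ^ Fintype.card σ := by simp

lemma abs_coeff_dirDeriv_le (hg : g.IsHomogeneous e) (hH : ∀ m, |coeff m g| ≤ H) {z : σ → ℤ}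
    (hz : ∀ i, |z i| ≤ Z) (m : σ →₀ ℕ) :
    |coeff m (dirDeriv z g)| ≤ ((Fintype.card σ * Z * e * H : ℕ) : ℤ) := by
  have hterm : ∀ i, |z i * coeff m (pderiv i g)| ≤ Z * (e * H) := by
    intro i
    rw [coeff_pderiv, abs_mul, abs_mul, mul_comm |coeff _ _|]
    refine mul_le_mul (hz i) ?_ (by positivity) (by positivity)
    by_cases h0 : coeff (m + Finsupp.single i 1) g = 0
    · rw [h0]
      positivity
    · have hdeg : m i + 1 ≤ e := by
        calc m i + 1 = (m + Finsupp.single i 1 : σ →₀ ℕ) i := by simp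
          _ ≤ (m + Finsupp.single i 1).degree := Finsupp.le_degree _ _
          _ = e := (hg.degree_eq_sum_deg_support (mem_support_iff.2 h0)).symm
      gcongr
      · rw [abs_of_nonneg (by positivity)]
        exact_mod_cast hdeg
      · exact hH _
  calc |coeff m (dirDeriv z g)| = |∑ i, z i * coeff m (pderiv i g)| := by
        simp only [dirDeriv_apply, coeff_sum, coeff_smul, smul_eq_mul]
    _ ≤ ∑ i, |z i * coeff m (pderiv i g)| := abs_sum_le_sum_abs _ _
    _ ≤ ∑ _i : σ, (Z * (e * H) : ℤ) := sum_le_sum fun i _ => hterm i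
    _ = _ := by
        rw [sum_const, card_univ, nsmul_eq_mul]
        push_cast
        ring

lemma abs_coeff_iterate_dirDeriv_le (hg : g.IsHomogeneous e) (hH : ∀ m, |coeff m g| ≤ H)
    {z : σ → ℤ} (hz : ∀ i, |z i| ≤ Z) (j : ℕ) (m : σ →₀ ℕ) :
    |coeff m ((dirDeriv z)^[j] g)| ≤ (((Fintype.card σ * Z * e) ^ j * H : ℕ) : ℤ) := by
  induction j generalizing m with
  | zero => simpa using hH m
  | succ j ih =>
    rw [Function.iterate_succ_apply']
    refine (abs_coeff_dirDeriv_le (isHomogeneous_iterate_dirDeriv z hg j) ih hz m).trans ?_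
    rw [pow_succ', mul_assoc _ _ H]
    gcongr
    exact Nat.sub_le e j

lemma abs_eval_le (hg : g.IsHomogeneous e) (hH : ∀ m, |coeff m g| ≤ H) {x : σ → ℤ}
    (hx : ∀ i, |x i| ≤ b) : |eval x g| ≤ (((e + 1) ^ Fintype.card σ * (H * b ^ e) : ℕ) : ℤ) := by
  have hterm : ∀ m ∈ g.support, |coeff m g * ∏ i, x i ^ m i| ≤ ((H * b ^ e : ℕ) : ℤ) := by
    intro m hm
    rw [abs_mul, abs_prod, hg.degree_eq_sum_deg_support hm, ← Finsupp.degree_apply,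
      Finsupp.degree_eq_sum, ← prod_pow_eq_pow_sum]
    push_cast
    gcongr with i
    · exact hH m
    · rw [abs_pow]
      gcongr
      exact hx i
  calc |eval x g| ≤ ∑ m ∈ g.support, |coeff m g * ∏ i, x i ^ m i| := by
        rw [eval_eq']
        exact abs_sum_le_sum_abs _ _
    _ ≤ ((#g.support * (H * b ^ e) : ℕ) : ℤ) := by
        simpa using sum_le_card_nsmul _ _ _ hterm
    _ ≤ _ := by
        gcongr
        exact card_support_le_of_isHomogeneous hg

end CoefficientBounds

section Minors

open Matrix

variable {ι κ : Type*} [Fintype ι] [DecidableEq ι]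

lemma exists_det_submatrix_ne_zero {K : Type*} [Field K] [Finite κ] {v : Matrix ι κ K}
    (hv : LinearIndependent K v.row) : ∃ s : ι → κ, (v.submatrix id s).det ≠ 0 := by
  have := Fintype.ofFinite κ
  have hrank : Module.finrank K (Submodule.span K (Set.range v.col)) = Fintype.card ι := by
    rw [← rank_eq_finrank_span_cols, hv.rank_matrix]
  obtain ⟨f, hf_mem, -, hf_indep⟩ := Submodule.exists_fun_fin_finrank_span_eq K (Set.range v.col)
  choose s hs using hf_mem
  let e := Fintype.equivOfCardEq ((Fintype.card_fin _).trans hrank)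
  refine ⟨fun i => s (e.symm i), IsUnit.ne_zero ?_⟩
  have hcol : (v.submatrix id fun i => s (e.symm i)).col = f ∘ e.symm := funext fun i => hs _
  rw [← isUnit_iff_isUnit_det, ← linearIndependent_cols_iff_isUnit, hcol]
  exact hf_indep.comp _ e.symm.injective

lemma exists_det_submatrix_ne_zero_of_coeQ {n : ℕ} {v : ι → Fin n → ℤ}
    (hv : LinearIndependent ℚ fun i => coeQ (v i)) :
    ∃ s : ι → Fin n, ((of v).submatrix id s).det ≠ 0 := by
  obtain ⟨s, hs⟩ := exists_det_submatrix_ne_zero (v := (of v).map (Int.cast : ℤ → ℚ)) hv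
  refine ⟨s, fun h => hs ?_⟩
  rw [submatrix_map, ← Int.cast_det, h, Int.cast_zero]

lemma exists_det_smul_eq_sum {n : ℕ} (W : ι → Fin n → ℤ) (s : ι → Fin n) {z : Fin n → ℤ}
    (hz : coeQ z ∈ Submodule.span ℚ (Set.range fun i => coeQ (W i))) :
    ∃ m : ι → ℤ, ((of W).submatrix id s).det • z = ∑ i, m i • W i := by
  obtain ⟨a, ha⟩ := (Submodule.mem_span_range_iff_exists_fun ℚ).1 hz
  have hz_eq : ∀ k, (z k : ℚ) = ∑ i, a i * W i k := fun k => by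
    simpa [coeQ] using (congrFun ha k).symm
  set A := (of W).submatrix id s
  have hm : ∀ i, (((z ∘ s) ᵥ* A.adjugate) i : ℚ) = A.det * a i := fun i => by
    have hzs : (fun j => (z (s j) : ℚ)) = a ᵥ* A.map (Int.cast : ℤ → ℚ) :=
      funext fun j => hz_eq (s j)
    have hadj : A.adjugate.map (Int.cast : ℤ → ℚ) = (A.map (Int.cast : ℤ → ℚ)).adjugate :=
      (Int.castRingHom ℚ).map_adjugate A
    calc (((z ∘ s) ᵥ* A.adjugate) i : ℚ)
        = ((fun j => (z (s j) : ℚ)) ᵥ* A.adjugate.map (Int.cast : ℤ → ℚ)) i := by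
          simp [vecMul, dotProduct]
      _ = A.det * a i := by
          rw [hzs, hadj, vecMul_vecMul, mul_adjugate, ← Int.cast_det]
          simp [vecMul_smul]
  refine ⟨(z ∘ s) ᵥ* A.adjugate, funext fun k => Int.cast_injective (α := ℚ) ?_⟩
  simp only [Pi.smul_apply, Finset.sum_apply, smul_eq_mul, Int.cast_mul, Int.cast_sum, hm, hz_eq k,
    mul_sum, mul_assoc]

lemma abs_det_le {A : Matrix ι ι ℤ} {b : ℕ} (hA : ∀ i j, |A i j| ≤ b) :
    |A.det| ≤ (((Fintype.card ι).factorial * b ^ Fintype.card ι : ℕ) : ℤ) := by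
  simpa using det_le (abv := AbsoluteValue.abs) (x := (b : ℤ)) hA

lemma det_submatrix_eq_pow_mul {R : Type*} [CommRing R] {v W : ι → κ → R} {i₀ : ι} {l : ι → R}
    {c : R} (h₀ : v i₀ = W i₀) (h : ∀ i ≠ i₀, v i = l i • W i₀ + c • W i) (s : ι → κ) :
    ((of v).submatrix id s).det = c ^ (Fintype.card ι - 1) * ((of W).submatrix id s).det := by
  let d : ι → R := fun i => if i = i₀ then 1 else c
  have hrows : ((of v).submatrix id s).det =
      (of fun i j => d i * (of W).submatrix id s i j).det := by
    refine det_eq_of_forall_row_eq_smul_add_const (fun i => if i = i₀ then 0 else l i) i₀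
      (by simp) fun i j => ?_
    by_cases hi : i = i₀
    · simp [d, hi, h₀]
    · simp [d, hi, h i hi, add_comm]
  rw [hrows, det_mul_column, prod_ite, prod_const_one, prod_const, one_mul, filter_ne',
    card_erase_of_mem (mem_univ i₀), card_univ]

end Minors

section ProjectiveCongruence

open Matrix MvPolynomial

/-- Integer vectors define the same point of projective space over `𝔽_p`, provided that one of
them, hence both, do not vanish modulo `p`. -/
def ProjCongr {κ : Type*} (p : ℕ) (x y : κ → ℤ) : Prop :=
  ∃ l : ℤ, ¬ (p : ℤ) ∣ l ∧ ∀ k, (p : ℤ) ∣ y k - l * x k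

variable {ι κ : Type*} {T : Finset ℕ} {b n : ℕ}

lemma exists_eq_smul_add_smul_of_projCongr {p : ℕ} {v : ι → κ → ℤ} {i₀ : ι}
    (h : ∀ i, ProjCongr p (v i₀) (v i)) :
    ∃ (W : ι → κ → ℤ) (l : ι → ℤ), v i₀ = W i₀ ∧
      ∀ i ≠ i₀, ¬ (p : ℤ) ∣ l i ∧ v i = l i • W i₀ + (p : ℤ) • W i := by
  classical
  choose l hl hdvd using h
  choose t ht using hdvd
  refine ⟨Function.update t i₀ (v i₀), l, by simp, fun i hi => ⟨hl i, funext fun k => ?_⟩⟩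
  rw [Function.update_self, Function.update_of_ne hi]
  simp only [Pi.add_apply, Pi.smul_apply, smul_eq_mul]
  linear_combination ht i k

lemma prod_primes_pow_dvd (hT : ∀ p ∈ T, p.Prime) {k : ℕ} {D : ℤ}
    (h : ∀ p ∈ T, (p : ℤ) ^ k ∣ D) : ((∏ p ∈ T, p : ℕ) : ℤ) ^ k ∣ D := by
  rw [Nat.cast_prod, ← prod_pow]
  refine prod_dvd_of_coprime (fun p hp q hq hpq => IsCoprime.pow ?_) h
  exact Nat.isCoprime_iff_coprime.2 ((Nat.coprime_primes (hT p hp) (hT q hq)).2 hpq)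

lemma span_le_span_of_eq_smul_add_smul {v W : ι → Fin n → ℤ} {i₀ : ι} {l : ι → ℤ} {c : ℤ}
    (h₀ : v i₀ = W i₀) (h : ∀ i ≠ i₀, v i = l i • W i₀ + c • W i) :
    Submodule.span ℚ (Set.range fun i => coeQ (v i)) ≤
      Submodule.span ℚ (Set.range fun i => coeQ (W i)) := by
  have hmem : ∀ i, coeQ (W i) ∈ Submodule.span ℚ (Set.range fun i => coeQ (W i)) :=
    fun i => Submodule.subset_span ⟨i, rfl⟩
  rw [Submodule.span_le]
  rintro _ ⟨i, rfl⟩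
  change coeQ (v i) ∈ Submodule.span ℚ _
  by_cases hi : i = i₀
  · rw [hi, h₀]
    exact hmem i₀
  · have hvi : coeQ (v i) = (l i : ℚ) • coeQ (W i₀) + (c : ℚ) • coeQ (W i) := by
      ext k
      simp [coeQ, h i hi]
    rw [hvi]
    exact add_mem (Submodule.smul_mem _ _ (hmem _)) (Submodule.smul_mem _ _ (hmem _))

variable [Fintype ι] [DecidableEq ι]

lemma prod_primes_pow_dvd_det (hT : ∀ p ∈ T, p.Prime) {v : ι → κ → ℤ} {i₀ : ι}
    (h : ∀ p ∈ T, ∀ i, ProjCongr p (v i₀) (v i)) (s : ι → κ) :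
    ((∏ p ∈ T, p : ℕ) : ℤ) ^ (Fintype.card ι - 1) ∣ ((of v).submatrix id s).det := by
  refine prod_primes_pow_dvd hT fun p hp => ?_
  obtain ⟨W, l, h₀, hW⟩ := exists_eq_smul_add_smul_of_projCongr (h p hp)
  rw [det_submatrix_eq_pow_mul h₀ (fun i hi => (hW i hi).2)]
  exact dvd_mul_right _ _

lemma pluckerHeight_le {m n : ℕ} {v : Fin (m + 1) → Fin (n + 1) → ℤ}
    (hv : LinearIndependent ℚ fun i => coeQ (v i)) (hb : ∀ i k, |v i k| ≤ b)
    (hT : ∀ p ∈ T, p.Prime) (h : ∀ p ∈ T, ∀ i, ProjCongr p (v 0) (v i)) (hbT : b ≤ ∏ p ∈ T, p) :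
    pluckerHeight v ≤ (m + 1).factorial * b := by
  let minor : (Fin (m + 1) → Fin (n + 1)) → ℕ := fun s => ((of v).submatrix id s).det.natAbs
  have hsup : univ.sup minor ≤ (m + 1).factorial * b ^ (m + 1) := by
    refine Finset.sup_le fun s _ => ?_
    have := abs_det_le (A := (of v).submatrix id s) fun i j => hb i (s j)
    rw [Int.abs_eq_natAbs, Fintype.card_fin] at this
    exact_mod_cast this
  have hgcd : b ^ m ≤ univ.gcd minor := by
    have hdvd : (∏ p ∈ T, p) ^ m ∣ univ.gcd minor := dvd_gcd fun s _ => by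
      have := Int.natAbs_dvd_natAbs.2 (prod_primes_pow_dvd_det hT h s)
      rwa [Int.natAbs_pow, Int.natAbs_natCast, Fintype.card_fin] at this
    obtain ⟨s, hs⟩ := exists_det_submatrix_ne_zero_of_coeQ hv
    have hne : univ.gcd minor ≠ 0 := fun h0 =>
      hs (Int.natAbs_eq_zero.1 (gcd_eq_zero_iff.1 h0 s (mem_univ s)))
    exact (Nat.pow_le_pow_left hbT m).trans (Nat.le_of_dvd (Nat.pos_of_ne_zero hne) hdvd)
  refine Nat.div_le_of_le_mul ?_
  calc univ.sup minor ≤ (m + 1).factorial * b ^ (m + 1) := hsup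
    _ = b ^ m * ((m + 1).factorial * b) := by ring
    _ ≤ univ.gcd minor * ((m + 1).factorial * b) := by gcongr

lemma dvd_det_mul_eval_dirDeriv {p : ℤ} {W : ι → Fin n → ℤ} (s : ι → Fin n) {x z : Fin n → ℤ}
    {g : MvPolynomial (Fin n) ℤ}
    (hz : coeQ z ∈ Submodule.span ℚ (Set.range fun i => coeQ (W i)))
    (hW : ∀ i, p ∣ eval x (dirDeriv (W i) g)) :
    p ∣ ((of W).submatrix id s).det * eval x (dirDeriv z g) := by
  obtain ⟨m, hm⟩ := exists_det_smul_eq_sum W s hz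
  rw [eval_dirDeriv, ← smul_eq_mul, ← smul_dotProduct, hm, sum_dotProduct]
  refine dvd_sum fun i _ => ?_
  rw [smul_dotProduct, ← eval_dirDeriv, smul_eq_mul]
  exact (hW i).mul_left _

/-- Modulo `p` the vectors `v i` lie on the tangent hyperplane of `g` at `v i₀`, which does not
contain `z`; this costs the minors of `v` one further factor `p`. -/
lemma pow_card_dvd_det {p : ℕ} (hp : p.Prime) {v : ι → Fin n → ℤ} {i₀ : ι}
    (h : ∀ i, ProjCongr p (v i₀) (v i)) {g : MvPolynomial (Fin n) ℤ} {e : ℕ}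
    (hg : g.IsHomogeneous e) (hgv : ∀ i, eval (v i) g = 0) {z : Fin n → ℤ}
    (hz : coeQ z ∈ Submodule.span ℚ (Set.range fun i => coeQ (v i)))
    (hpz : ¬ (p : ℤ) ∣ eval (v i₀) (dirDeriv z g)) (s : ι → Fin n) :
    (p : ℤ) ^ Fintype.card ι ∣ ((of v).submatrix id s).det := by
  have hp' : Prime (p : ℤ) := Nat.prime_iff_prime_int.1 hp
  obtain ⟨W, l, h₀, hW⟩ := exists_eq_smul_add_smul_of_projCongr h
  have htangent : ∀ i, (p : ℤ) ∣ eval (v i₀) (dirDeriv (W i) g) := fun i => by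
    by_cases hi : i = i₀
    · rw [hi, ← h₀, eval_dirDeriv_self _ hg, hgv, mul_zero]
      exact dvd_zero _
    · refine dvd_eval_dirDeriv_of_eval_eq_zero hp' (hW i hi).1 _ _ hg (hgv i₀) ?_
      rw [h₀, ← (hW i hi).2, hgv]
  have hspan := span_le_span_of_eq_smul_add_smul h₀ fun i hi => (hW i hi).2
  have hdet := (hp'.dvd_or_dvd (dvd_det_mul_eval_dirDeriv s (hspan hz) htangent)).resolve_right hpz
  rw [det_submatrix_eq_pow_mul h₀ fun i hi => (hW i hi).2,
    ← Nat.sub_add_cancel (Fintype.card_pos_iff.2 ⟨i₀⟩), pow_succ]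
  exact mul_dvd_mul_left _ hdet

end ProjectiveCongruence

section RationalSpan

open Matrix MvPolynomial

variable {n : ℕ} {C D : Set (Fin n → ℤ)} {x : Fin n → ℤ}

lemma finrank_submodule_le (M : Submodule ℚ (Fin n → ℚ)) : Module.finrank ℚ M ≤ n :=
  (Submodule.finrank_le M).trans_eq (Module.finrank_fin_fun ℚ)

/-- The rational linear span of a set of integer vectors. -/
def ratSpan (C : Set (Fin n → ℤ)) : Submodule ℚ (Fin n → ℚ) :=
  Submodule.span ℚ (coeQ '' C)

lemma ratSpan_mono (h : C ⊆ D) : ratSpan C ≤ ratSpan D :=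
  Submodule.span_mono (Set.image_mono h)

lemma coeQ_mem_ratSpan (hx : x ∈ C) : coeQ x ∈ ratSpan C :=
  Submodule.subset_span (Set.mem_image_of_mem _ hx)

lemma coeQ_ne_zero (hx : x ≠ 0) : coeQ x ≠ 0 :=
  fun h => hx (funext fun i => Int.cast_injective (congrFun h i))

lemma exists_linearIndependent_span_eq_ratSpan (hx : x ∈ C) (hx0 : x ≠ 0) :
    ∃ (m : ℕ) (v : Fin (m + 1) → Fin n → ℤ), v 0 = x ∧ (∀ i, v i ∈ C) ∧
      LinearIndependent ℚ (fun i => coeQ (v i)) ∧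
      Submodule.span ℚ (Set.range fun i => coeQ (v i)) = ratSpan C := by
  have hx_indep : LinearIndepOn ℚ coeQ {x} := (linearIndepOn_singleton_iff ℚ).2 (coeQ_ne_zero hx0)
  obtain ⟨S, hSC, hxS, hspan, hS⟩ :=
    exists_linearIndepOn_extension hx_indep (Set.singleton_subset_iff.2 hx)
  have : Fintype S := @Fintype.ofFinite _ (LinearIndependent.finite hS)
  let x' : S := ⟨x, hxS rfl⟩
  obtain ⟨m, hm⟩ := Nat.exists_eq_succ_of_ne_zero (Fintype.card_pos_iff.2 ⟨x'⟩).ne'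
  let f : S ≃ Fin (m + 1) := Fintype.equivFinOfCardEq hm
  let e : Fin (m + 1) ≃ S := (f.trans (Equiv.swap (f x') 0)).symm
  have he : e 0 = x' := by simp [e]
  refine ⟨m, fun i => e i, congrArg Subtype.val he, fun i => hSC (e i).2,
    LinearIndependent.comp hS e e.injective, le_antisymm ?_ ?_⟩
  · rw [Submodule.span_le]
    rintro _ ⟨i, rfl⟩
    exact coeQ_mem_ratSpan (hSC (e i).2)
  · rw [ratSpan, Submodule.span_le]
    refine hspan.trans (Submodule.span_mono ?_)
    rintro _ ⟨y, hy, rfl⟩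
    exact ⟨e.symm ⟨y, hy⟩, by simp⟩

lemma prod_primes_le {b e : ℕ} (hx : x ∈ C) (hx0 : x ≠ 0) (hb : ∀ y ∈ C, ∀ k, |y k| ≤ b)
    {g : MvPolynomial (Fin n) ℤ} (hg : g.IsHomogeneous e) (hgC : ∀ y ∈ C, eval y g = 0)
    {z : Fin n → ℤ} (hz : coeQ z ∈ ratSpan C) {T : Finset ℕ} (hT : ∀ p ∈ T, p.Prime)
    (hcongr : ∀ p ∈ T, ∀ y ∈ C, ProjCongr p x y)
    (hpz : ∀ p ∈ T, ¬ (p : ℤ) ∣ eval x (dirDeriv z g)) : ∏ p ∈ T, p ≤ n.factorial * b := by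
  obtain ⟨m, v, rfl, hvC, hv, hspan⟩ := exists_linearIndependent_span_eq_ratSpan hx hx0
  rw [← hspan] at hz
  have hmn : m + 1 ≤ n := by simpa using hv.fintype_card_le_finrank
  obtain ⟨s, hs⟩ := exists_det_submatrix_ne_zero_of_coeQ hv
  have hdvd : ((∏ p ∈ T, p : ℕ) : ℤ) ^ (m + 1) ∣ ((of v).submatrix id s).det :=
    prod_primes_pow_dvd hT fun p hp => by
      simpa using pow_card_dvd_det (hT p hp) (fun i => hcongr p hp _ (hvC i)) hg
        (fun i => hgC _ (hvC i)) hz (hpz p hp) s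
  have hle := (Int.le_of_dvd (abs_pos.2 hs) ((dvd_abs _ _).2 hdvd)).trans
    (abs_det_le (A := (of v).submatrix id s) fun i j => hb _ (hvC i) (s j))
  rw [Fintype.card_fin] at hle
  refine (Nat.pow_le_pow_iff_left m.succ_ne_zero).1 ?_
  calc (∏ p ∈ T, p) ^ (m + 1) ≤ (m + 1).factorial * b ^ (m + 1) := by exact_mod_cast hle
    _ ≤ n.factorial ^ (m + 1) * b ^ (m + 1) := by
        gcongr
        exact (Nat.factorial_le hmn).trans (Nat.le_self_pow m.succ_ne_zero _)
    _ = (n.factorial * b) ^ (m + 1) := (mul_pow _ _ _).symm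

end RationalSpan

section AuxiliaryForms

open Matrix MvPolynomial

/-- The linear form `u ↦ det (u, y 0, …, y (r - 1))`, where the determinant is that of the minor
in the columns `s`. -/
def detForm {R κ : Type*} [CommRing R] {r : ℕ} (y : Fin r → κ → R) (s : Fin (r + 1) → κ) :
    (κ → R) →ₗ[R] R :=
  detRowAlternating.toMultilinearMap.toLinearMap (Fin.cons 0 fun i => y i ∘ s) 0 ∘ₗ
    LinearMap.funLeft R R s

lemma detForm_apply {R κ : Type*} [CommRing R] {r : ℕ} (y : Fin r → κ → R) (s : Fin (r + 1) → κ)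
    (u : κ → R) : detForm y s u = ((of (Fin.cons u y)).submatrix id s).det := by
  change det (Function.update (Fin.cons 0 fun i => y i ∘ s) 0 (u ∘ s)) = _
  rw [Fin.update_cons_zero]
  congr 1
  ext i j
  refine Fin.cases ?_ (fun i => ?_) i <;> rfl

lemma intCast_detForm {κ : Type*} {r : ℕ} (y : Fin r → κ → ℤ) (s : Fin (r + 1) → κ) (u : κ → ℤ) :
    (detForm y s u : ℚ) = detForm (fun i k => (y i k : ℚ)) s fun k => (u k : ℚ) := by
  rw [detForm_apply, detForm_apply, Int.cast_det]
  congr 1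
  ext i j
  refine Fin.cases ?_ (fun i => ?_) i <;> rfl

lemma detForm_eq_zero_of_mem_span {R κ : Type*} [CommRing R] {r : ℕ} {y : Fin r → κ → R}
    (s : Fin (r + 1) → κ) {u : κ → R} (hu : u ∈ Submodule.span R (Set.range y)) :
    detForm y s u = 0 := by
  have hle : Submodule.span R (Set.range y) ≤ LinearMap.ker (detForm y s) := by
    rw [Submodule.span_le]
    rintro _ ⟨i, rfl⟩
    rw [SetLike.mem_coe, LinearMap.mem_ker, detForm_apply]
    exact det_zero_of_row_eq (Fin.succ_ne_zero i).symm rfl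
  exact hle hu

lemma exists_dotProduct_eq_zero_of_notMem_span {κ : Type*} [Fintype κ] {S : Set (κ → ℤ)} {b : ℕ}
    (hb : 1 ≤ b) (hS : ∀ u ∈ S, ∀ k, |u k| ≤ b) {w : κ → ℤ}
    (hw : (fun k => (w k : ℚ)) ∉ Submodule.span ℚ ((fun u k => (u k : ℚ)) '' S)) :
    ∃ a : κ → ℤ, (∀ u ∈ S, u ⬝ᵥ a = 0) ∧ w ⬝ᵥ a ≠ 0 ∧
      ∀ k, |a k| ≤ ((Fintype.card κ).factorial * b ^ Fintype.card κ : ℕ) := by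
  classical
  obtain ⟨r, f, hfS, hf_span, hf⟩ : ∃ (r : ℕ) (f : Fin r → κ → ℚ),
      (∀ i, f i ∈ (fun u k => (u k : ℚ)) '' S) ∧
      Submodule.span ℚ (Set.range f) = Submodule.span ℚ ((fun u k => (u k : ℚ)) '' S) ∧
      LinearIndependent ℚ f :=
    ⟨_, Submodule.exists_fun_fin_finrank_span_eq ℚ ((fun u k => (u k : ℚ)) '' S)⟩
  choose y hyS hyf using hfS
  obtain rfl : (fun i k => (y i k : ℚ)) = f := funext hyf
  rw [← hf_span] at hw
  have hindep := hf.finCons hw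
  obtain ⟨s, hs⟩ := exists_det_submatrix_ne_zero
    (v := of (Fin.cons (fun k => (w k : ℚ)) fun i k => (y i k : ℚ))) hindep
  rw [← detForm_apply] at hs
  have hr : r + 1 ≤ Fintype.card κ := by simpa using hindep.fintype_card_le_finrank
  have hform : ∀ u, detForm y s u = u ⬝ᵥ fun k => detForm y s fun j => if k = j then 1 else 0 :=
    (detForm y s).pi_apply_eq_sum_univ
  refine ⟨fun k => detForm y s fun j => if k = j then 1 else 0, fun u hu => ?_, fun h => hs ?_,
    fun k => ?_⟩
  · have hmem : (fun k => (u k : ℚ)) ∈ Submodule.span ℚ (Set.range fun i k => (y i k : ℚ)) := by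
      rw [hf_span]
      exact Submodule.subset_span ⟨u, hu, rfl⟩
    rw [← hform]
    exact_mod_cast (intCast_detForm y s u).trans (detForm_eq_zero_of_mem_span s hmem)
  · rw [← intCast_detForm, hform, h, Int.cast_zero]
  · change |detForm y s _| ≤ _
    rw [detForm_apply]
    refine (abs_det_le (b := b) fun i j => ?_).trans ?_
    · refine Fin.cases ?_ (fun i => hS _ (hyS i) _) i
      change |if k = s j then (1 : ℤ) else 0| ≤ b
      split_ifs <;> simp [hb]
    · rw [Fintype.card_fin]
      exact_mod_cast Nat.mul_le_mul (Nat.factorial_le hr) (Nat.pow_le_pow_right hb hr)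

lemma exists_natCast_eval_ne_zero {R σ : Type*} [CommRing R] [IsDomain R] [CharZero R] [Finite σ]
    {F : MvPolynomial σ R} {d : ℕ} (hF0 : F ≠ 0) (hF : F.totalDegree ≤ d) :
    ∃ c : σ → ℕ, (∀ i, c i ≤ d) ∧ eval (fun i => (c i : R)) F ≠ 0 := by
  classical
  by_contra! h
  refine hF0 (eq_zero_of_eval_zero_at_prod_finset F
    (fun _ => (range (d + 1)).map Nat.castEmbedding) (fun i => ?_) fun u hu => ?_)
  · rw [card_map, card_range]
    exact Nat.lt_succ_of_le ((F.degreeOf_le_totalDegree i).trans hF)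
  · simp only [mem_map, mem_range_succ_iff, Nat.castEmbedding_apply] at hu
    choose c hc hcu using hu
    rw [← funext hcu]
    exact h c hc

/-- The monomials with exponents in `S`, evaluated at `x`. -/
def veronese {R σ : Type*} [CommSemiring R] [Fintype σ] (S : Finset (σ →₀ ℕ)) (x : σ → R) : S → R :=
  fun m => ∏ k, x k ^ m.1 k

lemma eval_sum_monomial {R σ : Type*} [CommSemiring R] [Fintype σ] {S : Finset (σ →₀ ℕ)} (a : S → R)
    (x : σ → R) : eval x (∑ m, monomial m.1 (a m)) = veronese S x ⬝ᵥ a := by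
  rw [map_sum]
  refine sum_congr rfl fun m _ => ?_
  rw [eval_monomial, Finsupp.prod_pow, mul_comm, veronese]

lemma abs_coeff_sum_monomial_le {σ : Type*} {S : Finset (σ →₀ ℕ)} {a : S → ℤ} {A : ℕ}
    (ha : ∀ m, |a m| ≤ A) (m : σ →₀ ℕ) : |coeff m (∑ m, monomial m.1 (a m))| ≤ A := by
  classical
  simp only [coeff_sum, coeff_monomial]
  by_cases hm : m ∈ S
  · rw [sum_eq_single ⟨m, hm⟩ (fun m' _ h => if_neg fun h' => h (Subtype.ext h')) (by simp)]
    simpa using ha ⟨m, hm⟩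
  · rw [sum_eq_zero fun m' _ => if_neg fun h : m'.1 = m => hm (h ▸ m'.2)]
    simp

lemma abs_veronese_le {σ : Type*} [Fintype σ] {S : Finset (σ →₀ ℕ)} {d b : ℕ}
    (hS : ∀ m ∈ S, m.degree = d) {x : σ → ℤ} (hx : ∀ k, |x k| ≤ b) (m : S) :
    |veronese S x m| ≤ (b ^ d : ℕ) := by
  rw [veronese, abs_prod, ← hS m m.2, Finsupp.degree_eq_sum, ← prod_pow_eq_pow_sum, Nat.cast_prod]
  refine prod_le_prod (fun _ _ => abs_nonneg _) fun k _ => ?_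
  rw [abs_pow, Nat.cast_pow]
  exact pow_le_pow_left₀ (abs_nonneg _) (hx k) _

variable {K : Type*} [CommRing K] {n d b : ℕ} {F : MvPolynomial (Fin n) K}

/-- The integral zeros of `F` whose coordinates are bounded by `b`. -/
def boxZeros (F : MvPolynomial (Fin n) K) (b : ℕ) : Set (Fin n → ℤ) :=
  {x | (∀ k, |x k| ≤ b) ∧ eval (fun k => (x k : K)) F = 0}

/-- The form `F` vanishes identically on the rational subspace `M`. -/
def VanishesOn [Algebra ℚ K] (F : MvPolynomial (Fin n) K) (M : Submodule ℚ (Fin n → ℚ)) : Prop :=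
  ∀ w ∈ M, eval (fun k => algebraMap ℚ K (w k)) F = 0

variable [Algebra ℚ K]

lemma veronese_notMem_span {z : Fin n → ℤ} {C : Set (Fin n → ℤ)}
    (hC : ∀ x ∈ C, eval (fun k => (x k : K)) F = 0) (hz : eval (fun k => (z k : K)) F ≠ 0) :
    (fun m => ((veronese F.support z m : ℤ) : ℚ)) ∉
      Submodule.span ℚ ((fun u m => (u m : ℚ)) '' (veronese F.support '' C)) := by
  let evalF : (F.support → ℚ) →ₗ[ℚ] K :=
    ∑ m, LinearMap.toSpanSingleton ℚ K (coeff m.1 F) ∘ₗ LinearMap.proj m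
  have hevalF : ∀ x, evalF (fun m => ((veronese F.support x m : ℤ) : ℚ)) =
      eval (fun k => (x k : K)) F := by
    intro x
    rw [eval_eq', ← sum_coe_sort]
    simp [evalF, veronese, Algebra.smul_def, mul_comm]
  have hle : Submodule.span ℚ ((fun u m => (u m : ℚ)) '' (veronese F.support '' C)) ≤
      LinearMap.ker evalF := by
    rw [Submodule.span_le]
    rintro _ ⟨_, ⟨x, hx, rfl⟩, rfl⟩
    exact (hevalF x).trans (hC x hx)
  exact fun h => hz ((hevalF z).symm.trans (hle h))

lemma exists_integral_form (hb : 1 ≤ b) (hF : F.IsHomogeneous d) {z : Fin n → ℤ}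
    (hz : eval (fun k => (z k : K)) F ≠ 0) :
    ∃ G : MvPolynomial (Fin n) ℤ, G.IsHomogeneous d ∧ (∀ x ∈ boxZeros F b, eval x G = 0) ∧
      eval z G ≠ 0 ∧
      ∀ m, |coeff m G| ≤ (((d + 1) ^ n).factorial * (b ^ d) ^ (d + 1) ^ n : ℕ) := by
  classical
  have hver : ∀ u ∈ veronese F.support '' boxZeros F b, ∀ m, |u m| ≤ (b ^ d : ℕ) := by
    rintro _ ⟨x, hx, rfl⟩ m
    exact abs_veronese_le (fun m hm => (hF.degree_eq_sum_deg_support hm).symm) hx.1 m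
  obtain ⟨a, ha_zero, haz, ha_le⟩ := exists_dotProduct_eq_zero_of_notMem_span
    (Nat.one_le_pow d b hb) hver (veronese_notMem_span (fun x hx => hx.2) hz)
  refine ⟨∑ m, monomial m.1 (a m), IsHomogeneous.sum _ _ _ fun m _ =>
    isHomogeneous_monomial _ (hF.degree_eq_sum_deg_support m.2).symm, fun x hx => ?_, ?_,
    fun m => ?_⟩
  · rw [eval_sum_monomial]
    exact ha_zero _ ⟨x, hx, rfl⟩
  · rwa [eval_sum_monomial]
  · have hcard : Fintype.card F.support ≤ (d + 1) ^ n := by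
      simpa using card_support_le_of_isHomogeneous hF
    refine (abs_coeff_sum_monomial_le (fun m => (ha_le m).trans ?_) m)
    exact_mod_cast Nat.mul_le_mul (Nat.factorial_le hcard)
      (Nat.pow_le_pow_right (Nat.one_le_pow d b hb) hcard)

lemma eval_bind_linear {R σ ι : Type*} [CommSemiring R] [Fintype ι] (F : MvPolynomial σ R)
    (v : ι → σ → R) (u : ι → R) :
    eval u (bind₁ (fun k => ∑ i, C (v i k) * X i) F) = eval (∑ i, u i • v i) F := by
  rw [← aeval_eq_bind₁, ← coe_aeval_eq_eval, RingHom.coe_coe, comp_aeval_apply, aeval_eq_eval]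
  congr 2
  ext k
  simp [mul_comm]

lemma exists_intPoint_eval_ne_zero [IsDomain K] {ι : Type*} [Fintype ι] (hF : F.IsHomogeneous d)
    {v : ι → Fin n → ℤ} (hv : ∀ i k, |v i k| ≤ b)
    (hFv : ¬ VanishesOn F (Submodule.span ℚ (Set.range fun i => coeQ (v i)))) :
    ∃ z : Fin n → ℤ, coeQ z ∈ Submodule.span ℚ (Set.range fun i => coeQ (v i)) ∧
      eval (fun k => (z k : K)) F ≠ 0 ∧ ∀ k, |z k| ≤ (Fintype.card ι * (d * b) : ℕ) := by
  have : CharZero K := algebraRat.charZero K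
  let H : MvPolynomial ι K := bind₁ (fun k => ∑ i, C (v i k : K) * X i) F
  have hH_hom : H.IsHomogeneous d := by
    simpa only [one_mul, ← aeval_eq_bind₁, H] using hF.aeval _ fun k =>
      IsHomogeneous.sum univ _ 1 fun i _ => isHomogeneous_C_mul_X (v i k : K) i
  have hH0 : H ≠ 0 := by
    intro hH
    refine hFv fun w hw => ?_
    obtain ⟨a, rfl⟩ := (Submodule.mem_span_range_iff_exists_fun ℚ).1 hw
    have := eval_bind_linear F (fun i k => (v i k : K)) fun i => algebraMap ℚ K (a i)
    rw [show bind₁ _ F = 0 from hH, map_zero] at this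
    rw [this]
    congr 2
    ext k
    simp [coeQ, Algebra.smul_def]
  obtain ⟨c, hc, hcH⟩ := exists_natCast_eval_ne_zero hH0 hH_hom.totalDegree_le
  refine ⟨∑ i, (c i : ℤ) • v i, ?_, ?_, fun k => ?_⟩
  · have : coeQ (∑ i, (c i : ℤ) • v i) = ∑ i, (c i : ℚ) • coeQ (v i) := by
      ext k
      simp [coeQ]
    rw [this]
    exact sum_mem fun i _ => Submodule.smul_mem _ _ (Submodule.subset_span ⟨i, rfl⟩)
  · rw [eval_bind_linear] at hcH
    convert hcH with k
    simp
  · have hterm : ∀ i ∈ univ, |c i * v i k| ≤ ((d * b : ℕ) : ℤ) := fun i _ => by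
      rw [abs_mul, Nat.abs_cast, Nat.cast_mul]
      exact mul_le_mul (mod_cast hc i) (hv i k) (abs_nonneg _) (by positivity)
    simpa using (abs_sum_le_sum_abs _ _).trans (sum_le_card_nsmul univ _ _ hterm)

end AuxiliaryForms

section Refinement

open MvPolynomial

variable {K : Type*} [CommRing K] [Algebra ℚ K] {n d b : ℕ} {F : MvPolynomial (Fin n) K}

/-- The order of vanishing `order M y` at `y`, in the direction of a point `z ∈ M` with
`F z ≠ 0`, of an integral form through the zeros of `F` that does not vanish at `z`, and the
corresponding first nonzero derivative `lead M y`. As `M` is to range over the spans of sets `C` of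
zeros of `F`, both depend on `C` through its span only. The field `prod_le` says that, unless `C` is
congruent modulo few primes only, the points of `C` at which the order is the same span a smaller
space. -/
structure Refinement (F : MvPolynomial (Fin n) K) (b d H : ℕ) where
  order : Submodule ℚ (Fin n → ℚ) → (Fin n → ℤ) → ℕ
  lead : Submodule ℚ (Fin n → ℚ) → (Fin n → ℤ) → ℤ
  order_le : ∀ M y, order M y ≤ d
  lead_ne_zero : ∀ M y, lead M y ≠ 0
  abs_lead_le : ∀ M, ∀ y ∈ boxZeros F b, |lead M y| ≤ H
  prod_le : ∀ C ⊆ boxZeros F b, ¬ VanishesOn F (ratSpan C) → ∀ x ∈ C, x ≠ 0 →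
    ratSpan {y ∈ C | order (ratSpan C) y = order (ratSpan C) x} = ratSpan C →
    ∀ T : Finset ℕ, (∀ p ∈ T, p.Prime) → (∀ p ∈ T, ∀ y ∈ C, ProjCongr p x y) →
      (∀ p ∈ T, ¬ (p : ℤ) ∣ lead (ratSpan C) x) → ∏ p ∈ T, p ≤ n.factorial * b

/-- The constant in the bound `leadConst n d * b ^ leadExp n d` for the derivatives of the auxiliary
forms. -/
def leadConst (n d : ℕ) : ℕ :=
  (d + 1) ^ n * (n * n * d * d + 1) ^ d * ((d + 1) ^ n).factorial

/-- The exponent in the bound `leadConst n d * b ^ leadExp n d` for the derivatives of the auxiliary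
forms. -/
def leadExp (n d : ℕ) : ℕ :=
  d + d * (d + 1) ^ n

lemma abs_eval_iterate_dirDeriv_le {G : MvPolynomial (Fin n) ℤ}
    (hG : G.IsHomogeneous d)
    (hG_le : ∀ m, |coeff m G| ≤ (((d + 1) ^ n).factorial * (b ^ d) ^ (d + 1) ^ n : ℕ))
    {x z : Fin n → ℤ} (hx : ∀ k, |x k| ≤ b) (hz : ∀ k, |z k| ≤ (n * (d * b) : ℕ)) {j : ℕ}
    (hj : j ≤ d) : |eval x ((dirDeriv z)^[j] G)| ≤ (leadConst n d * b ^ leadExp n d : ℕ) := by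
  refine (abs_eval_le (isHomogeneous_iterate_dirDeriv z hG j)
    (abs_coeff_iterate_dirDeriv_le hG hG_le hz j) hx).trans (Nat.cast_le.2 ?_)
  rw [Fintype.card_fin]
  set Q := n * n * d * d + 1
  set E := (d + 1) ^ n
  have hstep : n * (n * (d * b)) * d ≤ Q * b := by
    calc n * (n * (d * b)) * d = n * n * d * d * b := by ring
      _ ≤ Q * b := Nat.mul_le_mul_right b (Nat.le_succ _)
  calc (d - j + 1) ^ n * ((n * (n * (d * b)) * d) ^ j * (E.factorial * (b ^ d) ^ E) * b ^ (d - j))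
      ≤ (d + 1) ^ n * ((Q * b) ^ j * (E.factorial * (b ^ d) ^ E) * (Q * b) ^ (d - j)) := by
        gcongr
        · omega
        · exact Nat.le_mul_of_pos_left b (Nat.succ_pos _)
    _ = (d + 1) ^ n * (Q * b) ^ (j + (d - j)) * (E.factorial * (b ^ d) ^ E) := by ring
    _ = leadConst n d * b ^ leadExp n d := by
        rw [Nat.add_sub_cancel' hj, leadConst, leadExp, mul_pow, pow_add, ← pow_mul]
        ring

lemma exists_form_eval_ne_zero [IsDomain K] (hb : 1 ≤ b) (hF : F.IsHomogeneous d)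
    {C : Set (Fin n → ℤ)} (hC : C ⊆ boxZeros F b) (hCF : ¬ VanishesOn F (ratSpan C))
    {x : Fin n → ℤ} (hx : x ∈ C) (hx0 : x ≠ 0) :
    ∃ (G : MvPolynomial (Fin n) ℤ) (z : Fin n → ℤ), G.IsHomogeneous d ∧
      (∀ y ∈ boxZeros F b, eval y G = 0) ∧ coeQ z ∈ ratSpan C ∧ eval z G ≠ 0 ∧
      ∀ y ∈ boxZeros F b, ∀ j ≤ d,
        |eval y ((dirDeriv z)^[j] G)| ≤ (leadConst n d * b ^ leadExp n d : ℕ) := by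
  obtain ⟨m, v, -, hvC, hv, hspan⟩ := exists_linearIndependent_span_eq_ratSpan hx hx0
  rw [← hspan] at hCF ⊢
  have hmn : m + 1 ≤ n := by simpa using hv.fintype_card_le_finrank
  obtain ⟨z, hzM, hFz, hz⟩ := exists_intPoint_eval_ne_zero hF (fun i => (hC (hvC i)).1) hCF
  obtain ⟨G, hG, hG_zero, hGz, hG_le⟩ := exists_integral_form hb hF hFz
  refine ⟨G, z, hG, hG_zero, hzM, hGz, fun y hy j hj =>
    abs_eval_iterate_dirDeriv_le hG hG_le hy.1 (fun k => (hz k).trans ?_) hj⟩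
  rw [Fintype.card_fin]
  exact_mod_cast Nat.mul_le_mul_right _ hmn

lemma exists_order_lead [IsDomain K] (hb : 1 ≤ b) (hF : F.IsHomogeneous d)
    (M : Submodule ℚ (Fin n → ℚ)) :
    ∃ (order : (Fin n → ℤ) → ℕ) (lead : (Fin n → ℤ) → ℤ), (∀ y, order y ≤ d) ∧
      (∀ y, lead y ≠ 0) ∧
      (∀ y ∈ boxZeros F b, |lead y| ≤ (leadConst n d * b ^ leadExp n d : ℕ)) ∧
      ∀ C ⊆ boxZeros F b, ratSpan C = M → ¬ VanishesOn F M → ∀ x ∈ C, x ≠ 0 →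
        ratSpan {y ∈ C | order y = order x} = M → ∀ T : Finset ℕ, (∀ p ∈ T, p.Prime) →
        (∀ p ∈ T, ∀ y ∈ C, ProjCongr p x y) → (∀ p ∈ T, ¬ (p : ℤ) ∣ lead x) →
          ∏ p ∈ T, p ≤ n.factorial * b := by
  classical
  by_cases h : ∃ C ⊆ boxZeros F b, ratSpan C = M ∧ ¬ VanishesOn F M ∧ ∃ x ∈ C, x ≠ 0
  · obtain ⟨C₀, hC₀, rfl, hCF, x₀, hx₀, hx₀0⟩ := h
    obtain ⟨G, z, hG, hG_zero, hzM, hGz, hG_le⟩ :=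
      exists_form_eval_ne_zero hb hF hC₀ hCF hx₀ hx₀0
    have hd : ∀ y, eval y ((dirDeriv z)^[d] G) ≠ 0 := fun y => by
      rw [eval_iterate_dirDeriv y z hG]
      exact mul_ne_zero (mod_cast d.factorial_ne_zero) hGz
    have hex : ∀ y, ∃ j, eval y ((dirDeriv z)^[j] G) ≠ 0 := fun y => ⟨d, hd y⟩
    have hle : ∀ y, Nat.find (hex y) ≤ d := fun y => Nat.find_min' _ (hd y)
    refine ⟨fun y => Nat.find (hex y), fun y => eval y ((dirDeriv z)^[Nat.find (hex y)] G), hle,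
      fun y => Nat.find_spec (hex y), fun y hy => hG_le y hy _ (hle y), ?_⟩
    intro C hC _ _ x hx hx0 hfiber T hT hcongr hlead
    have hpos : Nat.find (hex x) ≠ 0 := fun h0 => (Nat.find_eq_zero _).1 h0 (hG_zero x (hC hx))
    obtain ⟨j, hj⟩ := Nat.exists_eq_succ_of_ne_zero hpos
    refine prod_primes_le (C := {y ∈ C | Nat.find (hex y) = Nat.find (hex x)}) ⟨hx, rfl⟩ hx0
      (fun y hy => (hC hy.1).1) (isHomogeneous_iterate_dirDeriv z hG j) (fun y hy => ?_)
      (hfiber.symm ▸ hzM) hT (fun p hp y hy => hcongr p hp y hy.1) fun p hp => ?_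
    · exact not_not.1 (Nat.find_min (hex y) (hy.2.trans hj ▸ Nat.lt_succ_self j))
    · simpa only [hj, Function.iterate_succ_apply'] using hlead p hp
  · refine ⟨fun _ => 0, fun _ => 1, fun _ => Nat.zero_le _, fun _ => one_ne_zero, fun _ _ => ?_,
      fun C hC hspan hCF x hx hx0 => (h ⟨C, hC, hspan, hCF, x, hx, hx0⟩).elim⟩
    rw [abs_one, Nat.one_le_cast, leadConst]
    exact Nat.one_le_iff_ne_zero.2 (by positivity)

lemma nonempty_refinement [IsDomain K] (hb : 1 ≤ b) (hF : F.IsHomogeneous d) :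
    Nonempty (Refinement F b d (leadConst n d * b ^ leadExp n d)) := by
  choose order lead order_le lead_ne_zero abs_lead_le prod_le using
    exists_order_lead (F := F) hb hF
  exact ⟨⟨order, lead, order_le, lead_ne_zero, abs_lead_le,
    fun C hC => prod_le (ratSpan C) C hC rfl⟩⟩

end Refinement

section DescentChain

open Module

namespace Refinement

variable {K : Type*} [CommRing K] [Algebra ℚ K] {n d b H : ℕ} {F : MvPolynomial (Fin n) K}
  (R : Refinement F b d H) (x : Fin n → ℤ) (P : Finset ℕ)

/-- The points of `C` with the same order as `x`: one step of the descent towards a set that spans a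
space on which `F` vanishes. -/
def fiber (C : Set (Fin n → ℤ)) : Set (Fin n → ℤ) :=
  {y ∈ C | R.order (ratSpan C) y = R.order (ratSpan C) x}

/-- The ranks of `C` and of its first `f - 1` iterated fibers, as the digits in base `n + 1` of a
natural number. -/
def rankCode : ℕ → Set (Fin n → ℤ) → ℕ
  | 0, _ => 0
  | f + 1, C => finrank ℚ (ratSpan C) * (n + 1) ^ f + rankCode f (R.fiber x C)

/-- The primes of `P` that divide the leading derivative at `x` in one of `f` steps of the descent
from `C`. -/
def badPrimes : ℕ → Set (Fin n → ℤ) → Finset ℕ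
  | 0, _ => ∅
  | f + 1, C => {p ∈ P | (p : ℤ) ∣ R.lead (ratSpan C) x} ∪ badPrimes f (R.fiber x C)

open Classical in
/-- The sets that at most `f` steps of the descent from `C` can lead to, for any base point. -/
def descendants : ℕ → Set (Fin n → ℤ) → Finset (Set (Fin n → ℤ))
  | 0, C => {C}
  | f + 1, C => insert C ((range (d + 1)).biUnion fun j =>
      descendants f {y ∈ C | R.order (ratSpan C) y = j})

lemma fiber_subset (C : Set (Fin n → ℤ)) : R.fiber x C ⊆ C :=
  Set.sep_subset _ _

lemma rankCode_lt (f : ℕ) (C : Set (Fin n → ℤ)) : R.rankCode x f C < (n + 1) ^ f := by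
  induction f generalizing C with
  | zero => simp only [rankCode, pow_zero, zero_lt_one]
  | succ f ih =>
    calc finrank ℚ (ratSpan C) * (n + 1) ^ f + R.rankCode x f (R.fiber x C)
        < n * (n + 1) ^ f + (n + 1) ^ f :=
          add_lt_add_of_le_of_lt (Nat.mul_le_mul_right _ (finrank_submodule_le _)) (ih _)
      _ = (n + 1) ^ (f + 1) := by ring

lemma rankCode_le_and_badPrimes_eq (f : ℕ) {C₁ C₂ : Set (Fin n → ℤ)} (h : C₁ ⊆ C₂) :
    R.rankCode x f C₁ ≤ R.rankCode x f C₂ ∧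
      (R.rankCode x f C₁ = R.rankCode x f C₂ →
        R.badPrimes x P f C₁ = R.badPrimes x P f C₂) := by
  induction f generalizing C₁ C₂ with
  | zero => exact ⟨le_rfl, fun _ => rfl⟩
  | succ f ih =>
    rcases (Submodule.finrank_mono (ratSpan_mono h)).lt_or_eq with hlt | heq
    · have hcode : R.rankCode x (f + 1) C₁ < R.rankCode x (f + 1) C₂ := by
        calc finrank ℚ (ratSpan C₁) * (n + 1) ^ f + R.rankCode x f (R.fiber x C₁)
            < finrank ℚ (ratSpan C₁) * (n + 1) ^ f + (n + 1) ^ f :=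
              Nat.add_lt_add_left (R.rankCode_lt x f _) _
          _ = (finrank ℚ (ratSpan C₁) + 1) * (n + 1) ^ f := by ring
          _ ≤ finrank ℚ (ratSpan C₂) * (n + 1) ^ f := Nat.mul_le_mul_right _ hlt
          _ ≤ R.rankCode x (f + 1) C₂ := Nat.le_add_right _ _
      exact ⟨hcode.le, fun hcode_eq => absurd hcode_eq hcode.ne⟩
    · have hspan : ratSpan C₁ = ratSpan C₂ :=
        Submodule.eq_of_le_of_finrank_eq (ratSpan_mono h) heq
      have hfiber : R.fiber x C₁ ⊆ R.fiber x C₂ := fun y hy => ⟨h hy.1, hspan ▸ hy.2⟩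
      obtain ⟨hle, hbad⟩ := ih hfiber
      simp only [rankCode, badPrimes, heq, hspan, add_right_inj, add_le_add_iff_left]
      exact ⟨hle, fun hcode => by rw [hbad hcode]⟩

lemma card_badPrimes_le {m : ℕ} (hm : ∀ M, #(P.filter fun p : ℕ => (p : ℤ) ∣ R.lead M x) ≤ m)
    (f : ℕ) (C : Set (Fin n → ℤ)) : #(R.badPrimes x P f C) ≤ f * m := by
  induction f generalizing C with
  | zero => simp only [badPrimes, card_empty, zero_mul, le_refl]
  | succ f ih =>
    rw [add_one_mul, add_comm (f * m)]
    exact (card_union_le _ _).trans (add_le_add (hm _) (ih _))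

lemma card_descendants_le (f : ℕ) (C : Set (Fin n → ℤ)) :
    #(R.descendants f C) ≤ (d + 2) ^ f := by
  classical
  induction f generalizing C with
  | zero => simp only [descendants, card_singleton, pow_zero, le_refl]
  | succ f ih =>
    calc #(R.descendants (f + 1) C) ≤ #(range (d + 1)) * (d + 2) ^ f + 1 :=
          (card_insert_le _ _).trans
            (Nat.add_le_add_right (card_biUnion_le_card_mul _ _ _ fun j _ => ih _) 1)
      _ ≤ (d + 1) * (d + 2) ^ f + (d + 2) ^ f := by
          rw [card_range]
          exact Nat.add_le_add_left (Nat.one_le_pow _ _ (Nat.succ_pos _)) _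
      _ = (d + 2) ^ (f + 1) := by ring

lemma self_mem_descendants (f : ℕ) (C : Set (Fin n → ℤ)) : C ∈ R.descendants f C := by
  cases f with
  | zero => exact mem_singleton_self C
  | succ f => exact mem_insert_self _ _

lemma mem_descendants_of_fiber {f : ℕ} {C D : Set (Fin n → ℤ)}
    (hD : D ∈ R.descendants f (R.fiber x C)) : D ∈ R.descendants (f + 1) C :=
  mem_insert_of_mem (mem_biUnion.2
    ⟨R.order (ratSpan C) x, mem_range_succ_iff.2 (R.order_le _ _), hD⟩)

lemma exists_descendant_vanishesOn {x} {P T : Finset ℕ} (hTP : T ⊆ P) (hT : ∀ p ∈ T, p.Prime)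
    (hx0 : x ≠ 0) (f : ℕ) {C : Set (Fin n → ℤ)} (hC : C ⊆ boxZeros F b) (hx : x ∈ C)
    (hcongr : ∀ p ∈ T, ∀ y ∈ C, ProjCongr p x y) (hrank : finrank ℚ (ratSpan C) ≤ f)
    (hprod : n.factorial * b < ∏ p ∈ T \ R.badPrimes x P f C, p) :
    ∃ D ∈ R.descendants f C, x ∈ D ∧ D ⊆ C ∧ VanishesOn F (ratSpan D) := by
  induction f generalizing C with
  | zero =>
    have hbot : ratSpan C = ⊥ := Submodule.finrank_eq_zero.1 (Nat.le_zero.1 hrank)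
    exact absurd ((Submodule.mem_bot ℚ).1 (hbot ▸ coeQ_mem_ratSpan hx)) (coeQ_ne_zero hx0)
  | succ f ih =>
    by_cases hCF : VanishesOn F (ratSpan C)
    · exact ⟨C, R.self_mem_descendants _ C, hx, subset_rfl, hCF⟩
    have hprod_le : ∀ S₁ S₂ : Finset ℕ, S₁ ⊆ S₂ → S₂ ⊆ T → ∏ p ∈ S₁, p ≤ ∏ p ∈ S₂, p :=
      fun S₁ S₂ h h₂ => prod_le_prod_of_subset_of_one_le' h fun p hp _ => (hT p (h₂ hp)).one_le
    have hfiber_ne : ratSpan (R.fiber x C) ≠ ratSpan C := fun hfiber => by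
      refine hprod.not_ge ((hprod_le _ {p ∈ T | ¬ (p : ℤ) ∣ R.lead (ratSpan C) x} (fun p hp => ?_)
        (filter_subset _ _)).trans (R.prod_le C hC hCF x hx hx0 hfiber _
          (fun p hp => hT p (mem_filter.1 hp).1) (fun p hp => hcongr p (mem_filter.1 hp).1)
          fun p hp => (mem_filter.1 hp).2))
      obtain ⟨hpT, hp_good⟩ := mem_sdiff.1 hp
      exact mem_filter.2 ⟨hpT, fun hdvd =>
        hp_good (mem_union_left _ (mem_filter.2 ⟨hTP hpT, hdvd⟩))⟩
    have hrank_lt : finrank ℚ (ratSpan (R.fiber x C)) < finrank ℚ (ratSpan C) :=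
      Submodule.finrank_lt_finrank_of_lt
        (lt_of_le_of_ne (ratSpan_mono (R.fiber_subset x C)) hfiber_ne)
    obtain ⟨D, hD, hxD, hDC, hDF⟩ := ih ((R.fiber_subset x C).trans hC) ⟨hx, rfl⟩
      (fun p hp y hy => hcongr p hp y (R.fiber_subset x C hy)) (by omega)
      (hprod.trans_le (hprod_le _ _ (sdiff_subset_sdiff subset_rfl subset_union_right)
        sdiff_subset))
    exact ⟨D, R.mem_descendants_of_fiber x hD, hxD, hDC.trans (R.fiber_subset x C), hDF⟩

end Refinement

end DescentChain

section PointsModPrime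

open MvPolynomial

lemma exists_isHomogeneous_map_zmod_ne_zero {σ : Type*} [Finite σ] {p d : ℕ} (hp : p.Prime)
    {G : MvPolynomial σ ℤ} (hG0 : G ≠ 0) (hG : G.IsHomogeneous d) :
    ∃ G' : MvPolynomial σ ℤ, G'.IsHomogeneous d ∧ (∀ x, eval x G = 0 → eval x G' = 0) ∧
      map (Int.castRingHom (ZMod p)) G' ≠ 0 := by
  have hp0 : (p : ℤ) ≠ 0 := mod_cast hp.ne_zero
  have hp_unit : ¬ IsUnit (C (p : ℤ) : MvPolynomial σ ℤ) := fun h =>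
    hp.prime.not_isUnit (by simpa [Int.isUnit_iff_natAbs_eq] using h.map (constantCoeff))
  obtain ⟨G', hGG', hndvd⟩ :=
    (FiniteMultiplicity.of_not_isUnit hp_unit hG0).exists_eq_pow_mul_and_not_dvd
  set k := multiplicity (C (p : ℤ)) G
  have hpk : (p : ℤ) ^ k ≠ 0 := pow_ne_zero _ hp0
  rw [← map_pow] at hGG'
  refine ⟨G', fun m hm => hG ?_, fun x hx => ?_, fun h => hndvd ((C_dvd_iff_zmod p G').2 h)⟩
  · rw [hGG', coeff_C_mul]
    exact mul_ne_zero hpk hm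
  · rw [hGG', map_mul, eval_C] at hx
    exact (mul_eq_zero.1 hx).resolve_left hpk

lemma card_zeros_projectivization_le {k : Type*} [Field k] [Fintype k] {n d : ℕ}
    {f : MvPolynomial (Fin (n + 2)) k} (hf0 : f ≠ 0) (hf : f.IsHomogeneous d)
    {Z : Finset (Projectivization k (Fin (n + 2) → k))} (hZ : ∀ l ∈ Z, eval l.rep f = 0) :
    #Z ≤ 2 * d * Fintype.card k ^ n := by
  classical
  set q := Fintype.card k with hq
  have hq1 : 1 < q := Fintype.one_lt_card
  set W := {g ∈ Fintype.piFinset fun _ : Fin (n + 2) => (univ : Finset k) | eval g f = 0} with hW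
  have hcard_W : #W ≤ d * q ^ (n + 1) := by
    have hsz := schwartz_zippel_totalDegree hf0 (univ : Finset k)
    have hq0 : (0 : ℚ≥0) < q := mod_cast hq1.pos
    rw [card_univ, ← hq, div_le_div_iff₀ (by positivity) hq0, pow_succ, ← mul_assoc] at hsz
    have hsz' := le_of_mul_le_mul_right hsz hq0
    refine (by exact_mod_cast hsz' : #W ≤ f.totalDegree * q ^ (n + 1)).trans ?_
    exact Nat.mul_le_mul_right _ hf.totalDegree_le
  have hcard_Z : #Z * (q - 1) ≤ #W := by
    rw [hq, ← Fintype.card_units, ← card_univ, ← card_product]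
    refine card_le_card_of_injOn (fun a => (a.2 : k) • a.1.rep) (fun a ha => ?_) ?_
    · simp only [hW, coe_filter, Fintype.mem_piFinset, mem_univ, implies_true, true_and,
        Set.mem_ofPred_eq]
      rw [eval_smul_of_isHomogeneous _ _ hf, hZ _ (mem_product.1 ha).1, mul_zero]
    · rintro ⟨l, u⟩ - ⟨l', u'⟩ - (h : (u : k) • l.rep = (u' : k) • l'.rep)
      obtain rfl : l = l' := by
        rw [← l.mk_rep, ← l'.mk_rep, Projectivization.mk_eq_mk_iff]
        exact ⟨u⁻¹ * u', by rw [mul_smul, Units.smul_def u', ← h, ← Units.smul_def, inv_smul_smul]⟩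
      rw [Units.ext (smul_left_injective k l.rep_nonzero h)]
  refine Nat.le_of_mul_le_mul_right ?_ (Nat.sub_pos_of_lt hq1)
  calc #Z * (q - 1) ≤ d * q ^ n * q := by rw [mul_assoc, ← pow_succ]; exact hcard_Z.trans hcard_W
    _ ≤ d * q ^ n * (2 * (q - 1)) := Nat.mul_le_mul_left _ (by omega)
    _ = 2 * d * q ^ n * (q - 1) := by ring

variable {K : Type*} [CommRing K] {n d b p : ℕ}

/-- The primitive integer points of sup norm at most `b` on the hypersurface `F = 0`. -/
def primitiveZeros (F : MvPolynomial (Fin n) K) (b : ℕ) : Set (Fin n → ℤ) :=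
  {x ∈ boxZeros F b | IsPrimitiveVec x}

lemma intCast_zmod_ne_zero_of_isPrimitiveVec (hp : p.Prime) {x : Fin n → ℤ}
    (hx : IsPrimitiveVec x) : (fun k => (x k : ZMod p)) ≠ 0 := fun h0 => by
  have hdvd : (p : ℤ) ∣ univ.gcd x := dvd_gcd fun k _ =>
    (ZMod.intCast_zmod_eq_zero_iff_dvd _ _).1 (congrFun h0 k)
  rw [hx] at hdvd
  exact (Nat.prime_iff_prime_int.1 hp).not_dvd_one hdvd

lemma projCongr_of_mk_eq_mk [Fact p.Prime] {x y : Fin n → ℤ} {hx : (fun k => (x k : ZMod p)) ≠ 0}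
    {hy : (fun k => (y k : ZMod p)) ≠ 0}
    (h : Projectivization.mk (ZMod p) _ hx = Projectivization.mk (ZMod p) _ hy) :
    ProjCongr p x y := by
  obtain ⟨a, ha⟩ := (Projectivization.mk_eq_mk_iff _ _ _ hy hx).1 h.symm
  have ha_cast : (((a : ZMod p).val : ℤ) : ZMod p) = a := by simp
  refine ⟨(a : ZMod p).val, ?_, fun k => ?_⟩
  · rw [← ZMod.intCast_zmod_eq_zero_iff_dvd, ha_cast]
    exact a.ne_zero
  · rw [← ZMod.intCast_zmod_eq_zero_iff_dvd, Int.cast_sub, Int.cast_mul, ha_cast, sub_eq_zero]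
    exact (congrFun ha k).symm

lemma exists_zmod_form [Algebra ℚ K] [IsDomain K] {F : MvPolynomial (Fin n) K} (hb : 1 ≤ b)
    (hF0 : F ≠ 0) (hF : F.IsHomogeneous d) (hp : p.Prime) :
    ∃ f : MvPolynomial (Fin n) (ZMod p), f ≠ 0 ∧ f.IsHomogeneous d ∧
      ∀ x ∈ boxZeros F b, eval (fun k => (x k : ZMod p)) f = 0 := by
  have : CharZero K := algebraRat.charZero K
  obtain ⟨z, -, hFz⟩ := exists_natCast_eval_ne_zero hF0 hF.totalDegree_le
  obtain ⟨G₀, hG₀, hG₀_zero, hG₀z, -⟩ :=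
    exists_integral_form (z := fun k => z k) hb hF (by simpa using hFz)
  have hG₀0 : G₀ ≠ 0 := fun h => hG₀z (by rw [h, map_zero])
  obtain ⟨G, hG, hG_zero, hG0⟩ := exists_isHomogeneous_map_zmod_ne_zero hp hG₀0 hG₀
  refine ⟨_, hG0, hG.map _, fun x hx => ?_⟩
  have hcast : eval (fun k => (x k : ZMod p)) (map (Int.castRingHom (ZMod p)) G) =
      (eval x G : ℤ) := by
    rw [eval_map]
    exact (eval₂_comp (Int.castRingHom (ZMod p)) x G).symm
  rw [hcast, hG_zero x (hG₀_zero x hx), Int.cast_zero]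

lemma exists_label [Algebra ℚ K] [IsDomain K] {F : MvPolynomial (Fin (n + 2)) K} (hb : 1 ≤ b)
    (hF0 : F ≠ 0) (hF : F.IsHomogeneous d) (hp : p.Prime) :
    ∃ c : (Fin (n + 2) → ℤ) → ℕ, (∀ x ∈ primitiveZeros F b, c x < 2 * d * p ^ n) ∧
      ∀ x ∈ primitiveZeros F b, ∀ y ∈ primitiveZeros F b, c x = c y → ProjCongr p x y := by
  classical
  have : Fact p.Prime := ⟨hp⟩
  have : Fintype (Projectivization (ZMod p) (Fin (n + 2) → ZMod p)) := Fintype.ofFinite _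
  obtain ⟨f, hf0, hf, hf_zero⟩ := exists_zmod_form hb hF0 hF hp
  let Z : Finset (Projectivization (ZMod p) (Fin (n + 2) → ZMod p)) := {l | eval l.rep f = 0}
  have hZ : #Z ≤ 2 * d * p ^ n := by
    have := card_zeros_projectivization_le hf0 hf (Z := Z) fun l hl => (mem_filter.1 hl).2
    rwa [ZMod.card] at this
  have hne := fun x : primitiveZeros F b => intCast_zmod_ne_zero_of_isPrimitiveVec hp x.2.2
  have hmem : ∀ x : primitiveZeros F b, Projectivization.mk (ZMod p) _ (hne x) ∈ Z := fun x => by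
    obtain ⟨a, ha⟩ := Projectivization.exists_smul_eq_mk_rep (ZMod p) _ (hne x)
    rw [mem_filter, ← ha, Units.smul_def, eval_smul_of_isHomogeneous _ _ hf, hf_zero _ x.2.1,
      mul_zero]
    exact ⟨mem_univ _, rfl⟩
  let c := Function.extend Subtype.val (fun x => (Z.equivFin ⟨_, hmem x⟩ : ℕ)) 0
  have hc : ∀ x : primitiveZeros F b, c x = Z.equivFin ⟨_, hmem x⟩ :=
    Subtype.val_injective.extend_apply _ _
  refine ⟨c, fun x hx => ?_, fun x hx y hy h => ?_⟩
  · rw [hc ⟨x, hx⟩]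
    exact (Fin.is_lt _).trans_le hZ
  · rw [hc ⟨x, hx⟩, hc ⟨y, hy⟩] at h
    exact projCongr_of_mk_eq_mk (Subtype.ext_iff.1 (Z.equivFin.injective (Fin.ext h)))

end PointsModPrime

section PrimePool

lemma exists_card_eq_forall_prime {P : ℕ} (hP : 1 ≤ P) (k : ℕ) :
    ∃ Q : Finset ℕ, #Q = k ∧ ∀ p ∈ Q, p.Prime ∧ P < p ∧ p ≤ 2 ^ k * P := by
  induction k with
  | zero => exact ⟨∅, rfl, fun p hp => absurd hp (notMem_empty p)⟩
  | succ k ih =>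
    obtain ⟨Q, hQ, hQp⟩ := ih
    obtain ⟨p, hp, hlt, hle⟩ := Nat.exists_prime_lt_and_le_two_mul (2 ^ k * P) (by positivity)
    have hpQ : p ∉ Q := fun h => hlt.not_ge (hQp p h).2.2
    refine ⟨insert p Q, by rw [card_insert_of_notMem hpQ, hQ],
      forall_mem_insert _ _ _ |>.2 ⟨⟨hp, ?_, by rwa [pow_succ', mul_assoc]⟩, fun q hq => ?_⟩⟩
    · exact (Nat.le_mul_of_pos_left P (by positivity)).trans_lt hlt
    · obtain ⟨hq_prime, hPq, hq_le⟩ := hQp q hq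
      exact ⟨hq_prime, hPq, hq_le.trans (Nat.mul_le_mul_right _ (Nat.pow_le_pow_right two_pos
        (Nat.le_succ k)))⟩

lemma card_filter_dvd_le {P k : ℕ} (hP : 2 ≤ P) {Q : Finset ℕ} (hQ : ∀ p ∈ Q, p.Prime ∧ P < p)
    {D : ℤ} (hD0 : D ≠ 0) (hD : |D| ≤ (P ^ k : ℕ)) :
    #(Q.filter fun p : ℕ => (p : ℤ) ∣ D) ≤ k := by
  set S := Q.filter fun p : ℕ => (p : ℤ) ∣ D
  have hdvd : ∏ p ∈ S, p ∣ D.natAbs :=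
    prod_primes_dvd _ (fun p hp => (hQ p (mem_filter.1 hp).1).1.prime)
      fun p hp => Int.natCast_dvd.1 (mem_filter.1 hp).2
  rw [Int.abs_eq_natAbs, Nat.cast_le] at hD
  refine (Nat.pow_le_pow_iff_right hP).1 ?_
  calc P ^ #S ≤ ∏ p ∈ S, p := pow_card_le_prod _ _ _ fun p hp => (hQ p (mem_filter.1 hp).1).2.le
    _ ≤ D.natAbs := Nat.le_of_dvd (Int.natAbs_pos.2 hD0) hdvd
    _ ≤ P ^ k := hD

lemma exists_lt_pow_le {r c : ℕ} (hr : r ≠ 0) (hc : 1 ≤ c) :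
    ∃ P, 2 ≤ P ∧ c < P ^ r ∧ P ^ r ≤ 2 ^ r * c := by
  have hex : ∃ P, c < P ^ r := ⟨c + 1, (Nat.lt_succ_self c).trans_le (Nat.le_self_pow hr _)⟩
  set P := Nat.find hex
  have hP : c < P ^ r := Nat.find_spec hex
  have hP2 : 2 ≤ P := by
    by_contra! hlt
    have := Nat.pow_le_pow_left (Nat.le_of_lt_succ hlt) r
    rw [one_pow] at this
    omega
  refine ⟨P, hP2, hP, ?_⟩
  calc P ^ r ≤ (2 * (P - 1)) ^ r := Nat.pow_le_pow_left (by omega) r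
    _ = 2 ^ r * (P - 1) ^ r := mul_pow _ _ _
    _ ≤ 2 ^ r * c := Nat.mul_le_mul_left _ (not_lt.1 (Nat.find_min hex (by omega)))

end PrimePool

section Cover

variable {α : Type*} (X : Set α) (c : ℕ → α → ℕ) (T : Finset ℕ)

/-- The points of `X` with the same labels as `x` at all `p ∈ T`. The labels `c p` are to separate
the classes modulo `p`. -/
def labelClass (x : α) : Set α :=
  {y ∈ X | ∀ p ∈ T, c p y = c p x}

open Classical in
/-- The sets cut out in `X` by prescribing labels less than `N` at all `p ∈ T`. -/
def labelClasses (N : ℕ) : Finset (Set α) :=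
  (Fintype.piFinset fun _ : T => range N).image fun u => {y ∈ X | ∀ p : T, c p y = u p}

variable {X c T}

lemma labelClass_anti {S : Finset ℕ} (h : S ⊆ T) (x : α) :
    labelClass X c T x ⊆ labelClass X c S x :=
  fun _ hy => ⟨hy.1, fun p hp => hy.2 p (h hp)⟩

lemma card_labelClasses_le (N : ℕ) : #(labelClasses X c T N) ≤ N ^ #T := by
  refine card_image_le.trans_eq ?_
  rw [Fintype.card_piFinset, prod_const, card_range, card_univ, Fintype.card_coe]

lemma labelClass_mem_labelClasses {N : ℕ} {x : α} (hx : ∀ p ∈ T, c p x < N) :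
    labelClass X c T x ∈ labelClasses X c T N :=
  mem_image.2 ⟨fun p => c p x, Fintype.mem_piFinset.2 fun p => mem_range.2 (hx p p.2),
    by simp only [labelClass, Subtype.forall]⟩

/-- The points of `D` are congruent to each other, as points of projective space, modulo primes with
product at least `b`. -/
def Clustered {κ : Type*} (b : ℕ) (D : Set (κ → ℤ)) : Prop :=
  ∃ T : Finset ℕ, (∀ p ∈ T, p.Prime) ∧ b ≤ ∏ p ∈ T, p ∧
    ∀ p ∈ T, ∀ x ∈ D, ∀ y ∈ D, ProjCongr p x y

variable {K : Type*} [CommRing K] [Algebra ℚ K] {n d b H r s k P N : ℕ}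

namespace Refinement

variable {F : MvPolynomial (Fin n) K} {X : Set (Fin n → ℤ)} {c : ℕ → (Fin n → ℤ) → ℕ}
  {Q : Finset ℕ}

lemma exists_subset_descendant (R : Refinement F b d H) (hX : X ⊆ boxZeros F b)
    (hcongr : ∀ p ∈ Q, ∀ x ∈ X, ∀ y ∈ X, c p x = c p y → ProjCongr p x y)
    (hQ : ∀ p ∈ Q, p.Prime ∧ P < p) (hP : 2 ≤ P) (hH : H ≤ P ^ k) (hPr : n.factorial * b < P ^ r)
    (hQcard : (r + 2 * s) * (n * k + 2) ≤ #Q) (hs : (r + 2 * s) * (n + 1) ^ n < s * s)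
    {x : Fin n → ℤ} (hx : x ∈ X) (hx0 : x ≠ 0) :
    ∃ T ⊆ Q, #T ≤ r + 2 * s ∧ n.factorial * b < ∏ p ∈ T, p ∧
      ∃ D ∈ R.descendants n (labelClass X c T x), x ∈ D ∧ D ⊆ labelClass X c T x ∧
        VanishesOn F (ratSpan D) := by
  rw [two_mul, ← add_assoc] at hQcard hs ⊢
  have hmono := fun (S T : Finset ℕ) (hST : S ⊆ T) => R.rankCode_le_and_badPrimes_eq x Q n
    (labelClass_anti (X := X) (c := c) hST x)
  obtain ⟨T, hTQ, hT_ge, hT_le, hT_bad⟩ := exists_subset_card_inter_le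
    (Φ := fun S => R.rankCode x n (labelClass X c S x))
    (bad := fun S => R.badPrimes x Q n (labelClass X c S x))
    (fun S T hST => (hmono S T hST).1) (fun S => (R.rankCode_lt x n _).le)
    (fun S => R.card_badPrimes_le x Q (fun M => card_filter_dvd_le hP hQ (R.lead_ne_zero M x)
      ((R.abs_lead_le M x (hX hx)).trans (Nat.cast_le.2 hH))) n _)
    (fun S T hST => (hmono S T hST).2) hQcard hs
  set good := T \ R.badPrimes x Q n (labelClass X c T x)
  have hT : ∀ p ∈ T, p.Prime := fun p hp => (hQ p (hTQ hp)).1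
  have hgood_card : r ≤ #good := by
    have : #good + #(T ∩ R.badPrimes x Q n (labelClass X c T x)) = #T :=
      card_sdiff_add_card_inter _ _
    omega
  have hgood : n.factorial * b < ∏ p ∈ good, p :=
    calc n.factorial * b < P ^ r := hPr
      _ ≤ P ^ #good := Nat.pow_le_pow_right (by omega) hgood_card
      _ ≤ ∏ p ∈ good, p := pow_card_le_prod _ _ _ fun p hp => (hQ p (hTQ (mem_sdiff.1 hp).1)).2.le
  refine ⟨T, hTQ, hT_le, hgood.trans_le (prod_le_prod_of_subset_of_one_le' sdiff_subset
    fun p hp _ => (hT p hp).one_le), ?_⟩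
  exact R.exists_descendant_vanishesOn hTQ hT hx0 n (fun y hy => hX hy.1) ⟨hx, fun _ _ => rfl⟩
    (fun p hp y hy => hcongr p (hTQ hp) x hx y hy.1 (hy.2 p hp).symm) (finrank_submodule_le _) hgood

lemma exists_cover (R : Refinement F b d H) (hX : X ⊆ boxZeros F b) (hX0 : ∀ x ∈ X, x ≠ 0)
    (hN : 1 ≤ N) (hcN : ∀ p ∈ Q, ∀ x ∈ X, c p x < N)
    (hcongr : ∀ p ∈ Q, ∀ x ∈ X, ∀ y ∈ X, c p x = c p y → ProjCongr p x y)
    (hQ : ∀ p ∈ Q, p.Prime ∧ P < p) (hP : 2 ≤ P) (hH : H ≤ P ^ k) (hPr : n.factorial * b < P ^ r)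
    (hQcard : (r + 2 * s) * (n * k + 2) ≤ #Q) (hs : (r + 2 * s) * (n + 1) ^ n < s * s) :
    ∃ 𝒟 : Finset (Set (Fin n → ℤ)), #𝒟 ≤ 2 ^ #Q * (N ^ (r + 2 * s) * (d + 2) ^ n) ∧
      (∀ x ∈ X, ∃ D ∈ 𝒟, x ∈ D) ∧
      ∀ D ∈ 𝒟, D ⊆ X ∧ D.Nonempty ∧ Clustered b D ∧ VanishesOn F (ratSpan D) := by
  classical
  let all : Finset (Set (Fin n → ℤ)) := {T ∈ Q.powerset | #T ≤ r + 2 * s}.biUnion fun T =>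
    (labelClasses X c T N).biUnion (R.descendants n)
  have hall : #all ≤ 2 ^ #Q * (N ^ (r + 2 * s) * (d + 2) ^ n) := by
    rw [← card_powerset]
    refine (card_biUnion_le_card_mul _ _ (N ^ (r + 2 * s) * (d + 2) ^ n) fun T hT => ?_).trans
      (Nat.mul_le_mul_right _ (card_filter_le _ _))
    refine (card_biUnion_le_card_mul _ _ _ fun C _ => R.card_descendants_le n C).trans ?_
    exact Nat.mul_le_mul_right _ ((card_labelClasses_le N).trans
      (Nat.pow_le_pow_right hN (mem_filter.1 hT).2))
  refine ⟨{D ∈ all | D ⊆ X ∧ D.Nonempty ∧ Clustered b D ∧ VanishesOn F (ratSpan D)},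
    (card_filter_le _ _).trans hall, fun x hx => ?_, fun D hD => (mem_filter.1 hD).2⟩
  obtain ⟨T, hTQ, hT_card, hT_prod, D, hD, hxD, hD_class, hDF⟩ :=
    R.exists_subset_descendant hX hcongr hQ hP hH hPr hQcard hs hx (hX0 x hx)
  have hDX : D ⊆ X := fun y hy => (hD_class hy).1
  have hb_le : b ≤ ∏ p ∈ T, p :=
    (Nat.le_mul_of_pos_left b n.factorial_pos).trans hT_prod.le
  refine ⟨D, mem_filter.2 ⟨mem_biUnion.2 ⟨T, mem_filter.2 ⟨mem_powerset.2 hTQ, hT_card⟩,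
    mem_biUnion.2 ⟨_, labelClass_mem_labelClasses fun p hp => hcN p (hTQ hp) x hx, hD⟩⟩,
    hDX, ⟨x, hxD⟩, ⟨T, fun p hp => (hQ p (hTQ hp)).1, hb_le, fun p hp y hy z hz => ?_⟩, hDF⟩, hxD⟩
  exact hcongr p (hTQ hp) y (hDX hy) z (hDX hz)
    (((hD_class hy).2 p hp).trans ((hD_class hz).2 p hp).symm)

end Refinement

end Cover

section PlaneCover

open MvPolynomial Module

variable {K : Type*} [CommRing K] [IsDomain K] [Algebra ℚ K] {n : ℕ}

lemma ne_zero_of_isPrimitiveVec {x : Fin n → ℤ} (hx : IsPrimitiveVec x) : x ≠ 0 := fun h0 =>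
  one_ne_zero (hx.symm.trans (gcd_eq_zero_iff.2 fun i _ => congrFun h0 i))

/-- A cover of the primitive zeros of `F` of norm at most `b` by sets that are congruent modulo many
primes and span rational linear subspaces of the hypersurface `F = 0`. -/
structure IsClusterCover (F : MvPolynomial (Fin n) K) (b : ℕ) (𝒟 : Finset (Set (Fin n → ℤ))) :
    Prop where
  exists_mem : ∀ x ∈ primitiveZeros F b, ∃ D ∈ 𝒟, x ∈ D
  subset : ∀ D ∈ 𝒟, D ⊆ primitiveZeros F b
  nonempty : ∀ D ∈ 𝒟, D.Nonempty
  clustered : ∀ D ∈ 𝒟, Clustered b D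
  vanishesOn : ∀ D ∈ 𝒟, VanishesOn F (ratSpan D)

lemma exists_isClusterCover_of_lt_pow {d r s : ℕ} (hs : (r + 2 * s) * (n + 3) ^ (n + 2) < s * s) :
    ∃ C : ℕ, ∀ F : MvPolynomial (Fin (n + 2)) K, F ≠ 0 → F.IsHomogeneous d → ∀ b, 1 ≤ b → ∀ P,
      2 ≤ P → (n + 2).factorial * b < P ^ r →
        ∃ 𝒟, IsClusterCover F b 𝒟 ∧ #𝒟 ≤ C * P ^ (n * (r + 2 * s)) := by
  set k := leadConst (n + 2) d + r * leadExp (n + 2) d with hk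
  set m := (r + 2 * s) * ((n + 2) * k + 2)
  refine ⟨2 ^ m * (((2 * d + 1) * (2 ^ m) ^ n) ^ (r + 2 * s) * (d + 2) ^ (n + 2)),
    fun F hF0 hF b hb P hP hPr => ?_⟩
  obtain ⟨Q, hQcard, hQ⟩ := exists_card_eq_forall_prime (one_le_two.trans hP) m
  have hlabel : ∀ p, ∃ c : (Fin (n + 2) → ℤ) → ℕ, p ∈ Q →
      (∀ x ∈ primitiveZeros F b, c x < 2 * d * p ^ n) ∧
      ∀ x ∈ primitiveZeros F b, ∀ y ∈ primitiveZeros F b, c x = c y → ProjCongr p x y := by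
    intro p
    by_cases hp : p ∈ Q
    · obtain ⟨c, hc⟩ := exists_label hb hF0 hF (hQ p hp).1
      exact ⟨c, fun _ => hc⟩
    · exact ⟨0, fun h => absurd h hp⟩
  choose c hc using hlabel
  obtain ⟨R⟩ := nonempty_refinement hb hF
  have hb_le : b ≤ P ^ r := (Nat.le_mul_of_pos_left b (Nat.factorial_pos _)).trans hPr.le
  have hH : leadConst (n + 2) d * b ^ leadExp (n + 2) d ≤ P ^ k := by
    rw [hk, pow_add, pow_mul]
    exact Nat.mul_le_mul (Nat.lt_pow_self hP).le (Nat.pow_le_pow_left hb_le _)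
  obtain ⟨𝒟, hcard, hcover, h𝒟⟩ := R.exists_cover (X := primitiveZeros F b)
    (N := (2 * d + 1) * (2 ^ m * P) ^ n) (fun x hx => hx.1)
    (fun x hx => ne_zero_of_isPrimitiveVec hx.2) (Nat.succ_le_of_lt (by positivity))
    (fun p hp x hx => ((hc p hp).1 x hx).trans_le (Nat.mul_le_mul (Nat.le_succ _)
      (Nat.pow_le_pow_left (hQ p hp).2.2 n)))
    (fun p hp => (hc p hp).2) (fun p hp => ⟨(hQ p hp).1, (hQ p hp).2.1⟩) hP hH hPr hQcard.ge hs
  refine ⟨𝒟, ⟨hcover, fun D hD => (h𝒟 D hD).1, fun D hD => (h𝒟 D hD).2.1,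
    fun D hD => (h𝒟 D hD).2.2.1, fun D hD => (h𝒟 D hD).2.2.2⟩, hcard.trans_eq ?_⟩
  rw [hQcard, mul_pow _ P, ← mul_assoc (2 * d + 1), mul_pow _ (P ^ n), ← pow_mul P]
  ring

lemma pow_le_rpow {n s t P : ℕ} {ε A : ℝ} (ht : t ≠ 0) (hε : 2 * n ≤ ε * t) (hA : 1 ≤ A)
    (hP : (P : ℝ) ^ (s * t) ≤ A) : (P : ℝ) ^ (n * (s * t + 2 * s)) ≤ A ^ (n + ε) := by
  have ht0 : (0 : ℝ) < t := by positivity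
  have hexp : (P : ℝ) ^ (n * (s * t + 2 * s)) = ((P : ℝ) ^ (s * t)) ^ (n + 2 * n / t : ℝ) := by
    rw [← Real.rpow_natCast, ← Real.rpow_natCast, ← Real.rpow_mul P.cast_nonneg]
    congr 1
    push_cast
    field_simp
  calc (P : ℝ) ^ (n * (s * t + 2 * s)) = ((P : ℝ) ^ (s * t)) ^ (n + 2 * n / t : ℝ) := hexp
    _ ≤ A ^ (n + 2 * n / t : ℝ) := Real.rpow_le_rpow (by positivity) hP (by positivity)
    _ ≤ A ^ (n + ε) := Real.rpow_le_rpow_of_exponent_le hA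
        (add_le_add_right ((div_le_iff₀ ht0).2 hε) _)

theorem exists_isClusterCover (n d : ℕ) {ε : ℝ} (hε : 0 < ε) :
    ∃ C : ℝ, 0 < C ∧ ∀ F : MvPolynomial (Fin (n + 2)) K, F ≠ 0 → F.IsHomogeneous d → ∀ b : ℕ,
      1 ≤ b → ∃ 𝒟, IsClusterCover F b 𝒟 ∧ (#𝒟 : ℝ) ≤ C * (b : ℝ) ^ (n + ε) := by
  set t := ⌈2 * n / ε⌉₊ + 1
  have hεt : 2 * n ≤ ε * t := by
    rw [← div_le_iff₀' hε]
    exact (Nat.le_ceil _).trans (Nat.cast_le.2 (Nat.le_succ _))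
  set s := (t + 2) * (n + 3) ^ (n + 2) + 1
  have hs : (s * t + 2 * s) * (n + 3) ^ (n + 2) < s * s :=
    calc (s * t + 2 * s) * (n + 3) ^ (n + 2) = s * ((t + 2) * (n + 3) ^ (n + 2)) := by ring
      _ < s * s := Nat.mul_lt_mul_of_pos_left (Nat.lt_succ_self _) (Nat.succ_pos _)
  obtain ⟨C, hC⟩ := exists_isClusterCover_of_lt_pow (K := K) (d := d) hs
  set c : ℝ := 2 ^ (s * t) * (n + 2).factorial
  have hc : 1 ≤ c := one_le_mul_of_one_le_of_one_le (one_le_pow₀ one_le_two)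
    (mod_cast Nat.factorial_pos _)
  refine ⟨(C + 1) * c ^ (n + ε), by positivity, fun F hF0 hF b hb => ?_⟩
  obtain ⟨P, hP2, hP_lt, hP_le⟩ := exists_lt_pow_le (r := s * t)
    (Nat.mul_ne_zero (Nat.succ_ne_zero _) (Nat.succ_ne_zero _))
    (Nat.mul_pos (n + 2).factorial_pos hb)
  obtain ⟨𝒟, h𝒟, hcard⟩ := hC F hF0 hF b hb P hP2 hP_lt
  have hb1 : (1 : ℝ) ≤ b := mod_cast hb
  have hP_pow : (P : ℝ) ^ (n * (s * t + 2 * s)) ≤ (c * b) ^ (n + ε) :=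
    pow_le_rpow (Nat.succ_ne_zero _) hεt (one_le_mul_of_one_le_of_one_le hc hb1)
      (by rw [mul_assoc]; exact_mod_cast hP_le)
  refine ⟨𝒟, h𝒟, ?_⟩
  calc (#𝒟 : ℝ) ≤ C * (P : ℝ) ^ (n * (s * t + 2 * s)) := mod_cast hcard
    _ ≤ (C + 1) * (c * b) ^ (n + ε) := by gcongr; exact (lt_add_one _).le
    _ = (C + 1) * c ^ (n + ε) * (b : ℝ) ^ (n + ε) := by
        rw [Real.mul_rpow (by positivity) (by positivity), mul_assoc]

lemma VanishesOn.finrank_lt {F : MvPolynomial (Fin n) K} (hF0 : F ≠ 0)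
    {M : Submodule ℚ (Fin n → ℚ)} (hM : VanishesOn F M) : finrank ℚ M < n := by
  have : CharZero K := algebraRat.charZero K
  obtain ⟨z, -, hz⟩ := exists_natCast_eval_ne_zero hF0 le_rfl
  have hM_ne : M ≠ ⊤ := fun htop => hz (by
    simpa using hM (fun k => (z k : ℚ)) (htop ▸ Submodule.mem_top))
  simpa using Submodule.finrank_lt hM_ne

lemma IsClusterCover.exists_basis {F : MvPolynomial (Fin (n + 1)) K} (hF0 : F ≠ 0) {b : ℕ}
    {𝒟 : Finset (Set (Fin (n + 1) → ℤ))} (h𝒟 : IsClusterCover F b 𝒟)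
    {D : Set (Fin (n + 1) → ℤ)} (hD : D ∈ 𝒟) :
    ∃ v : Σ m : ℕ, Fin (m + 1) → Fin (n + 1) → ℤ,
      LinearIndependent ℚ (fun i => coeQ (v.2 i)) ∧ v.1 + 1 ≤ n ∧
      Submodule.span ℚ (Set.range fun i => coeQ (v.2 i)) = ratSpan D ∧
      pluckerHeight v.2 ≤ (n + 1).factorial * b := by
  obtain ⟨x, hx⟩ := h𝒟.nonempty D hD
  obtain ⟨T, hT, hbT, hcongr⟩ := h𝒟.clustered D hD
  obtain ⟨m, v, -, hvD, hv, hspan⟩ := exists_linearIndependent_span_eq_ratSpan hx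
    (ne_zero_of_isPrimitiveVec (h𝒟.subset D hD hx).2)
  have hm : m + 1 ≤ n := by
    have hrank := finrank_span_eq_card hv
    rw [hspan, Fintype.card_fin] at hrank
    exact Nat.le_of_lt_succ (hrank ▸ (h𝒟.vanishesOn D hD).finrank_lt hF0)
  refine ⟨⟨m, v⟩, hv, hm, hspan, (pluckerHeight_le hv
    (fun i => (h𝒟.subset D hD (hvD i)).1.1) hT
    (fun p hp i => hcongr p hp _ (hvD 0) _ (hvD i)) hbT).trans ?_⟩
  exact Nat.mul_le_mul_right b (Nat.factorial_le (by omega))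

end PlaneCover

section LinearCover

lemma abs_le_floor_of_heightVec_le {n : ℕ} {x : Fin n → ℤ} {B : ℝ} (hx : heightVec x ≤ B)
    (i : Fin n) : |x i| ≤ ⌊B⌋₊ := by
  rw [Int.abs_eq_natAbs]
  exact_mod_cast (le_sup (f := fun i => (x i).natAbs) (mem_univ i)).trans (Nat.le_floor hx)

lemma finite_setOf_heightVec_le (n : ℕ) (B : ℝ) : {x : Fin n → ℤ | heightVec x ≤ B}.Finite :=
  (Set.Finite.pi' fun _ => Set.finite_Icc (-(⌊B⌋₊ : ℤ)) ⌊B⌋₊).subset fun _ hx i =>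
    abs_le.1 (abs_le_floor_of_heightVec_le hx i)

variable {K : Type*} [CommRing K] [Algebra ℚ K]

lemma IsClusterCover.ncard_le_sum {n : ℕ} {F : MvPolynomial (Fin n) K} {B : ℝ}
    {𝒟 : Finset (Set (Fin n → ℤ))} (h𝒟 : IsClusterCover F ⌊B⌋₊ 𝒟) :
    Set.ncard {x : Fin n → ℤ | IsPrimitiveVec x ∧ heightVec x ≤ B ∧
        MvPolynomial.eval (fun i => (x i : K)) F = 0} ≤
      ∑ D : 𝒟, Set.ncard {x : Fin n → ℤ | IsPrimitiveVec x ∧ heightVec x ≤ B ∧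
        coeQ x ∈ ratSpan (D : Set (Fin n → ℤ))} := by
  refine (Set.ncard_le_ncard (fun x hx => ?_) (Set.finite_iUnion fun D : 𝒟 =>
    (finite_setOf_heightVec_le n B).subset fun x hx => hx.2.1)).trans
    (Set.ncard_iUnion_le_of_fintype _)
  obtain ⟨D, hD, hxD⟩ := h𝒟.exists_mem x
    ⟨⟨abs_le_floor_of_heightVec_le hx.2.1, hx.2.2⟩, hx.1⟩
  exact Set.mem_iUnion.2 ⟨⟨D, hD⟩, hx.1, hx.2.1, coeQ_mem_ratSpan hxD⟩

theorem statement6_general [IsDomain K] (d n : ℕ) (hn : 1 ≤ n) (ε : ℝ) (hε : 0 < ε) :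
    ∃ C : ℝ, 0 < C ∧ ∀ F : MvPolynomial (Fin (n + 1)) K,
      F.IsHomogeneous d → F ≠ 0 → ∀ B : ℝ, 1 ≤ B →
      ∃ (J : ℕ) (M : Fin J → Σ m : ℕ, Fin (m + 1) → Fin (n + 1) → ℤ),
        (J : ℝ) ≤ C * B ^ ((n : ℝ) - 1 + ε) ∧
        (∀ j, LinearIndependent ℚ (fun i => coeQ ((M j).2 i))) ∧
        (∀ j, (M j).1 + 1 ≤ n) ∧
        (∀ j, ∀ z : Fin (n + 1) → ℚ,
          z ∈ Submodule.span ℚ (Set.range fun i => coeQ ((M j).2 i)) →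
          MvPolynomial.eval (fun i => algebraMap ℚ K (z i)) F = 0) ∧
        (Set.ncard {x : Fin (n + 1) → ℤ | IsPrimitiveVec x ∧ heightVec x ≤ B ∧
            MvPolynomial.eval (fun i => (x i : K)) F = 0} ≤
          ∑ j, Set.ncard {x : Fin (n + 1) → ℤ | IsPrimitiveVec x ∧ heightVec x ≤ B ∧
            coeQ x ∈ Submodule.span ℚ (Set.range fun i => coeQ ((M j).2 i))}) ∧
        (∀ j, (pluckerHeight (M j).2 : ℝ) ≤ C * B) := by
  obtain ⟨n, rfl⟩ := Nat.exists_eq_add_of_le' hn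
  obtain ⟨C, hC, hcover⟩ := exists_isClusterCover (K := K) n d hε
  refine ⟨max C (n + 2).factorial, hC.trans_le (le_max_left _ _), fun F hF hF0 B hB => ?_⟩
  have hb : (⌊B⌋₊ : ℝ) ≤ B := Nat.floor_le (zero_le_one.trans hB)
  obtain ⟨𝒟, h𝒟, hcard⟩ := hcover F hF0 hF ⌊B⌋₊ (Nat.le_floor (mod_cast hB))
  choose v hv hdim hspan hheight using fun D : 𝒟 => h𝒟.exists_basis hF0 D.2
  refine ⟨#𝒟, fun j => v (𝒟.equivFin.symm j), ?_, fun j => hv _, fun j => hdim _,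
    fun j z hz => h𝒟.vanishesOn _ (𝒟.equivFin.symm j).2 z (hspan _ ▸ hz), ?_, fun j => ?_⟩
  · calc (#𝒟 : ℝ) ≤ C * (⌊B⌋₊ : ℝ) ^ (n + ε) := hcard
      _ ≤ max C (n + 2).factorial * B ^ (n + ε) := by gcongr; exact le_max_left _ _
      _ = _ := by push_cast; rw [add_sub_cancel_right]
  · simp only [hspan]
    exact h𝒟.ncard_le_sum.trans_eq (Equiv.sum_comp 𝒟.equivFin.symm _).symm
  · calc (pluckerHeight (v (𝒟.equivFin.symm j)).2 : ℝ) ≤ (n + 2).factorial * ⌊B⌋₊ :=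
          mod_cast hheight _
      _ ≤ max C (n + 2).factorial * B := by gcongr; exact le_max_right _ _

end LinearCover

/-- **Lemma 5.** Let ε > 0 and let X ⊂ Pⁿ be a geometrically integral hypersurface
of degree d, cut out by an irreducible form F of degree d over the algebraic closure
of ℚ.  Then there exist linear subspaces M₁,…,M_J ⊆ X defined over ℚ (each given by
a linearly independent family of integer spanning vectors), with
J = O_{d,ε,n}(B^{n-1+ε}) and 0 ≤ dim M_j ≤ n-1, such that
N_X(B) ≤ Σ_j N_{M_j}(B); moreover every M_j of dimension ≥ 1 has Plücker height
H(M_j) = O_{d,ε,n}(B^{1+ε}). -/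
theorem statement6 (d n : ℕ) (hn : 2 ≤ n) (ε : ℝ) (hε : 0 < ε) :
    ∃ C : ℝ, 0 < C ∧ ∀ F : MvPolynomial (Fin (n + 1)) KK,
      F.IsHomogeneous d → Irreducible F → ∀ B : ℝ, 1 ≤ B →
      ∃ (J : ℕ) (M : Fin J → Σ m : ℕ, Fin (m + 1) → Fin (n + 1) → ℤ),
        (J : ℝ) ≤ C * B ^ ((n : ℝ) - 1 + ε) ∧
        (∀ j, LinearIndependent ℚ (fun i => coeQ ((M j).2 i))) ∧
        (∀ j, (M j).1 + 1 ≤ n) ∧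
        (∀ j, ∀ z : Fin (n + 1) → ℚ,
          z ∈ Submodule.span ℚ (Set.range fun i => coeQ ((M j).2 i)) →
          MvPolynomial.eval (fun i => algebraMap ℚ KK (z i)) F = 0) ∧
        (Set.ncard {x : Fin (n + 1) → ℤ | IsPrimitiveVec x ∧ heightVec x ≤ B ∧
            MvPolynomial.eval (coeK x) F = 0} ≤
          ∑ j, Set.ncard {x : Fin (n + 1) → ℤ | IsPrimitiveVec x ∧ heightVec x ≤ B ∧
            coeQ x ∈ Submodule.span ℚ (Set.range fun i => coeQ ((M j).2 i))}) ∧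
        (∀ j, 1 ≤ (M j).1 → (pluckerHeight (M j).2 : ℝ) ≤ C * B ^ (1 + ε)) := by
  obtain ⟨C, hC, hcover⟩ := statement6_general (K := KK) d n (one_le_two.trans hn) ε hε
  refine ⟨C, hC, fun F hF hFirr B hB => ?_⟩
  obtain ⟨J, M, hJ, hM, hdim, hvanish, hcount, hheight⟩ := hcover F hF hFirr.ne_zero B hB
  exact ⟨J, M, hJ, hM, hdim, hvanish, hcount, fun j _ => (hheight j).trans
    (by gcongr; exact Real.self_le_rpow_of_one_le hB (by linarith))⟩

end
end

section
/- Let V ⊂ P^N be a geometrically integral projective variety of degree d. Then the Fano variety F_1(V) of lines contained in V satisfies dim F_1(V) ≤ 2 dim V − 2 if d = 1, and dim F_1(V) ≤ 2 dim V − 3 if d ≥ 2. -/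
noncomputable section

/-!
The dimension of an ideal `I` of a polynomial ring is measured by the growth exponent of its affine
Hilbert function. For homogeneous `I` this exponent is bounded by the lengths of chains of relevant
homogeneous primes above `I`, so the affine cone over a `δ`-dimensional variety `V` has exponent at
most `δ + 1`, and the space of `(m + 1)`-tuples of points of the cone at most `(m + 1)(δ + 1)`.

An irreducible closed family `Z` of `m`-planes in `V` is replaced by the space of its frames, which
sits inside this space of tuples. Frame spaces of irreducible families have prime ideals, so a chain
of families gives a strictly increasing chain of exponents, starting at `(m + 1)²` or more because
`GL (m + 1)` acts simply transitively on the frames of a single plane. Hence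
`dim F_m(V) ≤ (m + 1)(δ + 1) - (m + 1)² = (m + 1)(δ - m)`.

If `deg V ≥ 2`, the cone is not closed under addition. A polynomial vanishing on the cone but not at
some sum `x + y` of points of the cone then separates the tuples from the frames, so the frames form
a proper subvariety of the irreducible space of tuples, and the bound drops by one.
-/

section HilbertFunction

open MvPolynomial Module

variable {K σ : Type*} [Field K]

theorem finrank_map_add_finrank_inf_ker {A B : Type*} [AddCommGroup A] [Module K A]
    [AddCommGroup B] [Module K B] (f : A →ₗ[K] B) (M : Submodule K A) [FiniteDimensional K M] :
    finrank K (M.map f) + finrank K (M ⊓ LinearMap.ker f : Submodule K A) = finrank K M := by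
  rw [← LinearMap.finrank_range_add_finrank_ker (f.domRestrict M), LinearMap.range_domRestrict,
    LinearMap.ker_domRestrict, ← Submodule.map_comap_subtype]
  congr 1
  exact (Submodule.equivMapOfInjective _ M.subtype_injective _).finrank_eq.symm

/-- The affine Hilbert function of an ideal `I`: the dimension of the space of functions on the
zero locus of `I` that are induced by polynomials of total degree at most `t`. -/
def hilbertFunction (I : Ideal (MvPolynomial σ K)) (t : ℕ) : ℕ :=
  finrank K ((restrictTotalDegree σ K t).map (Ideal.Quotient.mkₐ K I).toLinearMap)

/-- The dimension of an ideal, measured by the growth exponent of its affine Hilbert function. -/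
def hilbertDim (I : Ideal (MvPolynomial σ K)) : ℕ :=
  sInf {n | ∃ C : ℕ, ∀ t, hilbertFunction I t ≤ C * (t + 1) ^ n}

theorem finrank_restrictDegree [Finite σ] (t : ℕ) :
    finrank K (restrictDegree σ K t) = (t + 1) ^ Nat.card σ := by
  have e : {s : σ →₀ ℕ | ∀ i, s i ≤ t} ≃ (σ → Fin (t + 1)) :=
    { toFun := fun s i => ⟨s.1 i, Nat.lt_succ_of_le (s.2 i)⟩
      invFun := fun f => ⟨Finsupp.equivFunOnFinite.symm fun i => f i,
        fun i => Nat.le_of_lt_succ (f i).2⟩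
      left_inv := fun s => by ext; simp
      right_inv := fun f => by ext; simp }
  calc finrank K (restrictDegree σ K t) = Nat.card {s : σ →₀ ℕ | ∀ i, s i ≤ t} :=
        finrank_eq_nat_card_basis (basisRestrictSupport K _)
    _ = (t + 1) ^ Nat.card σ := by simp [Nat.card_congr e, Nat.card_fun]

theorem restrictTotalDegree_mono {s t : ℕ} (h : s ≤ t) :
    restrictTotalDegree σ K s ≤ restrictTotalDegree σ K t := fun _ hp =>
  (mem_restrictTotalDegree σ _ _).2 (((mem_restrictTotalDegree σ _ _).1 hp).trans h)

variable [Finite σ] {I J : Ideal (MvPolynomial σ K)} {n : ℕ}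

theorem hilbertFunction_mono : Monotone (hilbertFunction I) := fun _ _ h =>
  Submodule.finrank_mono (Submodule.map_mono (restrictTotalDegree_mono h))

theorem hilbertFunction_le_pow (t : ℕ) : hilbertFunction I t ≤ (t + 1) ^ Nat.card σ :=
  calc hilbertFunction I t ≤ finrank K (restrictTotalDegree σ K t) := Submodule.finrank_map_le _ _
    _ ≤ finrank K (restrictDegree σ K t) :=
      Submodule.finrank_mono (restrictTotalDegree_le_restrictDegree σ K t)
    _ = (t + 1) ^ Nat.card σ := finrank_restrictDegree t

theorem hilbertFunction_eq_add (h : I ≤ J) (t : ℕ) :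
    hilbertFunction I t = hilbertFunction J t +
      finrank K ((restrictTotalDegree σ K t ⊓ J.restrictScalars K).map
        (Ideal.Quotient.mkₐ K I).toLinearMap) := by
  have hker : J.restrictScalars K = (LinearMap.ker (Ideal.Quotient.factorₐ K h).toLinearMap).comap
      (Ideal.Quotient.mkₐ K I).toLinearMap := by
    ext p
    exact Ideal.Quotient.eq_zero_iff_mem.symm
  rw [hker, hilbertFunction, ← finrank_map_add_finrank_inf_ker
    (Ideal.Quotient.factorₐ K h).toLinearMap, ← Submodule.map_comp,
    ← Submodule.map_inf_eq_map_inf_comap]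
  rfl

theorem hilbertFunction_anti (h : I ≤ J) (t : ℕ) : hilbertFunction J t ≤ hilbertFunction I t :=
  (Nat.le_add_right _ _).trans (hilbertFunction_eq_add h t).ge

theorem hilbertFunction_pos (hI : I ≠ ⊤) (t : ℕ) : 0 < hilbertFunction I t := by
  have : Nontrivial (MvPolynomial σ K ⧸ I) := Ideal.Quotient.nontrivial_iff.2 hI
  refine Submodule.one_le_finrank_iff.2 ((Submodule.ne_bot_iff _).2 ⟨1, ⟨1, ?_, rfl⟩, one_ne_zero⟩)
  simp [mem_restrictTotalDegree]

theorem hilbertDim_le_iff :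
    hilbertDim I ≤ n ↔ ∃ C : ℕ, ∀ t, hilbertFunction I t ≤ C * (t + 1) ^ n := by
  refine ⟨fun h => ?_, fun h => Nat.sInf_le h⟩
  obtain ⟨C, hC⟩ : ∃ C : ℕ, ∀ t, hilbertFunction I t ≤ C * (t + 1) ^ hilbertDim I :=
    Nat.sInf_mem (s := {n | ∃ C : ℕ, ∀ t, hilbertFunction I t ≤ C * (t + 1) ^ n})
      ⟨Nat.card σ, 1, fun t => by simpa using hilbertFunction_le_pow t⟩
  exact ⟨C, fun t => (hC t).trans (by gcongr; omega)⟩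

theorem hilbertDim_anti (h : I ≤ J) : hilbertDim J ≤ hilbertDim I := by
  obtain ⟨C, hC⟩ := hilbertDim_le_iff.1 (le_refl (hilbertDim I))
  exact hilbertDim_le_iff.2 ⟨C, fun t => (hilbertFunction_anti h t).trans (hC t)⟩

theorem hilbertFunction_add_le (hI : I.IsPrime) (h : I ≤ J) {f : MvPolynomial σ K} (hfJ : f ∈ J)
    (hfI : f ∉ I) (t : ℕ) :
    hilbertFunction J (t + f.totalDegree) + hilbertFunction I t ≤
      hilbertFunction I (t + f.totalDegree) := by
  rw [hilbertFunction_eq_add h (t + f.totalDegree)]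
  refine Nat.add_le_add_left ?_ _
  have hinj : Function.Injective (LinearMap.mulLeft K (Ideal.Quotient.mk I f)) :=
    mul_right_injective₀ (mt Ideal.Quotient.eq_zero_iff_mem.1 hfI)
  rw [hilbertFunction, (Submodule.equivMapOfInjective _ hinj _).finrank_eq]
  refine Submodule.finrank_mono ?_
  rintro _ ⟨_, ⟨p, hp, rfl⟩, rfl⟩
  have hdeg : (f * p).totalDegree ≤ t + f.totalDegree :=
    (totalDegree_mul f p).trans (by
      have := (mem_restrictTotalDegree σ t p).1 hp
      omega)
  exact ⟨f * p, ⟨(mem_restrictTotalDegree σ _ _).2 hdeg, J.mul_mem_right _ hfJ⟩,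
    map_mul (Ideal.Quotient.mk I) f p⟩

theorem hilbertDim_lt (hI : I.IsPrime) (h : I < J) (hJ : J ≠ ⊤) :
    hilbertDim J < hilbertDim I := by
  obtain ⟨hle, f, hfJ, hfI⟩ := SetLike.lt_iff_le_and_exists.1 h
  obtain ⟨C, hC⟩ := hilbertDim_le_iff.1 (le_refl (hilbertDim I))
  set e := f.totalDegree with he
  have hmul (t m : ℕ) : m * hilbertFunction J t ≤ hilbertFunction I (t + m * e) := by
    induction m with
    | zero => simp
    | succ m ih =>
      have hstep := hilbertFunction_add_le hI hle hfJ hfI (t + m * e)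
      rw [← he] at hstep
      have hmono : hilbertFunction J t ≤ hilbertFunction J (t + m * e + e) :=
        hilbertFunction_mono (by omega)
      rw [show t + (m + 1) * e = t + m * e + e by ring, add_mul, one_mul]
      omega
  rcases hn : hilbertDim I with _ | k
  · have hbound := (hmul 0 (C + 1)).trans (hC _)
    have hpos := hilbertFunction_pos hJ 0
    rw [hn, pow_zero, mul_one] at hbound
    nlinarith
  · rw [Nat.lt_succ_iff, hilbertDim_le_iff]
    refine ⟨C * (1 + e) ^ (k + 1), fun t => Nat.le_of_mul_le_mul_left (c := t + 1) ?_ t.succ_pos⟩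
    calc (t + 1) * hilbertFunction J t ≤ C * (t + (t + 1) * e + 1) ^ (k + 1) := by
          simpa only [hn] using (hmul t (t + 1)).trans (hC _)
      _ = (t + 1) * (C * (1 + e) ^ (k + 1) * (t + 1) ^ k) := by
          rw [show t + (t + 1) * e + 1 = (1 + e) * (t + 1) by ring, mul_pow]
          ring

end HilbertFunction

section HomogeneousIdeals

open MvPolynomial Module

attribute [local instance] MvPolynomial.gradedAlgebra

variable {K σ : Type*} [Field K] {I J : Ideal (MvPolynomial σ K)} {n : ℕ}

theorem homogeneousComponent_add_mul {a : MvPolynomial σ K} {e : ℕ} (ha : a.IsHomogeneous e)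
    (g : MvPolynomial σ K) (j : ℕ) :
    homogeneousComponent (e + j) (a * g) = a * homogeneousComponent j g := by
  rw [← decomposition.decompose'_apply, ← decomposition.decompose'_apply]
  exact DirectSum.coe_decompose_mul_add_of_left_mem (homogeneousSubmodule σ K) ha

theorem isHomogeneous_colon_singleton (hI : I.IsHomogeneous (homogeneousSubmodule σ K))
    {a : MvPolynomial σ K} {e : ℕ} (ha : a.IsHomogeneous e) :
    (I.colon {a}).IsHomogeneous (homogeneousSubmodule σ K) := by
  intro j g hg
  rw [Submodule.mem_colon_singleton, smul_eq_mul, mul_comm] at hg ⊢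
  have hcomp := homogeneousComponent_mem_of_mem hI hg (e + j)
  rwa [homogeneousComponent_add_mul ha, ← decomposition.decompose'_apply] at hcomp

theorem isHomogeneous_sup_span_singleton (hI : I.IsHomogeneous (homogeneousSubmodule σ K))
    {a : MvPolynomial σ K} {e : ℕ} (ha : a.IsHomogeneous e) :
    (I ⊔ Ideal.span {a}).IsHomogeneous (homogeneousSubmodule σ K) :=
  hI.sup (Ideal.homogeneous_span _ _ (by rintro _ rfl; exact ⟨e, ha⟩))

theorem exists_totalDegree_le_sub_mul_mem (hI : I.IsHomogeneous (homogeneousSubmodule σ K))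
    {a : MvPolynomial σ K} {e : ℕ} (ha : a.IsHomogeneous e) {p : MvPolynomial σ K}
    (hp : p ∈ I ⊔ Ideal.span {a}) :
    ∃ g : MvPolynomial σ K, g.totalDegree ≤ p.totalDegree - e ∧ p - a * g ∈ I := by
  obtain ⟨i, hi, _, hb, rfl⟩ := Submodule.mem_sup.1 hp
  obtain ⟨g, rfl⟩ := Ideal.mem_span_singleton.1 hb
  set d := (i + a * g).totalDegree with hd
  -- Keep the components of `g` of degree at most `d - e`: since `i + a * g` has none in degrees
  -- beyond `d`, the remaining ones are multiplied into `I` by `a`.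
  have hhigh : ∀ j, d < e + j → a * homogeneousComponent j g ∈ I := fun j hj => by
    have hzero := homogeneousComponent_eq_zero (e + j) _ (hd ▸ hj)
    rw [map_add, homogeneousComponent_add_mul ha] at hzero
    rw [← neg_eq_of_add_eq_zero_right hzero]
    exact I.neg_mem (homogeneousComponent_mem_of_mem hI hi _)
  refine ⟨∑ j ∈ Finset.range (g.totalDegree + 1) with e + j ≤ d, homogeneousComponent j g,
    totalDegree_finsetSum_le fun j hj => ?_, ?_⟩
  · have hj := (Finset.mem_filter.1 hj).2
    exact (homogeneousComponent_isHomogeneous j g).totalDegree_le.trans (by omega)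
  · have hsplit := Finset.sum_filter_add_sum_filter_not (Finset.range (g.totalDegree + 1))
      (fun j => e + j ≤ d) fun j => homogeneousComponent j g
    rw [sum_homogeneousComponent] at hsplit
    nth_rw 1 [← hsplit]
    rw [mul_add, add_sub_assoc, add_sub_cancel_left, Finset.mul_sum]
    exact I.add_mem hi (I.sum_mem fun j hj => hhigh j (not_le.1 (Finset.mem_filter.1 hj).2))

theorem exists_isHomogeneous_mul_mem_of_not_isPrime
    (hI : I.IsHomogeneous (homogeneousSubmodule σ K)) (htop : I ≠ ⊤) (hprime : ¬ I.IsPrime) :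
    ∃ (a b : MvPolynomial σ K) (e : ℕ), a.IsHomogeneous e ∧ a ∉ I ∧ b ∉ I ∧ a * b ∈ I := by
  contrapose! hprime
  refine hI.isPrime_of_homogeneous_mem_or_mem htop fun {a b} ⟨e, ha⟩ _ hab => ?_
  by_contra! h
  exact hprime a b e ha h.1 h.2 hab

/-- The homogeneous primes containing `I` that define a nonempty projective variety, i.e. that do
not contain all the variables. -/
abbrev RelevantPrime (I : Ideal (MvPolynomial σ K)) : Type _ :=
  {P : Ideal (MvPolynomial σ K) //
    P.IsPrime ∧ P.IsHomogeneous (homogeneousSubmodule σ K) ∧ (∃ i, X i ∉ P) ∧ I ≤ P}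

theorem exists_ltSeries_relevantPrime_of_le (h : I ≤ J) (p : LTSeries (RelevantPrime J)) :
    ∃ q : LTSeries (RelevantPrime I), q.length = p.length ∧ J ≤ q.head.1 :=
  ⟨p.map (fun P => ⟨P.1, P.2.1, P.2.2.1, P.2.2.2.1, h.trans P.2.2.2.2⟩) fun _ _ hPQ => hPQ,
    rfl, p.head.2.2.2.2⟩

variable [Finite σ]

theorem hilbertFunction_le_add_colon (hI : I.IsHomogeneous (homogeneousSubmodule σ K))
    {a : MvPolynomial σ K} {e : ℕ} (ha : a.IsHomogeneous e) (t : ℕ) :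
    hilbertFunction I t ≤
      hilbertFunction (I ⊔ Ideal.span {a}) t + hilbertFunction (I.colon {a}) (t - e) := by
  rw [hilbertFunction_eq_add (le_sup_left : I ≤ I ⊔ Ideal.span {a})]
  refine Nat.add_le_add_left ?_ _
  let mulA : (MvPolynomial σ K ⧸ I.colon {a}) →ₗ[K] MvPolynomial σ K ⧸ I :=
    Submodule.liftQ ((I.colon {a}).restrictScalars K)
      ((Ideal.Quotient.mkₐ K I).toLinearMap ∘ₗ LinearMap.mulLeft K a) fun g hg =>
        Ideal.Quotient.eq_zero_iff_mem.2 (by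
          simpa [mul_comm] using Submodule.mem_colon_singleton.1 hg)
  refine (Submodule.finrank_mono (t := ((restrictTotalDegree σ K (t - e)).map
    (Ideal.Quotient.mkₐ K (I.colon {a})).toLinearMap).map mulA) ?_).trans
      (Submodule.finrank_map_le _ _)
  rintro _ ⟨p, ⟨hpt, hp⟩, rfl⟩
  obtain ⟨g, hg, hpg⟩ := exists_totalDegree_le_sub_mul_mem hI ha hp
  have hgt : g.totalDegree ≤ t - e :=
    hg.trans (Nat.sub_le_sub_right ((mem_restrictTotalDegree σ _ _).1 hpt) e)
  exact ⟨_, ⟨g, (mem_restrictTotalDegree σ _ _).2 hgt, rfl⟩, (Ideal.Quotient.eq.2 hpg).symm⟩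

theorem hilbertDim_le_max_colon (hI : I.IsHomogeneous (homogeneousSubmodule σ K))
    {a : MvPolynomial σ K} {e : ℕ} (ha : a.IsHomogeneous e) :
    hilbertDim I ≤ max (hilbertDim (I ⊔ Ideal.span {a})) (hilbertDim (I.colon {a})) := by
  obtain ⟨C, hC⟩ := hilbertDim_le_iff.1
    (le_max_left (hilbertDim (I ⊔ Ideal.span {a})) (hilbertDim (I.colon {a})))
  obtain ⟨D, hD⟩ := hilbertDim_le_iff.1
    (le_max_right (hilbertDim (I ⊔ Ideal.span {a})) (hilbertDim (I.colon {a})))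
  refine hilbertDim_le_iff.2 ⟨C + D, fun t => ?_⟩
  rw [add_mul]
  exact (hilbertFunction_le_add_colon hI ha t).trans
    (add_le_add (hC t) ((hilbertFunction_mono (Nat.sub_le t e)).trans (hD t)))

theorem hilbertDim_le_add_one (hI : I.IsHomogeneous (homogeneousSubmodule σ K))
    {a : MvPolynomial σ K} {e : ℕ} (ha : a.IsHomogeneous e) (he : 0 < e) :
    hilbertDim I ≤ hilbertDim (I ⊔ Ideal.span {a}) + 1 := by
  obtain ⟨C, hC⟩ := hilbertDim_le_iff.1 (le_refl (hilbertDim (I ⊔ Ideal.span {a})))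
  set k := hilbertDim (I ⊔ Ideal.span {a})
  have hstep (t : ℕ) : hilbertFunction I (t + 1) ≤ C * (t + 1 + 1) ^ k + hilbertFunction I t :=
    (hilbertFunction_le_add_colon hI ha (t + 1)).trans
      (add_le_add (hC _) ((hilbertFunction_anti Ideal.le_colon _).trans
        (hilbertFunction_mono (by omega))))
  have hsum (t : ℕ) : hilbertFunction I t ≤ 1 + t * (C * (t + 1) ^ k) := by
    induction t with
    | zero => simpa using hilbertFunction_le_pow (I := I) 0
    | succ t ih =>
      have hpow : t * (C * (t + 1) ^ k) ≤ t * (C * (t + 1 + 1) ^ k) := by gcongr; omega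
      linarith [hstep t]
  refine hilbertDim_le_iff.2 ⟨1 + C, fun t => (hsum t).trans ?_⟩
  calc 1 + t * (C * (t + 1) ^ k) ≤ (t + 1) ^ (k + 1) + (t + 1) * (C * (t + 1) ^ k) := by
        gcongr
        · exact Nat.one_le_pow _ _ t.succ_pos
        · omega
    _ = (1 + C) * (t + 1) ^ (k + 1) := by ring

theorem hilbertDim_eq_zero_of_forall_X_mem (hI : ∀ i, X i ∈ I) : hilbertDim I = 0 := by
  have hspan (p : MvPolynomial σ K) :
      Ideal.Quotient.mkₐ K I p ∈ Submodule.span K {(1 : MvPolynomial σ K ⧸ I)} := by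
    induction p using MvPolynomial.induction_on with
    | C c => exact Submodule.mem_span_singleton.2 ⟨c, (Algebra.algebraMap_eq_smul_one c).symm⟩
    | add p q hp hq => rw [map_add]; exact add_mem hp hq
    | mul_X p i _ =>
      rw [map_mul, show Ideal.Quotient.mkₐ K I (X i) = 0 from
        Ideal.Quotient.eq_zero_iff_mem.2 (hI i), mul_zero]
      exact zero_mem _
  refine Nat.le_zero.1 (hilbertDim_le_iff.2 ⟨1, fun t => ?_⟩)
  calc hilbertFunction I t ≤ finrank K (Submodule.span K {(1 : MvPolynomial σ K ⧸ I)}) :=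
        Submodule.finrank_mono (Submodule.map_le_iff_le_comap.2 fun p _ => hspan p)
    _ ≤ 1 := (finrank_span_le_card _).trans (by simp)
    _ = 1 * (t + 1) ^ 0 := by simp

theorem hilbertDim_le_of_forall_length_lt (hI : I.IsHomogeneous (homogeneousSubmodule σ K))
    (hn : ∀ p : LTSeries (RelevantPrime I), p.length < n) : hilbertDim I ≤ n := by
  induction I using WellFoundedGT.induction generalizing n with
  | ind I ih =>
  by_cases hX : ∀ i, X i ∈ I
  · exact (hilbertDim_eq_zero_of_forall_X_mem hX).trans_le n.zero_le
  push Not at hX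
  have hlt {a : MvPolynomial σ K} (ha : a ∉ I) : I < I ⊔ Ideal.span {a} :=
    left_lt_sup.2 (by simpa using ha)
  by_cases hprime : I.IsPrime
  · obtain ⟨i, hi⟩ := id hX
    let top : RelevantPrime I := ⟨I, hprime, hI, hX, le_rfl⟩
    have hpos : 0 < n := hn (RelSeries.singleton _ top)
    have hsection : hilbertDim (I ⊔ Ideal.span {X i}) ≤ n - 1 := by
      refine ih _ (hlt hi) (isHomogeneous_sup_span_singleton hI (isHomogeneous_X K i)) fun p => ?_
      obtain ⟨q, hqp, hq⟩ := exists_ltSeries_relevantPrime_of_le le_sup_left p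
      have hcons := hn (q.cons top ((hlt hi).trans_le hq))
      rw [RelSeries.cons_length] at hcons
      omega
    have := hilbertDim_le_add_one hI (isHomogeneous_X K i) one_pos
    omega
  · obtain ⟨a, b, e, ha, haI, hbI, hab⟩ :=
      exists_isHomogeneous_mul_mem_of_not_isPrime hI (fun h => hX.elim fun i hi => hi (h ▸ trivial))
        hprime
    have hchains {J : Ideal (MvPolynomial σ K)} (hIJ : I ≤ J) (p : LTSeries (RelevantPrime J)) :
        p.length < n := by
      obtain ⟨q, hqp, -⟩ := exists_ltSeries_relevantPrime_of_le hIJ p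
      exact hqp ▸ hn q
    have hcolon : I < I.colon {a} := lt_of_le_of_ne Ideal.le_colon fun h => hbI (by
      rw [h, Submodule.mem_colon_singleton, smul_eq_mul, mul_comm]
      exact hab)
    exact (hilbertDim_le_max_colon hI ha).trans (max_le
      (ih _ (hlt haI) (isHomogeneous_sup_span_singleton hI ha) (hchains le_sup_left))
      (ih _ hcolon (isHomogeneous_colon_singleton hI ha) (hchains hcolon.le)))

end HomogeneousIdeals

section Products

open MvPolynomial Module

theorem prod_mem_finset_prod {K S ι : Type*} [Field K] [CommRing S] [Algebra K S] {s : Finset ι}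
    {P : ι → Submodule K S} {x : ι → S} (h : ∀ i ∈ s, x i ∈ P i) :
    ∏ i ∈ s, x i ∈ ∏ i ∈ s, P i := by
  classical
  induction s using Finset.induction_on with
  | empty => simpa only [Finset.prod_empty] using Submodule.one_le.1 le_rfl
  | insert i s hi ih =>
    rw [Finset.prod_insert hi, Finset.prod_insert hi]
    exact Submodule.mul_mem_mul (h i (Finset.mem_insert_self i s))
      (ih fun j hj => h j (Finset.mem_insert_of_mem hj))

theorem finrank_mul_le {K S : Type*} [Field K] [CommRing S] [Algebra K S] (P Q : Submodule K S)
    [FiniteDimensional K P] [FiniteDimensional K Q] :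
    finrank K ↥(P * Q) ≤ finrank K P * finrank K Q := by
  rw [← Submodule.mulMap_range, ← finrank_tensorProduct (R := K)]
  exact LinearMap.finrank_range_le _

theorem finiteDimensional_prod {K S ι : Type*} [Field K] [CommRing S] [Algebra K S] (s : Finset ι)
    (P : ι → Submodule K S) [∀ i, FiniteDimensional K (P i)] :
    FiniteDimensional K ↥(∏ i ∈ s, P i) :=
  Module.Finite.iff_fg.2 <| Finset.prod_induction P Submodule.FG (fun _ _ hP hQ => hP.mul hQ)
    (by rw [Submodule.one_eq_span]; exact Submodule.fg_span_singleton 1)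
    fun _ _ => Module.Finite.iff_fg.1 inferInstance

theorem finrank_prod_le {K S ι : Type*} [Field K] [CommRing S] [Algebra K S] (s : Finset ι)
    (P : ι → Submodule K S) [∀ i, FiniteDimensional K (P i)] :
    finrank K ↥(∏ i ∈ s, P i) ≤ ∏ i ∈ s, finrank K (P i) := by
  classical
  induction s using Finset.induction_on with
  | empty =>
    rw [Finset.prod_empty, Finset.prod_empty, Submodule.one_eq_span]
    exact (finrank_span_le_card _).trans (by simp)
  | insert i s hi ih =>
    have := finiteDimensional_prod s P
    rw [Finset.prod_insert hi, Finset.prod_insert hi]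
    exact (finrank_mul_le _ _).trans (Nat.mul_le_mul_left _ ih)

variable {K ι τ : Type*} [Field K] {I : Ideal (MvPolynomial τ K)}
  {J : Ideal (MvPolynomial (ι × τ) K)}

theorem finrank_map_rename_le [Finite τ] (t : ℕ) {i : ι}
    (h : I ≤ J.comap (rename (Prod.mk i) : MvPolynomial τ K →ₐ[K] _)) :
    finrank K ((restrictTotalDegree τ K t).map ((Ideal.Quotient.mkₐ K J).comp
      (rename (Prod.mk i))).toLinearMap) ≤ hilbertFunction I t := by
  have hfactor : ((Ideal.Quotient.mkₐ K J).comp (rename (Prod.mk i))).toLinearMap =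
      (Ideal.quotientMapₐ J (rename (Prod.mk i)) h).toLinearMap ∘ₗ
        (Ideal.Quotient.mkₐ K I).toLinearMap := rfl
  rw [hfactor, Submodule.map_comp]
  exact Submodule.finrank_map_le _ _

theorem map_restrictTotalDegree_le_prod [Fintype ι] [Finite τ] (t : ℕ) :
    (restrictTotalDegree (ι × τ) K t).map (Ideal.Quotient.mkₐ K J).toLinearMap ≤
      ∏ i : ι, (restrictTotalDegree τ K t).map ((Ideal.Quotient.mkₐ K J).comp
        (rename (Prod.mk i))).toLinearMap := by
  have := Fintype.ofFinite τ
  rw [restrictTotalDegree, restrictSupport_eq_span, Submodule.map_span_le]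
  rintro _ ⟨s, hs, rfl⟩
  have hsum : ∑ q, s q ≤ t := by
    rwa [Set.mem_ofPred_eq, Finsupp.sum_fintype _ _ fun _ => rfl] at hs
  have hfactor : (monomial s (1 : K)) =
      ∏ i, rename (Prod.mk i) (∏ j, (X j : MvPolynomial τ K) ^ s (i, j)) := by
    simp [monomial_eq, Finsupp.prod_fintype, Fintype.prod_prod_type]
  change Ideal.Quotient.mkₐ K J (monomial s 1) ∈ _
  rw [hfactor, map_prod]
  refine prod_mem_finset_prod fun i _ => Submodule.mem_map_of_mem ?_
  rw [mem_restrictTotalDegree]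
  calc (∏ j, (X j : MvPolynomial τ K) ^ s (i, j)).totalDegree
      ≤ ∑ j, ((X j : MvPolynomial τ K) ^ s (i, j)).totalDegree := totalDegree_finsetProd _ _
    _ = ∑ j, s (i, j) := by simp
    _ ≤ ∑ q, s q := by
      rw [Fintype.sum_prod_type]
      exact Finset.single_le_sum (f := fun i => ∑ j, s (i, j)) (fun _ _ => Nat.zero_le _)
        (Finset.mem_univ i)
    _ ≤ t := hsum

variable [Fintype ι] [Finite τ]

theorem hilbertFunction_le_pow_card
    (h : ∀ i, I ≤ J.comap (rename (Prod.mk i) : MvPolynomial τ K →ₐ[K] _)) (t : ℕ) :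
    hilbertFunction J t ≤ hilbertFunction I t ^ Fintype.card ι := by
  have := finiteDimensional_prod Finset.univ fun i : ι => (restrictTotalDegree τ K t).map
    ((Ideal.Quotient.mkₐ K J).comp (rename (Prod.mk i))).toLinearMap
  calc hilbertFunction J t ≤ ∏ i : ι, finrank K ((restrictTotalDegree τ K t).map
        ((Ideal.Quotient.mkₐ K J).comp (rename (Prod.mk i))).toLinearMap) :=
      (Submodule.finrank_mono (map_restrictTotalDegree_le_prod t)).trans (finrank_prod_le _ _)
    _ ≤ ∏ _i : ι, hilbertFunction I t :=
      Finset.prod_le_prod' fun i _ => finrank_map_rename_le t (h i)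
    _ = hilbertFunction I t ^ Fintype.card ι := by simp

theorem hilbertDim_le_card_mul
    (h : ∀ i, I ≤ J.comap (rename (Prod.mk i) : MvPolynomial τ K →ₐ[K] _)) :
    hilbertDim J ≤ Fintype.card ι * hilbertDim I := by
  obtain ⟨C, hC⟩ := hilbertDim_le_iff.1 (le_refl (hilbertDim I))
  refine hilbertDim_le_iff.2 ⟨C ^ Fintype.card ι, fun t => ?_⟩
  calc hilbertFunction J t ≤ hilbertFunction I t ^ Fintype.card ι := hilbertFunction_le_pow_card h t
    _ ≤ (C * (t + 1) ^ hilbertDim I) ^ Fintype.card ι := by gcongr; exact hC t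
    _ = C ^ Fintype.card ι * (t + 1) ^ (Fintype.card ι * hilbertDim I) := by
      rw [mul_pow, ← pow_mul, mul_comm (hilbertDim I)]

end Products

section LinearSubstitutions

open MvPolynomial Module

variable {K σ ρ : Type*} [Field K]

theorem totalDegree_aeval_le {l : ρ → MvPolynomial σ K} {d : ℕ} (hl : ∀ i, (l i).totalDegree ≤ d)
    (p : MvPolynomial ρ K) : (aeval l p).totalDegree ≤ p.totalDegree * d := by
  rw [aeval_def, eval₂_eq]
  refine totalDegree_finsetSum_le fun m hm => ?_
  calc (algebraMap K (MvPolynomial σ K) (coeff m p) * ∏ i ∈ m.support, l i ^ m i).totalDegree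
      ≤ (∏ i ∈ m.support, l i ^ m i).totalDegree :=
        (totalDegree_mul _ _).trans (by simp [algebraMap_eq])
    _ ≤ ∑ i ∈ m.support, (l i ^ m i).totalDegree := totalDegree_finsetProd _ _
    _ ≤ ∑ i ∈ m.support, m i * d :=
        Finset.sum_le_sum fun i _ => (totalDegree_pow _ _).trans (Nat.mul_le_mul_left _ (hl i))
    _ = m.sum (fun _ k => k) * d := (Finset.sum_mul _ _ _).symm
    _ ≤ p.totalDegree * d := Nat.mul_le_mul_right _ (le_totalDegree hm)

variable [Finite ρ]

theorem card_le_of_finrank_restrictTotalDegree_le {C n : ℕ}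
    (h : ∀ t, finrank K (restrictTotalDegree ρ K t) ≤ C * (t + 1) ^ n) : Nat.card ρ ≤ n := by
  have := Fintype.ofFinite ρ
  by_contra! hn
  have hdegree (s : ℕ) : restrictDegree ρ K s ≤ restrictTotalDegree ρ K (Nat.card ρ * s) := by
    intro p hp
    rw [mem_restrictDegree] at hp
    refine (mem_restrictTotalDegree ρ _ _).2 (Finset.sup_le fun m hm => ?_)
    rw [Finsupp.sum_fintype _ _ fun _ => rfl]
    calc ∑ i, m i ≤ ∑ _i : ρ, s := Finset.sum_le_sum fun i _ => hp m hm i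
      _ = Nat.card ρ * s := by simp
  have hpow (s : ℕ) : (s + 1) ^ n * (s + 1) ≤ (s + 1) ^ n * (C * (Nat.card ρ + 1) ^ n) :=
    calc (s + 1) ^ n * (s + 1) = (s + 1) ^ (n + 1) := (pow_succ _ _).symm
      _ ≤ (s + 1) ^ Nat.card ρ := Nat.pow_le_pow_right s.succ_pos hn
      _ = finrank K (restrictDegree ρ K s) := (finrank_restrictDegree s).symm
      _ ≤ finrank K (restrictTotalDegree ρ K (Nat.card ρ * s)) :=
        Submodule.finrank_mono (hdegree s)
      _ ≤ C * (Nat.card ρ * s + 1) ^ n := h _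
      _ ≤ C * ((Nat.card ρ + 1) * (s + 1)) ^ n := by gcongr; nlinarith
      _ = (s + 1) ^ n * (C * (Nat.card ρ + 1) ^ n) := by rw [mul_pow]; ring
  have := Nat.le_of_mul_le_mul_left (hpow (C * (Nat.card ρ + 1) ^ n)) (by positivity)
  omega

theorem card_le_hilbertDim [Finite σ] {I : Ideal (MvPolynomial σ K)} (l : ρ → MvPolynomial σ K)
    (hdeg : ∀ i, (l i).totalDegree ≤ 1) (hl : ∀ p : MvPolynomial ρ K, aeval l p ∈ I → p = 0) :
    Nat.card ρ ≤ hilbertDim I := by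
  obtain ⟨C, hC⟩ := hilbertDim_le_iff.1 (le_refl (hilbertDim I))
  refine card_le_of_finrank_restrictTotalDegree_le (K := K) (C := C) fun t => ?_
  let φ : MvPolynomial ρ K →ₗ[K] MvPolynomial σ K ⧸ I :=
    ((Ideal.Quotient.mkₐ K I).comp (aeval l)).toLinearMap
  have hφ : Function.Injective φ :=
    (injective_iff_map_eq_zero φ).2 fun p hp => hl p (Ideal.Quotient.eq_zero_iff_mem.1 hp)
  rw [(Submodule.equivMapOfInjective φ hφ _).finrank_eq]
  refine (Submodule.finrank_mono ?_).trans (hC t)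
  rintro _ ⟨p, hp, rfl⟩
  refine ⟨aeval l p, (mem_restrictTotalDegree σ _ _).2 ?_, rfl⟩
  exact ((totalDegree_aeval_le hdeg p).trans_eq (mul_one _)).trans
    ((mem_restrictTotalDegree ρ _ _).1 hp)

end LinearSubstitutions

section Families

variable {K ι τ : Type*} {X : Set (τ → K)}

/-- The set of families `(w i)ᵢ` of points of `X`, encoded as points of a single affine space whose
coordinates are indexed by pairs. -/
def familiesIn (ι : Type*) (X : Set (τ → K)) : Set (ι × τ → K) :=
  {w | ∀ i, (fun j => w (i, j)) ∈ X}

variable [DecidableEq ι]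

/-- Replaces the `i`-th member of the family `w` by `x`. -/
def replaceRow (w : ι × τ → K) (i : ι) (x : τ → K) : ι × τ → K :=
  Function.uncurry (Function.update (Function.curry w) i x)

theorem replaceRow_self (w : ι × τ → K) (i : ι) : replaceRow w i (fun j => w (i, j)) = w := by
  funext ⟨k, j⟩
  by_cases hk : k = i
  · subst hk
    simp [replaceRow]
  · simp [replaceRow, hk]

theorem replaceRow_mem_familiesIn {w : ι × τ → K} (hw : w ∈ familiesIn ι X) (i : ι) {x : τ → K}
    (hx : x ∈ X) : replaceRow w i x ∈ familiesIn ι X := by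
  intro k
  by_cases hk : k = i
  · subst hk
    simpa [replaceRow] using hx
  · simpa [replaceRow, hk] using hw k

theorem replaceRow_eq_replaceRow {w u : ι × τ → K} {i k : ι} (x : τ → K) (j : τ)
    (h : k ≠ i → w (k, j) = u (k, j)) : replaceRow w i x (k, j) = replaceRow u i x (k, j) := by
  by_cases hk : k = i
  · subst hk
    simp [replaceRow]
  · simpa [replaceRow, hk] using h hk

end Families

section VanishingIdeals

open MvPolynomial

variable {K σ τ : Type*} [Field K]

theorem aeval_self_eq_eval (x : σ → K) (p : MvPolynomial σ K) : aeval x p = eval x p :=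
  congrFun (congrArg DFunLike.coe (coe_aeval_eq_eval x)) p

theorem mem_vanishingIdeal_iff_eval {X : Set (σ → K)} {p : MvPolynomial σ K} :
    p ∈ vanishingIdeal K X ↔ ∀ x ∈ X, eval x p = 0 := by
  simp only [mem_vanishingIdeal_iff, aeval_self_eq_eval]

theorem eval_aeval (x : τ → K) (g : σ → MvPolynomial τ K) (p : MvPolynomial σ K) :
    eval x (aeval g p) = eval (fun i => eval x (g i)) p := by
  simp only [← aeval_self_eq_eval, ← aeval_bind₁]
  rfl

theorem eval_smul_of_isHomogeneous_s7 {p : MvPolynomial σ K} {d : ℕ} (hp : p.IsHomogeneous d) (c : K)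
    (x : σ → K) : eval (c • x) p = c ^ d * eval x p := by
  simp only [eval_eq, Finset.mul_sum]
  refine Finset.sum_congr rfl fun m hm => ?_
  simp only [Pi.smul_apply, smul_eq_mul, mul_pow, Finset.prod_mul_distrib,
    Finset.prod_pow_eq_pow_sum]
  rw [hp.degree_eq_sum_deg_support hm]
  ring

theorem eval_homogeneousComponent_eq_zero [Infinite K] {p : MvPolynomial σ K} {x : σ → K}
    (hp : ∀ c : K, eval (c • x) p = 0) (n : ℕ) : eval x (homogeneousComponent n p) = 0 := by
  let q : Polynomial K := ∑ i ∈ Finset.range (p.totalDegree + 1),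
    Polynomial.C (eval x (homogeneousComponent i p)) * Polynomial.X ^ i
  have hq : q = 0 := by
    refine Polynomial.funext fun c => ?_
    rw [Polynomial.eval_zero, ← hp c, Polynomial.eval_finsetSum]
    conv_rhs => rw [← sum_homogeneousComponent p, map_sum]
    refine Finset.sum_congr rfl fun i _ => ?_
    rw [eval_smul_of_isHomogeneous_s7 (homogeneousComponent_isHomogeneous i p),
      Polynomial.eval_mul, Polynomial.eval_C, Polynomial.eval_pow, Polynomial.eval_X, mul_comm]
  by_cases hn : n < p.totalDegree + 1
  · have hcoeff := congrArg (fun r => Polynomial.coeff r n) hq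
    simpa [q, Polynomial.coeff_X_pow, hn] using hcoeff
  · rw [homogeneousComponent_eq_zero _ _ (by omega), map_zero]

attribute [local instance] MvPolynomial.gradedAlgebra in
theorem isHomogeneous_vanishingIdeal [Infinite K] {X : Set (σ → K)}
    (hX : ∀ (c : K), ∀ x ∈ X, c • x ∈ X) :
    (vanishingIdeal K X).IsHomogeneous (homogeneousSubmodule σ K) := by
  intro n p hp
  rw [mem_vanishingIdeal_iff_eval] at hp
  rw [← DirectSum.Decomposition.decompose'_eq, decomposition.decompose'_apply,
    mem_vanishingIdeal_iff_eval]
  exact fun x hx => eval_homogeneousComponent_eq_zero (fun c => hp _ (hX c x hx)) n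

theorem vanishingIdeal_ne_top {X : Set (σ → K)} (hX : X.Nonempty) : vanishingIdeal K X ≠ ⊤ := by
  obtain ⟨x, hx⟩ := hX
  intro htop
  have hone := mem_vanishingIdeal_iff_eval.1 ((Ideal.eq_top_iff_one _).1 htop) x hx
  exact one_ne_zero ((map_one (eval x)).symm.trans hone)

theorem isPrime_vanishingIdeal_iff {X : Set (σ → K)} :
    (vanishingIdeal K X).IsPrime ↔ X.Nonempty ∧ ∀ p q : MvPolynomial σ K,
      (∃ x ∈ X, eval x p ≠ 0) → (∃ x ∈ X, eval x q ≠ 0) →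
        ∃ x ∈ X, eval x p ≠ 0 ∧ eval x q ≠ 0 := by
  have hnonmem (p : MvPolynomial σ K) : p ∉ vanishingIdeal K X ↔ ∃ x ∈ X, eval x p ≠ 0 := by
    simp only [mem_vanishingIdeal_iff_eval, not_forall, exists_prop]
  refine ⟨fun h => ⟨?_, fun p q hp hq => ?_⟩, fun ⟨hX, h⟩ => ⟨vanishingIdeal_ne_top hX, ?_⟩⟩
  · rw [Set.nonempty_iff_ne_empty]
    rintro rfl
    exact h.ne_top vanishingIdeal_empty
  · rw [← hnonmem] at hp hq
    simpa only [map_mul, mul_ne_zero_iff] using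
      (hnonmem (p * q)).1 fun hpq => (h.mem_or_mem hpq).elim hp hq
  · intro p q hpq
    by_contra! hne
    obtain ⟨x, hx, hpx, hqx⟩ := h p q ((hnonmem p).1 hne.1) ((hnonmem q).1 hne.2)
    refine mul_ne_zero hpx hqx ?_
    rw [← map_mul]
    exact mem_vanishingIdeal_iff_eval.1 hpq x hx

variable {ι : Type*} {X : Set (τ → K)}

theorem vanishingIdeal_le_comap_familiesIn (i : ι) :
    vanishingIdeal K X ≤ (vanishingIdeal K (familiesIn ι X)).comap
      (rename (Prod.mk i) : MvPolynomial τ K →ₐ[K] _) := by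
  intro p hp
  rw [Ideal.mem_comap, mem_vanishingIdeal_iff_eval]
  intro w hw
  rw [eval_rename]
  exact mem_vanishingIdeal_iff_eval.1 hp _ (hw i)

theorem exists_eval_eq_eval_replaceRow [DecidableEq ι] (p : MvPolynomial (ι × τ) K)
    (w : ι × τ → K) (i : ι) :
    ∃ q : MvPolynomial τ K, ∀ x, eval x q = eval (replaceRow w i x) p := by
  refine ⟨aeval (fun k => if k.1 = i then X k.2 else C (w k)) p, fun x => ?_⟩
  rw [eval_aeval]
  congr 2
  funext ⟨k, j⟩
  by_cases hk : k = i
  · subst hk; simp [replaceRow]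
  · simp [replaceRow, hk]

theorem isPrime_vanishingIdeal_familiesIn [Finite ι] (h : (vanishingIdeal K X).IsPrime) :
    (vanishingIdeal K (familiesIn ι X)).IsPrime := by
  classical
  have := Fintype.ofFinite ι
  obtain ⟨⟨x, hx⟩, hX⟩ := isPrime_vanishingIdeal_iff.1 h
  refine isPrime_vanishingIdeal_iff.2 ⟨⟨fun k => x k.2, fun _ => hx⟩, ?_⟩
  rintro p q ⟨w, hw, hpw⟩ ⟨u, hu, hqu⟩
  -- Make the rows of a non-zero of `p` and of a non-zero of `q` agree one after the other.
  have hagree (s : Finset ι) : ∃ w ∈ familiesIn ι X, ∃ u ∈ familiesIn ι X,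
      (∀ i ∈ s, ∀ j, w (i, j) = u (i, j)) ∧ eval w p ≠ 0 ∧ eval u q ≠ 0 := by
    induction s using Finset.induction_on with
    | empty => exact ⟨w, hw, u, hu, by simp, hpw, hqu⟩
    | insert i s _ ih =>
      obtain ⟨w, hw, u, hu, hwu, hpw, hqu⟩ := ih
      obtain ⟨p', hp'⟩ := exists_eval_eq_eval_replaceRow p w i
      obtain ⟨q', hq'⟩ := exists_eval_eq_eval_replaceRow q u i
      obtain ⟨x, hx, hpx, hqx⟩ := hX p' q' ⟨_, hw i, by rwa [hp', replaceRow_self]⟩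
        ⟨_, hu i, by rwa [hq', replaceRow_self]⟩
      refine ⟨_, replaceRow_mem_familiesIn hw i hx, _, replaceRow_mem_familiesIn hu i hx,
        fun k hk j => replaceRow_eq_replaceRow x j fun hki => ?_, hp' x ▸ hpx, hq' x ▸ hqx⟩
      exact hwu k (Finset.mem_of_mem_insert_of_ne hk hki) j
  obtain ⟨w, hw, u, -, hwu, hpw, hqu⟩ := hagree Finset.univ
  obtain rfl : w = u := funext fun k => hwu k.1 (Finset.mem_univ _) k.2
  exact ⟨w, hw, hpw, hqu⟩

end VanishingIdeals

section Frames

open MvPolynomial Matrix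

variable {K ι κ : Type*} [Field K]

theorem linearIndependent_row_of_mul {ρ : Type*} [Fintype κ] {v : Matrix ι κ K} {B : Matrix κ ρ K}
    (h : LinearIndependent K (v * B).row) : LinearIndependent K v.row :=
  LinearIndependent.of_comp B.vecMulLinear h

theorem exists_mul_eq_one_of_linearIndependent_row [Finite ι] [Fintype κ] [DecidableEq ι]
    {v : Matrix ι κ K} (hv : LinearIndependent K v.row) :
    ∃ B : Matrix κ ι K, v * B = 1 := by
  classical
  have := Fintype.ofFinite ι
  obtain ⟨g, hg⟩ := v.vecMulLinear.exists_leftInverse_of_injective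
    (LinearMap.ker_eq_bot.2 (vecMul_injective_iff.2 hv))
  refine ⟨LinearMap.toMatrixRight' g, ?_⟩
  rw [← LinearMap.toMatrixRight'_id, ← hg, LinearMap.toMatrixRight'_comp]
  exact congrArg (· * _) (LinearMap.toMatrixRight'.apply_symm_apply v).symm

variable [Fintype ι]

theorem span_range_row_mul_le (A : Matrix ι ι K) (v : Matrix ι κ K) :
    Submodule.span K (Set.range (A * v).row) ≤ Submodule.span K (Set.range v.row) := by
  rw [← range_vecMulLinear, ← range_vecMulLinear]
  rintro _ ⟨c, rfl⟩
  exact ⟨c ᵥ* A, vecMul_vecMul c A v⟩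

theorem exists_eq_mul_of_span_range_row_le {ρ : Type*} {v : Matrix ι κ K} {w : Matrix ρ κ K}
    (h : Submodule.span K (Set.range w.row) ≤ Submodule.span K (Set.range v.row)) :
    ∃ A : Matrix ρ ι K, w = A * v := by
  have hrows (i : ρ) : ∃ c : ι → K, c ᵥ* v = w.row i := by
    change w.row i ∈ LinearMap.range v.vecMulLinear
    rw [range_vecMulLinear]
    exact h (Submodule.subset_span ⟨i, rfl⟩)
  choose A hA using hrows
  exact ⟨of A, funext fun i => ((mul_apply_eq_vecMul _ _ i).trans (hA i)).symm⟩

variable [DecidableEq ι]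

theorem span_range_row_mul {A : Matrix ι ι K} (hA : A.det ≠ 0) (v : Matrix ι κ K) :
    Submodule.span K (Set.range (A * v).row) = Submodule.span K (Set.range v.row) := by
  refine le_antisymm (span_range_row_mul_le A v) ?_
  have hinv := span_range_row_mul_le A⁻¹ (A * v)
  rwa [nonsing_inv_mul_cancel_left A v hA.isUnit] at hinv

theorem linearIndependent_row_iff_exists_det_mul_ne_zero [Fintype κ] {v : Matrix ι κ K} :
    LinearIndependent K v.row ↔ ∃ B : Matrix κ ι K, (v * B).det ≠ 0 := by
  refine ⟨fun hv => ?_, fun ⟨B, hB⟩ =>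
    linearIndependent_row_of_mul (linearIndependent_rows_of_det_ne_zero hB)⟩
  obtain ⟨B, hB⟩ := exists_mul_eq_one_of_linearIndependent_row hv
  exact ⟨B, by simp [hB]⟩

theorem linearIndependent_row_mul [Finite κ] {A : Matrix ι ι K} (hA : A.det ≠ 0)
    {v : Matrix ι κ K} (hv : LinearIndependent K v.row) : LinearIndependent K (A * v).row := by
  have := Fintype.ofFinite κ
  obtain ⟨B, hB⟩ := exists_mul_eq_one_of_linearIndependent_row hv
  refine linearIndependent_row_iff_exists_det_mul_ne_zero.2 ⟨B, ?_⟩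
  rwa [Matrix.mul_assoc, hB, Matrix.mul_one]

theorem eq_zero_of_forall_det_ne_zero [Infinite K] {p : MvPolynomial (ι × ι) K}
    (hp : ∀ A : Matrix ι ι K, A.det ≠ 0 → eval (Function.uncurry A) p = 0) : p = 0 := by
  refine (mul_eq_zero.1 (MvPolynomial.funext fun a => ?_)).resolve_right
    (det_mvPolynomialX_ne_zero ι K)
  rw [map_mul, map_zero, eval_det_mvPolynomialX, mul_eq_zero, or_iff_not_imp_right]
  exact hp (of (Function.curry a))

end Frames

section FrameSubstitutions

open MvPolynomial Matrix

variable {K ι κ : Type*} [Field K] [Fintype ι]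

theorem exists_eval_eq_eval_mul_left (f : MvPolynomial (ι × κ) K) (v : Matrix ι κ K) :
    ∃ g : MvPolynomial (ι × ι) K, ∀ A : Matrix ι ι K,
      eval (Function.uncurry A) g = eval (Function.uncurry (A * v)) f := by
  refine ⟨aeval (fun p : ι × κ => ∑ k, X (p.1, k) * C (v k p.2)) f, fun A => ?_⟩
  rw [eval_aeval]
  congr 2
  funext ⟨i, j⟩
  simp [Function.uncurry, Matrix.mul_apply]

theorem exists_eval_eq_eval_mul_right (f : MvPolynomial (ι × κ) K) (A : Matrix ι ι K) :
    ∃ g : MvPolynomial (ι × κ) K, ∀ v : Matrix ι κ K,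
      eval (Function.uncurry v) g = eval (Function.uncurry (A * v)) f := by
  refine ⟨aeval (fun p : ι × κ => ∑ k, C (A p.1 k) * X (k, p.2)) f, fun v => ?_⟩
  rw [eval_aeval]
  congr 2
  funext ⟨i, j⟩
  simp [Function.uncurry, Matrix.mul_apply]

theorem exists_eval_eq_det_mul [Fintype κ] [DecidableEq ι] (B : Matrix κ ι K) :
    ∃ q : MvPolynomial (ι × κ) K, ∀ v : Matrix ι κ K,
      eval (Function.uncurry v) q = (v * B).det := by
  refine ⟨(of fun i j => ∑ k, X (i, k) * C (B k j)).det, fun v => ?_⟩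
  rw [RingHom.map_det]
  congr 1
  ext i j
  simp [Matrix.mul_apply, Function.uncurry]

end FrameSubstitutions

section ProjectiveVarieties

open MvPolynomial

attribute [local instance] MvPolynomial.gradedAlgebra

variable {N d : ℕ} {V : Set (Pn N)} {f : MvPolynomial (Fin (N + 1)) KK}
  {I J : Ideal (MvPolynomial (Fin (N + 1)) KK)}

/-- The affine cone over a set of projective points. The hypothesis `x ≠ 0` is an argument of the
membership condition, so the origin always belongs to the cone. -/
def affineCone (V : Set (Pn N)) : Set (Fin (N + 1) → KK) :=
  {x | ∀ h : x ≠ 0, Projectivization.mk KK x h ∈ V}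

/-- The ideal of the affine cone over `V`, that is, the homogeneous ideal of `V`. -/
abbrev coneIdeal (V : Set (Pn N)) : Ideal (MvPolynomial (Fin (N + 1)) KK) :=
  vanishingIdeal KK (affineCone V)

/-- The projective zero set of an ideal, cut out by its homogeneous elements. -/
def projZeroSet (I : Ideal (MvPolynomial (Fin (N + 1)) KK)) : Set (Pn N) :=
  projZeros {f | f ∈ I ∧ ∃ d, f.IsHomogeneous d}

theorem zero_mem_affineCone : (0 : Fin (N + 1) → KK) ∈ affineCone V := fun h => (h rfl).elim

theorem smul_mem_affineCone (c : KK) (x : Fin (N + 1) → KK) (hx : x ∈ affineCone V) :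
    c • x ∈ affineCone V := fun h => by
  obtain ⟨-, hx0⟩ := smul_ne_zero_iff.1 h
  rw [(Projectivization.mk_eq_mk_iff' KK (c • x) x h hx0).2 ⟨c, rfl⟩]
  exact hx hx0

theorem rep_mem_affineCone_iff {z : Pn N} : z.rep ∈ affineCone V ↔ z ∈ V :=
  ⟨fun h => z.mk_rep ▸ h z.rep_nonzero, fun h _ => z.mk_rep.symm ▸ h⟩

theorem eval_rep_mk_eq_zero_iff (hf : f.IsHomogeneous d) {x : Fin (N + 1) → KK} (hx : x ≠ 0) :
    eval (Projectivization.mk KK x hx).rep f = 0 ↔ eval x f = 0 := by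
  obtain ⟨a, ha⟩ := Projectivization.exists_smul_eq_mk_rep KK x hx
  rw [← ha, Units.smul_def, eval_smul_of_isHomogeneous_s7 hf]
  simp

theorem isHomogeneous_coneIdeal : (coneIdeal V).IsHomogeneous (homogeneousSubmodule _ KK) :=
  isHomogeneous_vanishingIdeal smul_mem_affineCone

theorem coneIdeal_ne_top : coneIdeal V ≠ ⊤ := vanishingIdeal_ne_top ⟨0, zero_mem_affineCone⟩

theorem mem_coneIdeal_iff_subset_projZeros (hf : f.IsHomogeneous d) (hV : V.Nonempty) :
    f ∈ coneIdeal V ↔ V ⊆ projZeros {f} := by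
  rw [mem_vanishingIdeal_iff_eval]
  refine ⟨fun h z hz g hg => hg ▸ h _ (rep_mem_affineCone_iff.2 hz), fun h x hx => ?_⟩
  obtain rfl | hx0 := eq_or_ne x 0
  · obtain ⟨z, hz⟩ := hV
    rw [← zero_smul KK z.rep, eval_smul_of_isHomogeneous_s7 hf, h hz f rfl, mul_zero]
  · exact (eval_rep_mk_eq_zero_iff hf hx0).1 (h (hx hx0) f rfl)

theorem projClosed_projZeros_singleton (hf : f.IsHomogeneous d) : ProjClosed (projZeros {f}) :=
  ⟨{f}, by rintro _ rfl; exact ⟨d, hf⟩, rfl⟩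

theorem isPrime_coneIdeal (hV : ProjIrred V) : (coneIdeal V).IsPrime := by
  refine isHomogeneous_coneIdeal.isPrime_of_homogeneous_mem_or_mem coneIdeal_ne_top ?_
  rintro f g ⟨d, hf⟩ ⟨e, hg⟩ hfg
  rw [mem_coneIdeal_iff_subset_projZeros hf hV.1, mem_coneIdeal_iff_subset_projZeros hg hV.1]
  refine hV.2 _ _ (projClosed_projZeros_singleton hf) (projClosed_projZeros_singleton hg) ?_
  intro z hz
  have hz0 := mem_vanishingIdeal_iff_eval.1 hfg _ (rep_mem_affineCone_iff.2 hz)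
  rw [map_mul, mul_eq_zero] at hz0
  exact hz0.imp (by rintro h _ rfl; exact h) (by rintro h _ rfl; exact h)

theorem projIrred_of_isPrime_coneIdeal (hne : V.Nonempty) (h : (coneIdeal V).IsPrime) :
    ProjIrred V := by
  refine ⟨hne, ?_⟩
  rintro _ _ ⟨S, hS, rfl⟩ ⟨T, hT, rfl⟩ hcover
  by_contra! hnot
  simp only [projZeros, Set.not_subset, Set.mem_ofPred_eq, not_forall] at hnot
  obtain ⟨⟨z, hz, f, hf, hfz⟩, w, hw, g, hg, hgw⟩ := hnot
  obtain ⟨d, hfd⟩ := hS f hf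
  obtain ⟨e, hge⟩ := hT g hg
  have hfg : f * g ∈ coneIdeal V := by
    rw [mem_coneIdeal_iff_subset_projZeros (hfd.mul hge) hne]
    rintro u hu _ rfl
    rw [map_mul, mul_eq_zero]
    exact (hcover hu).imp (fun h => h f hf) (fun h => h g hg)
  rcases h.mem_or_mem hfg with hmem | hmem
  · exact hfz (mem_vanishingIdeal_iff_eval.1 hmem _ (rep_mem_affineCone_iff.2 hz))
  · exact hgw (mem_vanishingIdeal_iff_eval.1 hmem _ (rep_mem_affineCone_iff.2 hw))

theorem exists_mem_coneIdeal_eval_ne_zero (hV : ProjClosed V) (hne : V.Nonempty)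
    {x : Fin (N + 1) → KK} (hx : x ∉ affineCone V) : ∃ f ∈ coneIdeal V, eval x f ≠ 0 := by
  obtain ⟨S, hS, rfl⟩ := hV
  simp only [affineCone, projZeros, Set.mem_ofPred_eq, not_forall] at hx
  obtain ⟨hx0, f, hf, hfx⟩ := hx
  obtain ⟨d, hd⟩ := hS f hf
  refine ⟨f, (mem_coneIdeal_iff_subset_projZeros hd hne).2 ?_,
    fun h => hfx ((eval_rep_mk_eq_zero_iff hd hx0).2 h)⟩
  rintro z hz _ rfl
  exact hz _ hf

theorem eval_zero_eq_zero_of_mem (hI : I.IsHomogeneous (homogeneousSubmodule _ KK)) (hne : I ≠ ⊤)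
    (hf : f ∈ I) : eval 0 f = 0 := by
  by_contra h0
  have hC : C (coeff 0 f) ∈ I := by
    rw [← homogeneousComponent_zero]
    exact homogeneousComponent_mem_of_mem hI hf 0
  rw [eval_zero] at h0
  exact hne (I.eq_top_of_isUnit_mem hC ((isUnit_iff_ne_zero.2 h0).map C))

theorem affineCone_projZeroSet (hI : I.IsHomogeneous (homogeneousSubmodule _ KK)) (hne : I ≠ ⊤) :
    affineCone (projZeroSet I) = zeroLocus KK I := by
  ext x
  simp only [mem_zeroLocus_iff, aeval_self_eq_eval]
  constructor
  · intro hx f hf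
    obtain rfl | hx0 := eq_or_ne x 0
    · exact eval_zero_eq_zero_of_mem hI hne hf
    · rw [← sum_homogeneousComponent f, map_sum]
      refine Finset.sum_eq_zero fun i _ => ?_
      have hi := homogeneousComponent_isHomogeneous i f
      refine (eval_rep_mk_eq_zero_iff hi hx0).1 (hx hx0 _ ⟨?_, i, hi⟩)
      exact homogeneousComponent_mem_of_mem hI hf i
  · rintro hx hx0 f ⟨hf, d, hd⟩
    exact (eval_rep_mk_eq_zero_iff hd hx0).2 (hx f hf)

theorem coneIdeal_projZeroSet (hI : I.IsPrime)
    (hhom : I.IsHomogeneous (homogeneousSubmodule _ KK)) : coneIdeal (projZeroSet I) = I := by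
  rw [coneIdeal, affineCone_projZeroSet hhom hI.ne_top, IsPrime.vanishingIdeal_zeroLocus]

theorem projZeroSet_anti (h : I ≤ J) : projZeroSet J ⊆ projZeroSet I :=
  fun _ hz f hf => hz f ⟨h hf.1, hf.2⟩

theorem projZeroSet_coneIdeal_subset (hV : ProjClosed V) (hne : V.Nonempty) :
    projZeroSet (coneIdeal V) ⊆ V := by
  intro z hz
  by_contra hzV
  obtain ⟨f, hf, hfz⟩ :=
    exists_mem_coneIdeal_eval_ne_zero hV hne (rep_mem_affineCone_iff.not.2 hzV)
  rw [← rep_mem_affineCone_iff, affineCone_projZeroSet isHomogeneous_coneIdeal coneIdeal_ne_top,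
    mem_zeroLocus_iff] at hz
  exact hfz (aeval_self_eq_eval z.rep f ▸ hz f hf)

theorem projVariety_projZeroSet (P : RelevantPrime I) : ProjVariety (projZeroSet P.1) := by
  obtain ⟨P, hP, hhom, ⟨i, hi⟩, -⟩ := P
  have hcone := coneIdeal_projZeroSet hP hhom
  refine ⟨⟨_, fun f hf => hf.2, rfl⟩, projIrred_of_isPrime_coneIdeal ?_ (hcone.symm ▸ hP)⟩
  by_contra! hempty
  refine hi (hcone ▸ mem_vanishingIdeal_iff_eval.2 fun x hx => ?_)
  obtain rfl | hx0 := eq_or_ne x 0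
  · simp
  · exact absurd (hx hx0) (hempty ▸ Set.notMem_empty _)

theorem projZeroSet_strictAnti {P Q : RelevantPrime I} (h : P < Q) :
    projZeroSet Q.1 ⊂ projZeroSet P.1 := by
  refine (projZeroSet_anti h.le).ssubset_of_ne fun heq => h.ne (Subtype.ext ?_)
  rw [← coneIdeal_projZeroSet P.2.1 P.2.2.1, ← heq, coneIdeal_projZeroSet Q.2.1 Q.2.2.1]

theorem krullDim_relevantPrime_le_projDim (hV : ProjClosed V) (hne : V.Nonempty) :
    Order.krullDim (RelevantPrime (coneIdeal V)) ≤ projDim V := by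
  rw [← Order.krullDim_orderDual]
  let toVariety (P : (RelevantPrime (coneIdeal V))ᵒᵈ) : {W // ProjVariety W ∧ W ⊆ V} :=
    ⟨projZeroSet P.ofDual.1, projVariety_projZeroSet P.ofDual,
      (projZeroSet_anti P.ofDual.2.2.2.2).trans (projZeroSet_coneIdeal_subset hV hne)⟩
  exact Order.krullDim_le_of_strictMono toVariety fun P Q h => projZeroSet_strictAnti h

theorem hilbertDim_coneIdeal_le {δ : ℕ} (hV : ProjClosed V) (hne : V.Nonempty)
    (hδ : projDim V ≤ ((δ : ENat) : WithBot ENat)) : hilbertDim (coneIdeal V) ≤ δ + 1 := by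
  refine hilbertDim_le_of_forall_length_lt isHomogeneous_coneIdeal fun p => Nat.lt_succ_of_le ?_
  exact_mod_cast (Order.LTSeries.length_le_krullDim p).trans
    ((krullDim_relevantPrime_le_projDim hV hne).trans hδ)

end ProjectiveVarieties

section FrameIdeals

open MvPolynomial Matrix

variable {K ι κ : Type*} [Field K] {Y Z : Set (Submodule K (κ → K))} {Λ : Submodule K (κ → K)}
  {T : Set (κ → K)} {f : MvPolynomial (ι × κ) K}

/-- The polynomials in the entries of an `ι × κ` matrix that vanish on all frames of members of `Z`,
a frame being a matrix whose rows form a basis of the subspace. -/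
def frameIdeal (ι : Type*) (Z : Set (Submodule K (κ → K))) : Ideal (MvPolynomial (ι × κ) K) :=
  vanishingIdeal K (Function.uncurry ''
    {v : ι → κ → K | LinearIndependent K v ∧ Submodule.span K (Set.range v) ∈ Z})

theorem mem_frameIdeal_iff : f ∈ frameIdeal ι Z ↔ ∀ v : Matrix ι κ K, LinearIndependent K v.row →
    Submodule.span K (Set.range v.row) ∈ Z → eval (Function.uncurry v) f = 0 := by
  rw [frameIdeal, mem_vanishingIdeal_iff_eval, Set.forall_mem_image]
  exact forall_congr' fun v => and_imp

theorem frameIdeal_anti (h : Y ⊆ Z) : frameIdeal ι Z ≤ frameIdeal ι Y :=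
  vanishingIdeal_anti_mono (Set.image_mono fun _ hv => ⟨hv.1, h hv.2⟩)

theorem mem_frameIdeal_iff_forall_singleton :
    f ∈ frameIdeal ι Z ↔ ∀ Λ ∈ Z, f ∈ frameIdeal ι {Λ} := by
  refine ⟨fun h Λ hΛ => frameIdeal_anti (Set.singleton_subset_iff.2 hΛ) h, fun h => ?_⟩
  exact mem_frameIdeal_iff.2 fun v hv hvZ => mem_frameIdeal_iff.1 (h _ hvZ) v hv rfl

theorem vanishingIdeal_familiesIn_le_frameIdeal (hT : ∀ Λ ∈ Z, (Λ : Set (κ → K)) ⊆ T) :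
    vanishingIdeal K (familiesIn ι T) ≤ frameIdeal ι Z := by
  refine vanishingIdeal_anti_mono ?_
  rintro _ ⟨v, ⟨-, hv⟩, rfl⟩ i
  exact hT _ hv (Submodule.subset_span ⟨i, rfl⟩)

theorem vanishingIdeal_familiesIn_lt_frameIdeal [Nontrivial ι]
    (hT : ∀ Λ ∈ Z, (Λ : Set (κ → K)) ⊆ T) {x y : κ → K} (hx : x ∈ T) (hy : y ∈ T)
    {f : MvPolynomial κ K} (hf : f ∈ vanishingIdeal K T) (hxy : eval (x + y) f ≠ 0) :
    vanishingIdeal K (familiesIn ι T) < frameIdeal ι Z := by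
  classical
  obtain ⟨i, j, hij⟩ := exists_pair_ne ι
  let F : MvPolynomial (ι × κ) K := aeval (fun k => X (i, k) + X (j, k)) f
  have hF (w : ι × κ → K) : eval w F = eval ((fun k => w (i, k)) + fun k => w (j, k)) f := by
    simp only [F, eval_aeval, map_add, eval_X]
    rfl
  refine (vanishingIdeal_familiesIn_le_frameIdeal hT).lt_of_not_ge fun hle => hxy ?_
  have hFZ : F ∈ frameIdeal ι Z := mem_frameIdeal_iff.2 fun v _ hvZ => by
    rw [hF]
    exact mem_vanishingIdeal_iff_eval.1 hf _ (hT _ hvZ (Submodule.add_mem _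
      (Submodule.subset_span ⟨i, rfl⟩) (Submodule.subset_span ⟨j, rfl⟩)))
  have hw : (fun p : ι × κ => if p.1 = i then x p.2 else y p.2) ∈ familiesIn ι T := fun k => by
    by_cases hk : k = i
    · simpa [hk] using hx
    · simpa [hk] using hy
  simpa [hF, hij.symm] using mem_vanishingIdeal_iff_eval.1 (hle hFZ) _ hw

section

variable [Fintype ι]

theorem exists_linearIndependent_row_span_eq [Finite κ]
    (hΛ : Module.finrank K Λ = Fintype.card ι) :
    ∃ v : Matrix ι κ K, LinearIndependent K v.row ∧ Submodule.span K (Set.range v.row) = Λ := by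
  let b := (Module.finBasisOfFinrankEq K Λ hΛ).reindex (Fintype.equivFin ι).symm
  refine ⟨fun i => b i, b.linearIndependent.map' Λ.subtype Λ.ker_subtype, ?_⟩
  change Submodule.span K (Set.range (Λ.subtype ∘ b)) = Λ
  rw [Set.range_comp, Submodule.span_image, b.span_eq, Submodule.map_top, Submodule.range_subtype]

theorem frameIdeal_ne_top [Finite κ] (hΛ : Λ ∈ Z) (hdim : Module.finrank K Λ = Fintype.card ι) :
    frameIdeal ι Z ≠ ⊤ := by
  obtain ⟨v, hv, rfl⟩ := exists_linearIndependent_row_span_eq hdim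
  exact vanishingIdeal_ne_top ⟨_, v, ⟨hv, hΛ⟩, rfl⟩

variable [Infinite K]

theorem mem_frameIdeal_singleton_span_iff [Finite κ] {v : Matrix ι κ K}
    (hv : LinearIndependent K v.row) :
    f ∈ frameIdeal ι {Submodule.span K (Set.range v.row)} ↔
      ∀ A : Matrix ι ι K, eval (Function.uncurry (A * v)) f = 0 := by
  classical
  rw [mem_frameIdeal_iff]
  constructor
  · intro hf A
    obtain ⟨g, hg⟩ := exists_eval_eq_eval_mul_left f v
    have hg0 : g = 0 := eq_zero_of_forall_det_ne_zero fun A hA =>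
      (hg A).trans (hf _ (linearIndependent_row_mul hA hv) (span_range_row_mul hA v))
    rw [← hg, hg0, map_zero]
  · rintro hf w - hw
    obtain ⟨A, rfl⟩ := exists_eq_mul_of_span_range_row_le (le_of_eq hw)
    exact hf A

theorem isPrime_frameIdeal_singleton [Finite κ] (hΛ : Module.finrank K Λ = Fintype.card ι) :
    (frameIdeal ι {Λ}).IsPrime := by
  refine ⟨frameIdeal_ne_top rfl hΛ, fun {f g} hfg => ?_⟩
  obtain ⟨v, hv, rfl⟩ := exists_linearIndependent_row_span_eq hΛ
  simp only [mem_frameIdeal_singleton_span_iff hv] at hfg ⊢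
  obtain ⟨F, hF⟩ := exists_eval_eq_eval_mul_left f v
  obtain ⟨G, hG⟩ := exists_eval_eq_eval_mul_left g v
  have hFG : F * G = 0 := MvPolynomial.funext fun a => by
    rw [map_mul, map_zero, ← hfg (of (Function.curry a)), map_mul, ← hF, ← hG]
    rfl
  exact (mul_eq_zero.1 hFG).imp (fun h A => by rw [← hF, h, map_zero])
    fun h A => by rw [← hG, h, map_zero]

theorem sq_card_le_hilbertDim_frameIdeal [Finite κ] (hΛ : Λ ∈ Z)
    (hdim : Module.finrank K Λ = Fintype.card ι) :
    Fintype.card ι ^ 2 ≤ hilbertDim (frameIdeal ι Z) := by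
  classical
  have := Fintype.ofFinite κ
  obtain ⟨v, hv, rfl⟩ := exists_linearIndependent_row_span_eq hdim
  obtain ⟨B, hB⟩ := exists_mul_eq_one_of_linearIndependent_row hv
  have hcard : Fintype.card ι ^ 2 = Nat.card (ι × ι) := by
    rw [Nat.card_eq_fintype_card, Fintype.card_prod, sq]
  -- Since `v * B = 1`, the linear map `w ↦ w * B` sends the frames `A * v` to all matrices `A`.
  rw [hcard]
  refine card_le_hilbertDim (fun p => ∑ k, C (B k p.2) * X (p.1, k)) (fun p => ?_) fun p hp => ?_
  · refine totalDegree_finsetSum_le fun k _ => (totalDegree_mul _ _).trans ?_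
    rw [totalDegree_C, totalDegree_X]
  · have hpv := (mem_frameIdeal_singleton_span_iff hv).1
      (mem_frameIdeal_iff_forall_singleton.1 hp _ hΛ)
    refine MvPolynomial.funext fun a => ?_
    rw [map_zero, ← hpv (of (Function.curry a)), eval_aeval]
    congr 2
    funext ⟨i, j⟩
    have hAvB : (of (Function.curry a) * v * B) i j = a (i, j) := by
      rw [Matrix.mul_assoc, hB, Matrix.mul_one]
      rfl
    rw [Matrix.mul_apply] at hAvB
    simpa [Function.uncurry, mul_comm] using hAvB.symm

theorem forall_det_mul_eval_eq_zero_iff [Fintype κ] [DecidableEq ι] {v : Matrix ι κ K} :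
    (∀ (B : Matrix κ ι K) (A : Matrix ι ι K),
      (v * B).det * eval (Function.uncurry (A * v)) f = 0) ↔
    (LinearIndependent K v.row → f ∈ frameIdeal ι {Submodule.span K (Set.range v.row)}) := by
  constructor
  · intro h hv
    obtain ⟨B, hB⟩ := linearIndependent_row_iff_exists_det_mul_ne_zero.1 hv
    exact (mem_frameIdeal_singleton_span_iff hv).2 fun A => (mul_eq_zero.1 (h B A)).resolve_left hB
  · intro h B A
    rw [mul_eq_zero, or_iff_not_imp_left]
    intro hB
    have hv := linearIndependent_row_iff_exists_det_mul_ne_zero.2 ⟨B, hB⟩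
    exact (mem_frameIdeal_singleton_span_iff hv).1 (h hv) A

end

theorem exists_forall_eval_eq_zero_iff_mem_frameIdeal [Infinite K] [Finite ι] [Finite κ]
    (f : MvPolynomial (ι × κ) K) :
    ∃ S : Set (MvPolynomial (ι × κ) K), ∀ v : Matrix ι κ K,
      (LinearIndependent K v.row → f ∈ frameIdeal ι {Submodule.span K (Set.range v.row)}) ↔
        ∀ p ∈ S, eval (Function.uncurry v) p = 0 := by
  classical
  have := Fintype.ofFinite ι
  have := Fintype.ofFinite κ
  choose q hq using exists_eval_eq_det_mul (K := K) (ι := ι) (κ := κ)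
  choose g hg using exists_eval_eq_eval_mul_right f
  refine ⟨{p | ∃ B A, p = q B * g A}, fun v => forall_det_mul_eval_eq_zero_iff.symm.trans ?_⟩
  simp only [Set.mem_ofPred_eq, forall_exists_index, ← hq, ← hg, ← map_mul]
  exact ⟨fun h p B A hp => hp ▸ h B A, fun h B A => h _ B A rfl⟩

end FrameIdeals

section Grassmannians

open MvPolynomial

variable {m N : ℕ} {Y Z : Set (Submodule KK (Fin (N + 1) → KK))}
  {Λ : Submodule KK (Fin (N + 1) → KK)}

theorem grClosed_setOf_mem_frameIdeal (hZ : GrClosed m N Z)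
    (f : MvPolynomial (Fin (m + 1) × Fin (N + 1)) KK) :
    GrClosed m N {Λ ∈ Z | f ∈ frameIdeal (Fin (m + 1)) {Λ}} := by
  obtain ⟨hdim, S, hS⟩ := hZ
  obtain ⟨T, hT⟩ := exists_forall_eval_eq_zero_iff_mem_frameIdeal f
  refine ⟨fun Λ hΛ => hdim Λ hΛ.1, S ∪ T, Set.ext fun v => ?_⟩
  calc (LinearIndependent KK v → Submodule.span KK (Set.range v) ∈ Z ∧
        f ∈ frameIdeal (Fin (m + 1)) {Submodule.span KK (Set.range v)})
      ↔ (LinearIndependent KK v → Submodule.span KK (Set.range v) ∈ Z) ∧ (LinearIndependent KK v →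
        f ∈ frameIdeal (Fin (m + 1)) {Submodule.span KK (Set.range v)}) := forall_and
    _ ↔ (∀ p ∈ S, eval (Function.uncurry v) p = 0) ∧ ∀ p ∈ T, eval (Function.uncurry v) p = 0 :=
      and_congr (Set.ext_iff.1 hS v) (hT v)
    _ ↔ ∀ p ∈ S ∪ T, eval (Function.uncurry v) p = 0 := by
      simp only [Set.mem_union, or_imp, forall_and]

theorem mem_of_frameIdeal_le (hZ : GrClosed m N Z) (hΛ : Module.finrank KK Λ = m + 1)
    (h : frameIdeal (Fin (m + 1)) Z ≤ frameIdeal (Fin (m + 1)) {Λ}) : Λ ∈ Z := by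
  obtain ⟨-, S, hS⟩ := hZ
  have hmem (v : Fin (m + 1) → Fin (N + 1) → KK) := Set.ext_iff.1 hS v
  obtain ⟨v, hv, rfl⟩ :=
    exists_linearIndependent_row_span_eq (ι := Fin (m + 1)) (by rw [hΛ, Fintype.card_fin])
  refine (hmem v).2 (fun f hf => ?_) hv
  refine mem_frameIdeal_iff.1 (h (mem_frameIdeal_iff.2 fun w _ hwZ => ?_)) v hv rfl
  exact (hmem w).1 (fun _ => hwZ) f hf

theorem frameIdeal_lt_frameIdeal (hY : GrClosed m N Y) (hZ : GrClosed m N Z) (h : Y ⊂ Z) :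
    frameIdeal (Fin (m + 1)) Z < frameIdeal (Fin (m + 1)) Y := by
  refine (frameIdeal_anti h.subset).lt_of_not_ge fun hle => h.not_subset fun Λ hΛ => ?_
  exact mem_of_frameIdeal_le hY (hZ.1 Λ hΛ)
    (hle.trans (frameIdeal_anti (Set.singleton_subset_iff.2 hΛ)))

theorem isPrime_frameIdeal (hZ : GrVariety m N Z) : (frameIdeal (Fin (m + 1)) Z).IsPrime := by
  obtain ⟨hclosed, ⟨Λ, hΛ⟩, hirr⟩ := hZ
  have hdim (Λ) (hΛ : Λ ∈ Z) : Module.finrank KK Λ = Fintype.card (Fin (m + 1)) := by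
    rw [hclosed.1 Λ hΛ, Fintype.card_fin]
  refine ⟨frameIdeal_ne_top hΛ (hdim Λ hΛ), fun {f g} hfg => ?_⟩
  have hcover : Z ⊆ {Λ ∈ Z | f ∈ frameIdeal (Fin (m + 1)) {Λ}} ∪
      {Λ ∈ Z | g ∈ frameIdeal (Fin (m + 1)) {Λ}} := fun Λ hΛ =>
    ((isPrime_frameIdeal_singleton (hdim Λ hΛ)).mem_or_mem
      (mem_frameIdeal_iff_forall_singleton.1 hfg Λ hΛ)).imp (⟨hΛ, ·⟩) (⟨hΛ, ·⟩)
  exact (hirr _ _ (grClosed_setOf_mem_frameIdeal hclosed f)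
    (grClosed_setOf_mem_frameIdeal hclosed g) hcover).imp
    (fun h => mem_frameIdeal_iff_forall_singleton.2 fun Λ hΛ => (h hΛ).2)
    fun h => mem_frameIdeal_iff_forall_singleton.2 fun Λ hΛ => (h hΛ).2

theorem sq_le_hilbertDim_frameIdeal (hZ : GrVariety m N Z) :
    (m + 1) ^ 2 ≤ hilbertDim (frameIdeal (Fin (m + 1)) Z) := by
  obtain ⟨Λ, hΛ⟩ := hZ.2.1
  have hdim : Module.finrank KK Λ = Fintype.card (Fin (m + 1)) := by
    rw [hZ.1.1 Λ hΛ, Fintype.card_fin]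
  simpa only [Fintype.card_fin] using sq_card_le_hilbertDim_frameIdeal hΛ hdim

theorem hilbertDim_frameIdeal_lt (hY : GrVariety m N Y) (hZ : GrVariety m N Z) (h : Y ⊂ Z) :
    hilbertDim (frameIdeal (Fin (m + 1)) Y) < hilbertDim (frameIdeal (Fin (m + 1)) Z) :=
  hilbertDim_lt (isPrime_frameIdeal hZ) (frameIdeal_lt_frameIdeal hY.1 hZ.1 h)
    (isPrime_frameIdeal hY).ne_top

theorem grDim_add_le {n c : ℕ} (hn : ∀ Z, GrVariety m N Z → Z ⊆ Y →
      hilbertDim (frameIdeal (Fin (m + 1)) Z) + c ≤ n + (m + 1) ^ 2) :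
    grDim m N Y + ((c : ENat) : WithBot ENat) ≤ ((n : ENat) : WithBot ENat) := by
  rw [grDim]
  have hlength (p : LTSeries {Z // GrVariety m N Z ∧ Z ⊆ Y}) : p.length + c ≤ n := by
    have hchain : hilbertDim (frameIdeal (Fin (m + 1)) p.head.1) + p.length ≤
        hilbertDim (frameIdeal (Fin (m + 1)) p.last.1) :=
      (p.map (fun Z => hilbertDim (frameIdeal (Fin (m + 1)) Z.1))
        fun Y Z h => hilbertDim_frameIdeal_lt Y.2.1 Z.2.1 h).head_add_length_le_nat
    have hhead := sq_le_hilbertDim_frameIdeal p.head.2.1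
    have hlast := hn _ p.last.2.1 p.last.2.2
    omega
  cases isEmpty_or_nonempty {Z // GrVariety m N Z ∧ Z ⊆ Y} with
  | inl _ => simp [Order.krullDim_eq_bot]
  | inr hne =>
    obtain ⟨Z⟩ := hne
    have hc : c ≤ n := (Nat.le_add_left _ _).trans (hlength (RelSeries.singleton _ Z))
    calc Order.krullDim {Z // GrVariety m N Z ∧ Z ⊆ Y} + ((c : ENat) : WithBot ENat)
        ≤ (((n - c : ℕ) : ENat) : WithBot ENat) + ((c : ENat) : WithBot ENat) := by
          gcongr
          exact iSup_le fun p => mod_cast Nat.le_sub_of_add_le (hlength p)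
      _ = ((n : ENat) : WithBot ENat) := by rw_mod_cast [Nat.sub_add_cancel hc]

end Grassmannians

section FanoVarieties

open MvPolynomial

variable {m N δ : ℕ} {V : Set (Pn N)} {W : Submodule KK (Fin (N + 1) → KK)}

theorem subset_affineCone_planeSet : (W : Set (Fin (N + 1) → KK)) ⊆ affineCone (planeSet W) := by
  intro x hx hx0
  obtain ⟨a, ha⟩ := Projectivization.exists_smul_eq_mk_rep KK x hx0
  change (Projectivization.mk KK x hx0).rep ∈ W
  rw [← ha]
  exact W.smul_mem (a : KK) hx

theorem subset_affineCone_of_planeSet_subset (h : planeSet W ⊆ V) :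
    (W : Set (Fin (N + 1) → KK)) ⊆ affineCone V := fun _ hx hx0 =>
  h (subset_affineCone_planeSet hx hx0)

theorem eq_of_mk_add_smul_eq {K E : Type*} [Field K] [AddCommGroup E] [Module K E] {x y : E}
    (h : LinearIndependent K ![x, y]) {c c' : K} {hc : x + c • y ≠ 0} {hc' : x + c' • y ≠ 0}
    (heq : Projectivization.mk K _ hc = Projectivization.mk K _ hc') : c = c' := by
  obtain ⟨t, ht⟩ := (Projectivization.mk_eq_mk_iff' _ _ _ _ _).1 heq
  have hcoeff : (t - 1) • x + (t * c' - c) • y = 0 := by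
    rw [← sub_eq_zero.2 ht]
    module
  obtain ⟨ht1, htc⟩ := LinearIndependent.pair_iff.1 h _ _ hcoeff
  rw [sub_eq_zero] at ht1 htc
  rw [← htc, ht1, one_mul]

theorem infinite_inter_planeSet (hV : ∀ x ∈ affineCone V, ∀ y ∈ affineCone V, x + y ∈ affineCone V)
    {a b : Pn N} (ha : a ∈ V ∩ planeSet W) (hb : b ∈ V ∩ planeSet W) (hab : a ≠ b) :
    (V ∩ planeSet W).Infinite := by
  have hli : LinearIndependent KK ![a.rep, b.rep] := by
    have hreps : Projectivization.rep ∘ ![a, b] = ![a.rep, b.rep] :=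
      funext (Fin.forall_fin_two.2 ⟨rfl, rfl⟩)
    rw [← hreps, ← Projectivization.independent_iff]
    exact (Projectivization.independent_pair_iff_ne a b).2 hab
  have hne (c : KK) : a.rep + c • b.rep ≠ 0 := fun h =>
    one_ne_zero (LinearIndependent.pair_iff.1 hli 1 c (by rwa [one_smul])).1
  refine Set.infinite_of_injective_forall_mem
    (f := fun c => Projectivization.mk KK _ (hne c)) (fun _ _ => eq_of_mk_add_smul_eq hli)
    fun c => ?_
  exact ⟨hV _ (rep_mem_affineCone_iff.2 ha.1) _
      (smul_mem_affineCone c _ (rep_mem_affineCone_iff.2 hb.1)) (hne c),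
    subset_affineCone_planeSet (W.add_mem ha.2 (W.smul_mem c hb.2)) (hne c)⟩

theorem projDeg_le_one (hV : ∀ x ∈ affineCone V, ∀ y ∈ affineCone V, x + y ∈ affineCone V) :
    projDeg V ≤ 1 := by
  refine csSup_le' ?_
  rintro _ ⟨W, hfin, rfl⟩
  refine (Set.ncard_le_one hfin).2 fun a ha b hb => ?_
  by_contra hab
  exact infinite_inter_planeSet hV ha hb hab hfin

theorem hilbertDim_vanishingIdeal_familiesIn_le (hV : ProjClosed V) (hne : V.Nonempty)
    (hδ : projDim V ≤ ((δ : ENat) : WithBot ENat)) :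
    hilbertDim (vanishingIdeal KK (familiesIn (Fin (m + 1)) (affineCone V))) ≤
      (m + 1) * (δ + 1) := by
  refine (hilbertDim_le_card_mul vanishingIdeal_le_comap_familiesIn).trans ?_
  rw [Fintype.card_fin]
  gcongr
  exact hilbertDim_coneIdeal_le hV hne hδ

theorem statement7_general (m N δ : ℕ) (V : Set (Pn N)) (hV : ProjVariety V)
    (hdim : projDim V ≤ ((δ : ENat) : WithBot ENat)) :
    grDim m N (Fano m N V) + ((((m + 1) * m : ℕ) : ENat) : WithBot ENat) ≤
      ((((m + 1) * δ : ℕ) : ENat) : WithBot ENat) ∧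
    (0 < m → 2 ≤ projDeg V →
      grDim m N (Fano m N V) + ((((m + 1) * m + 1 : ℕ) : ENat) : WithBot ENat) ≤
        ((((m + 1) * δ : ℕ) : ENat) : WithBot ENat)) := by
  have hfamilies := hilbertDim_vanishingIdeal_familiesIn_le (m := m) hV.1 hV.2.1 hdim
  refine ⟨grDim_add_le fun Z _ hZV => ?_, fun hm hdeg => grDim_add_le fun Z hZ hZV => ?_⟩
  all_goals
    have hcone (Λ) (hΛ : Λ ∈ Z) := subset_affineCone_of_planeSet_subset (hZV hΛ).2
  · have hle := hilbertDim_anti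
      (vanishingIdeal_familiesIn_le_frameIdeal (ι := Fin (m + 1)) hcone)
    linarith
  · have : Nontrivial (Fin (m + 1)) := Fin.nontrivial_iff_two_le.2 (by omega)
    obtain ⟨x, hx, y, hy, hxy⟩ :
        ∃ x ∈ affineCone V, ∃ y ∈ affineCone V, x + y ∉ affineCone V := by
      by_contra! h
      exact absurd (projDeg_le_one h) (by omega)
    obtain ⟨f, hf, hfxy⟩ := exists_mem_coneIdeal_eval_ne_zero hV.1 hV.2.1 hxy
    have hlt := hilbertDim_lt
      (isPrime_vanishingIdeal_familiesIn (ι := Fin (m + 1)) (isPrime_coneIdeal hV.2))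
      (vanishingIdeal_familiesIn_lt_frameIdeal hcone hx hy hf hfxy) (isPrime_frameIdeal hZ).ne_top
    linarith

end FanoVarieties

/-- **Lemma 6.** Let V ⊂ Pᴺ be a geometrically integral projective variety of
degree d and dimension δ.  Then the Fano variety F₁(V) of lines contained in V has
dimension at most 2δ - 2 if d = 1, and at most 2δ - 3 if d ≥ 2 (the inequalities
being expressed additively so as to respect the convention that the empty set is
the only algebraic set of negative dimension). -/
theorem statement7 (N d δ : ℕ) (V : Set (Pn N)) (hV : ProjVariety V)
    (hdeg : projDeg V = d) (hdim : projDim V = ((δ : ENat) : WithBot ENat)) :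
    (d = 1 → grDim 1 N (Fano 1 N V) + ((2 : ENat) : WithBot ENat) ≤
      (((2 * δ : ℕ) : ENat) : WithBot ENat)) ∧
    (2 ≤ d → grDim 1 N (Fano 1 N V) + ((3 : ENat) : WithBot ENat) ≤
      (((2 * δ : ℕ) : ENat) : WithBot ENat)) := by
  obtain ⟨hbound, hstrict⟩ := statement7_general 1 N δ V hV hdim.le
  exact ⟨fun _ => hbound, fun hd => hstrict one_pos (hdeg ▸ hd)⟩

end
end
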